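/- arXiv:1904.01919 — 2 statements merged into one kernel-verified Lean document; each statement's English description precedes it below -/
import Mathlib

section
/- Suppose 1 < p < ∞, 0 < s ≤ 1, let p' be the conjugate exponent of p, and let g be holomorphic on the unit disc D. If the Volterra operator T_g maps the Besov space B^p into Q_s, then g ∈ Q_{s,log,1/p'}. -/
open MeasureTheory Metric Complex Real Filter Set

noncomputable section

/-- `f` is holomorphic on the open unit disc. -/
def HolOn (f : ℂ → ℂ) : Prop := DifferentiableOn ℂ f (Metric.ball (0:ℂ) 1)

/-- The normalized Lebesgue area measure on `ℂ` (so the unit disc has total mass 1). -/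
def dA : Measure ℂ := (ENNReal.ofReal π)⁻¹ • volume

/-- Bounded holomorphic functions on the unit disc. -/
def Hinf : Set (ℂ → ℂ) :=
  {f | HolOn f ∧ ∃ C : ℝ, ∀ z ∈ Metric.ball (0:ℂ) 1, ‖f z‖ ≤ C}

/-- The Bloch space. -/
def Bloch : Set (ℂ → ℂ) :=
  {f | HolOn f ∧ ∃ C : ℝ, ∀ z ∈ Metric.ball (0:ℂ) 1,
      (1 - ‖z‖ ^ 2) * ‖deriv f z‖ ≤ C}

/-- The little Bloch space: `(1-|z|²)|f'(z)| → 0` as `|z| → 1⁻`. -/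
def littleBloch : Set (ℂ → ℂ) :=
  {f | HolOn f ∧ ∀ ε : ℝ, 0 < ε → ∃ r : ℝ, r < 1 ∧ ∀ z ∈ Metric.ball (0:ℂ) 1,
      r < ‖z‖ → (1 - ‖z‖ ^ 2) * ‖deriv f z‖ < ε}

/-- The `α`-logarithmic Bloch space. -/
def BlochLog (α : ℝ) : Set (ℂ → ℂ) :=
  {f | HolOn f ∧ ∃ C : ℝ, ∀ z ∈ Metric.ball (0:ℂ) 1,
      (1 - ‖z‖ ^ 2) * (Real.log (2 / (1 - ‖z‖ ^ 2))) ^ α *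
        ‖deriv f z‖ ≤ C}

/-- The Besov space `B¹`: holomorphic `f` with `∫_D |f''| dA < ∞`. -/
def Besov1 : Set (ℂ → ℂ) :=
  {f | HolOn f ∧ ∫⁻ z in Metric.ball (0:ℂ) 1,
      ENNReal.ofReal (‖deriv (deriv f) z‖) ∂dA < ⊤}

/-- The Besov space `Bᵖ` (`1 < p < ∞`): `∫_D (1-|z|)^(p-2) |f'(z)|^p dA(z) < ∞`. -/
def Besov (p : ℝ) : Set (ℂ → ℂ) :=
  {f | HolOn f ∧ ∫⁻ z in Metric.ball (0:ℂ) 1,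
      ENNReal.ofReal ((1 - ‖z‖) ^ (p - 2) * ‖deriv f z‖ ^ p) ∂dA < ⊤}

open scoped Classical in
/-- The Besov space `Bᵖ` for all `1 ≤ p < ∞` (with the special definition at `p = 1`). -/
def BesovFull (p : ℝ) : Set (ℂ → ℂ) := if p = 1 then Besov1 else Besov p

/-- The Möbius transformation `φ_a(z) = (a-z)/(1 - conj a · z)`. -/
def phi (a z : ℂ) : ℂ := (a - z) / (1 - (starRingEnd ℂ) a * z)

/-- The space `Q_s`. -/
def Qs (s : ℝ) : Set (ℂ → ℂ) :=
  {f | HolOn f ∧ ⨆ a ∈ Metric.ball (0:ℂ) 1, ∫⁻ z in Metric.ball (0:ℂ) 1,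
      ENNReal.ofReal (‖deriv f z‖ ^ 2 *
        (1 - ‖phi a z‖ ^ 2) ^ s) ∂dA < ⊤}

/-- The space `Q_{s,log,α}`. -/
def QsLog (s α : ℝ) : Set (ℂ → ℂ) :=
  {f | HolOn f ∧ ⨆ a ∈ Metric.ball (0:ℂ) 1,
      (ENNReal.ofReal ((Real.log (2 / (1 - ‖a‖))) ^ (2 * α)) *
        ∫⁻ z in Metric.ball (0:ℂ) 1,
          ENNReal.ofReal (‖deriv f z‖ ^ 2 *
            (1 - ‖phi a z‖ ^ 2) ^ s) ∂dA) < ⊤}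

/-- The Volterra operator `T_g(f)(z) = ∫_0^z g'(ξ) f(ξ) dξ` (along the segment from 0 to z). -/
def Tg (g f : ℂ → ℂ) : ℂ → ℂ :=
  fun z => z * ∫ t in (0:ℝ)..1, deriv g ((t : ℂ) * z) * f ((t : ℂ) * z)

/-- The companion operator `I_g(f)(z) = ∫_0^z g(ξ) f'(ξ) dξ` (along the segment from 0 to z). -/
def Ig (g f : ℂ → ℂ) : ℂ → ℂ :=
  fun z => z * ∫ t in (0:ℝ)..1, g ((t : ℂ) * z) * deriv f ((t : ℂ) * z)

/-- The multiplication operator `M_g(f) = g · f`. -/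
def Mg (g f : ℂ → ℂ) : ℂ → ℂ := fun z => g z * f z

/-- `T` maps `X` into `Y`. -/
def MapsInto (T : (ℂ → ℂ) → (ℂ → ℂ)) (X Y : Set (ℂ → ℂ)) : Prop :=
  ∀ f ∈ X, T f ∈ Y

/-- The Hardy space `H^q`. -/
def Hardy (q : ℝ) : Set (ℂ → ℂ) :=
  {f | HolOn f ∧ ∃ C : ℝ, ∀ r : ℝ, 0 < r → r < 1 →
      (1 / (2 * π)) * ∫ t in (0:ℝ)..(2 * π),
        ‖f ((r : ℂ) * Complex.exp ((t : ℂ) * Complex.I))‖ ^ q ≤ C}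

/-- An inner function: bounded holomorphic with radial boundary values of modulus 1 a.e. -/
def IsInner (g : ℂ → ℂ) : Prop :=
  g ∈ Hinf ∧ ∀ᵐ t : ℝ ∂(volume.restrict (Set.Ioc (0:ℝ) (2 * π))),
    Filter.Tendsto (fun r : ℝ => ‖g ((r : ℂ) * Complex.exp ((t : ℂ) * Complex.I))‖)
      (nhdsWithin 1 (Set.Iio 1)) (nhds 1)

/-- `X` has the f-property (division by inner functions). -/
def FProperty (X : Set (ℂ → ℂ)) : Prop :=
  ∀ h ∈ X, ∀ g : ℂ → ℂ, IsInner g →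
    (fun z => h z / g z) ∈ Hardy 1 → (fun z => h z / g z) ∈ X

/-- The space of multipliers `M(X,Y)`. -/
def Mult (X Y : Set (ℂ → ℂ)) : Set (ℂ → ℂ) :=
  {g | HolOn g ∧ ∀ f ∈ X, (fun z => g z * f z) ∈ Y}

end

lemma aux_ang (p x : ℝ) (hp : 1 < p) (hx : 0 < x) :
    ∫⁻ θ in Ioo (-π) π, ENNReal.ofReal ((x + |θ|) ^ (-p)) ≤
      ENNReal.ofReal (2 / (p - 1) * x ^ (1 - p)) := by
  have key : ∫⁻ θ in Ioi (0:ℝ), ENNReal.ofReal ((x + |θ|) ^ (-p)) =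
      ENNReal.ofReal (1 / (p - 1) * x ^ (1 - p)) := by
    have h1 : ∫⁻ θ in Ioi (0:ℝ), ENNReal.ofReal ((x + |θ|) ^ (-p)) =
        ∫⁻ θ in (fun t => x + t) ⁻¹' (Ioi x), ENNReal.ofReal ((x + θ) ^ (-p)) := by
      have : (fun t => x + t) ⁻¹' (Ioi x) = Ioi (0:ℝ) := by ext t; simp
      rw [this]
      refine setLIntegral_congr_fun measurableSet_Ioi (fun t ht => ?_)
      simp only [mem_Ioi] at ht
      simp [abs_of_pos ht]
    rw [h1, (measurePreserving_add_left volume x).setLIntegral_comp_preimage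
      (f := fun u => ENNReal.ofReal (u ^ (-p))) measurableSet_Ioi (by fun_prop)]
    rw [← ofReal_integral_eq_lintegral_ofReal]
    · rw [integral_Ioi_rpow_of_lt (by linarith) hx]
      congr 1
      have : -p + 1 = -(p - 1) := by ring
      rw [show 1 - p = -p + 1 by ring]
      rw [this]
      field_simp
    · exact integrableOn_Ioi_rpow_of_lt (by linarith) hx
    · filter_upwards [ae_restrict_mem measurableSet_Ioi] with t ht
      have : 0 < t := hx.trans ht
      positivity
  have key2 : ∫⁻ θ in Iic (0:ℝ), ENNReal.ofReal ((x + |θ|) ^ (-p)) =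
      ENNReal.ofReal (1 / (p - 1) * x ^ (1 - p)) := by
    rw [← key]
    have : Ioi (0:ℝ) =ᵐ[volume] Ici (0:ℝ) := Ioi_ae_eq_Ici
    rw [setLIntegral_congr this]
    have h2 : (fun t : ℝ => -t) ⁻¹' (Ici 0) = Iic (0:ℝ) := by ext t; simp
    rw [← h2, ← (Measure.measurePreserving_neg (volume : Measure ℝ)).setLIntegral_comp_preimage
      (f := fun u => ENNReal.ofReal ((x + |u|) ^ (-p))) measurableSet_Ici (by fun_prop)]
    simp
  calc _ ≤ ∫⁻ θ, ENNReal.ofReal ((x + |θ|) ^ (-p)) := setLIntegral_le_lintegral _ _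
    _ = (∫⁻ θ in Iic (0:ℝ), ENNReal.ofReal ((x + |θ|) ^ (-p))) +
        ∫⁻ θ in Ioi (0:ℝ), ENNReal.ofReal ((x + |θ|) ^ (-p)) := by
        rw [← lintegral_add_compl _ (measurableSet_Iic (a := (0:ℝ))), compl_Iic]
    _ = _ := by
        have h1 : 0 < p - 1 := by linarith
        rw [key, key2, ← ENNReal.ofReal_add (by positivity) (by positivity)]
        congr 1; ring

lemma aux_rad0 (p δ : ℝ) (hp : 1 < p) (hδ : 0 < δ) (hδ1 : δ ≤ 1) :
    ∫⁻ t in Ioo (0:ℝ) 1, ENNReal.ofReal (t ^ (p - 2) * (max δ t) ^ (1 - p)) ≤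
      ENNReal.ofReal (1 / (p - 1) + Real.log (1 / δ)) := by
  have hp1 : 0 < p - 1 := by linarith
  have hsub : Ioo (0:ℝ) 1 ⊆ Ioc 0 δ ∪ Ioc δ 1 := by
    intro t ht
    rcases le_or_gt t δ with h | h
    · exact Or.inl ⟨ht.1, h⟩
    · exact Or.inr ⟨h, ht.2.le⟩
  have h1 : ∫⁻ t in Ioc (0:ℝ) δ, ENNReal.ofReal (t ^ (p - 2) * (max δ t) ^ (1 - p)) =
      ENNReal.ofReal (1 / (p - 1)) := by
    have e1 : ∫⁻ t in Ioc (0:ℝ) δ, ENNReal.ofReal (t ^ (p - 2) * (max δ t) ^ (1 - p)) =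
        ∫⁻ t in Ioc (0:ℝ) δ, ENNReal.ofReal (t ^ (p - 2) * δ ^ (1 - p)) := by
      refine setLIntegral_congr_fun measurableSet_Ioc (fun t ht => ?_)
      simp only [max_eq_left ht.2]
    rw [e1, ← ofReal_integral_eq_lintegral_ofReal]
    · rw [← intervalIntegral.integral_of_le hδ.le, intervalIntegral.integral_mul_const,
        integral_rpow (Or.inl (by linarith))]
      congr 1
      rw [Real.zero_rpow (by linarith), show p - 2 + 1 = p - 1 by ring, sub_zero, div_mul_eq_mul_div,
        ← Real.rpow_add hδ]
      simp
    · have := (intervalIntegral.intervalIntegrable_rpow' (a := 0) (b := δ) (r := p - 2)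
        (by linarith)).mul_const (δ ^ (1 - p))
      exact (intervalIntegrable_iff_integrableOn_Ioc_of_le hδ.le).1 this
    · filter_upwards [ae_restrict_mem measurableSet_Ioc] with t ht
      have : 0 < t := ht.1
      positivity
  have h2 : ∫⁻ t in Ioc δ 1, ENNReal.ofReal (t ^ (p - 2) * (max δ t) ^ (1 - p)) =
      ENNReal.ofReal (Real.log (1 / δ)) := by
    have e1 : ∫⁻ t in Ioc δ 1, ENNReal.ofReal (t ^ (p - 2) * (max δ t) ^ (1 - p)) =
        ∫⁻ t in Ioc δ 1, ENNReal.ofReal (t⁻¹) := by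
      refine setLIntegral_congr_fun measurableSet_Ioc (fun t ht => ?_)
      have : 0 < t := hδ.trans ht.1
      simp only [max_eq_right ht.1.le]
      rw [← Real.rpow_add this, ← Real.rpow_neg_one]
      congr 2; ring
    have h0 : (0:ℝ) ∉ uIcc δ 1 := by
      rw [uIcc_of_le hδ1]; intro h; exact absurd h.1 (not_le.2 hδ)
    rw [e1, ← ofReal_integral_eq_lintegral_ofReal]
    · rw [← intervalIntegral.integral_of_le hδ1, integral_inv h0]
    · have : IntervalIntegrable (fun t : ℝ => t⁻¹) volume δ 1 :=
        intervalIntegral.intervalIntegrable_inv (fun x hx h => h0 (h ▸ hx)) continuousOn_id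
      exact (intervalIntegrable_iff_integrableOn_Ioc_of_le hδ1).1 this
    · filter_upwards [ae_restrict_mem measurableSet_Ioc] with t ht
      have : 0 < t := hδ.trans ht.1
      positivity
  calc _ ≤ _ := lintegral_mono_set hsub
    _ ≤ _ := lintegral_union_le _ _ _
    _ = _ := by
      rw [h1, h2, ENNReal.ofReal_add (by positivity)]
      exact Real.log_nonneg (by rw [le_div_iff₀ hδ]; linarith)

lemma aux_rad (p ρ : ℝ) (hp : 1 < p) (h0 : 0 ≤ ρ) (h1 : ρ < 1) :
    ∫⁻ r in Ioo (0:ℝ) 1, ENNReal.ofReal ((1 - r) ^ (p - 2) * (1 - ρ * r) ^ (1 - p)) ≤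
      ENNReal.ofReal (1 / (p - 1) + Real.log (1 / (1 - ρ))) := by
  refine le_trans ?_ (aux_rad0 p (1 - ρ) hp (by linarith) (by linarith))
  have h2 : (fun t : ℝ => 1 - t) ⁻¹' (Ioo 0 1) = Ioo (0:ℝ) 1 := by
    ext t; simp
  rw [← (Measure.measurePreserving_sub_left (volume : Measure ℝ) 1).setLIntegral_comp_preimage
      (f := fun t => ENNReal.ofReal (t ^ (p - 2) * (max (1 - ρ) t) ^ (1 - p)))
      measurableSet_Ioo (by fun_prop), h2]
  refine setLIntegral_mono' measurableSet_Ioo (fun r hr => ENNReal.ofReal_le_ofReal ?_)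
  have hr1 : 0 < 1 - r := by linarith [hr.2]
  have hm : max (1 - ρ) (1 - r) ≤ 1 - ρ * r := by
    apply max_le <;> nlinarith [hr.1, hr.2]
  have hmp : 0 < max (1 - ρ) (1 - r) := lt_max_of_lt_right hr1
  gcongr ?_ * ?_
  exact Real.rpow_le_rpow_of_nonpos hmp hm (by linarith)

lemma aux_lower (ρ θ : ℝ) (h0 : 0 ≤ ρ) (h1 : ρ < 1) (hθ : |θ| ≤ π) :
    ((1 - ρ) + |θ|) / 5 ≤ ‖(1:ℂ) - ρ * (Real.cos θ + Real.sin θ * Complex.I)‖ := by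
  have he : ((Real.cos θ : ℂ) + Real.sin θ * Complex.I) = Complex.exp (Complex.I * θ) := by
    rw [mul_comm Complex.I (θ : ℂ), Complex.exp_mul_I]; simp
  rw [he]
  set e := Complex.exp (Complex.I * θ) with hedef
  have hn : ‖e‖ = 1 := by rw [hedef, mul_comm]; exact Complex.norm_exp_ofReal_mul_I θ
  have hA : 1 - ρ ≤ ‖(1:ℂ) - ρ * e‖ := by
    have := norm_sub_norm_le (1:ℂ) (ρ * e)
    rw [norm_mul, hn] at this
    simpa [abs_of_nonneg h0] using this
  have hB : ‖e - 1‖ ≤ ‖(1:ℂ) - ρ * e‖ + (1 - ρ) := by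
    have : e - 1 = -((1:ℂ) - ρ * e) + ((1 - ρ : ℝ) : ℂ) * e := by push_cast; ring
    rw [this]
    refine (norm_add_le _ _).trans ?_
    rw [norm_neg, norm_mul, hn, Complex.norm_real, Real.norm_of_nonneg (by linarith), mul_one]
  have hC : 2 / π * |θ| ≤ ‖e - 1‖ := by
    rw [hedef, Complex.norm_exp_I_mul_ofReal_sub_one, norm_mul]
    have := Real.mul_abs_le_abs_sin (x := θ / 2) (by rw [abs_div]; simp; linarith)
    rw [abs_div] at this
    simp only [Real.norm_eq_abs]
    norm_num at this ⊢
    have e3 : 2 / π * |θ| = 2 * (|θ| / π) := by ring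
    rw [e3]; linarith
  have hD : |θ| / 2 ≤ 2 / π * |θ| := by
    have : (1:ℝ)/2 ≤ 2 / π := by
      rw [div_le_div_iff₀ (by norm_num) Real.pi_pos]; linarith [Real.pi_le_four]
    nlinarith [abs_nonneg θ]
  linarith

lemma aux_disc0 (p ρ : ℝ) (hp : 1 < p) (h0 : 0 ≤ ρ) (h1 : ρ < 1) :
    ∫⁻ z in Metric.ball (0:ℂ) 1, ENNReal.ofReal ((1 - ‖z‖) ^ (p - 2) * ‖(1:ℂ) - ρ * z‖ ^ (-p)) ≤
      ENNReal.ofReal (5 ^ p * (2 / (p - 1)) * (1 / (p - 1) + Real.log (1 / (1 - ρ)))) := by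
  have hp1 : 0 < p - 1 := by linarith
  rw [← lintegral_indicator measurableSet_ball, ← Complex.lintegral_comp_polarCoord_symm,
    polarCoord_target]
  rw [Measure.volume_eq_prod, ← Measure.prod_restrict]
  calc _ ≤ ∫⁻ q : ℝ × ℝ, (Ioo (0:ℝ) 1).indicator (fun r => ENNReal.ofReal ((1 - r) ^ (p - 2))) q.1 *
        ENNReal.ofReal (5 ^ p * ((1 - ρ * q.1) + |q.2|) ^ (-p))
          ∂((volume.restrict (Ioi 0)).prod (volume.restrict (Ioo (-π) π))) := by
        rw [Measure.prod_restrict]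
        refine setLIntegral_mono' (measurableSet_Ioi.prod measurableSet_Ioo) ?_
        rintro ⟨r, θ⟩ ⟨hr, hθ⟩
        simp only [mem_Ioi] at hr
        simp only [mem_Ioo] at hθ
        by_cases hr1 : r < 1
        · have hmem : Complex.polarCoord.symm (r, θ) ∈ Metric.ball (0:ℂ) 1 := by
            rw [mem_ball_zero_iff, Complex.norm_polarCoord_symm, abs_of_pos hr]; exact hr1
          rw [indicator_of_mem hmem, indicator_of_mem (show r ∈ Ioo (0:ℝ) 1 from ⟨hr, hr1⟩),
            Complex.norm_polarCoord_symm, abs_of_pos hr, smul_eq_mul]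
          have hr2 : 0 < 1 - r := by linarith
          have hr3 : 0 < 1 - ρ * r := by nlinarith
          rw [← ENNReal.ofReal_mul hr.le, ← ENNReal.ofReal_mul (by positivity)]
          refine ENNReal.ofReal_le_ofReal ?_
          have hl := aux_lower (ρ * r) θ (by positivity) (by linarith)
            (abs_le.2 ⟨hθ.1.le, hθ.2.le⟩)
          have hpos : 0 < ((1 - ρ * r) + |θ|) := by positivity
          have hl2 : ‖(1:ℂ) - ρ * Complex.polarCoord.symm (r, θ)‖ ^ (-p) ≤
              5 ^ p * ((1 - ρ * r) + |θ|) ^ (-p) := by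
            have e : (1:ℂ) - ρ * Complex.polarCoord.symm (r, θ) =
              (1:ℂ) - ((ρ * r : ℝ) : ℂ) * (Real.cos θ + Real.sin θ * Complex.I) := by
              rw [Complex.polarCoord_symm_apply]; push_cast; ring
            rw [e]
            calc _ ≤ (((1 - ρ * r) + |θ|) / 5) ^ (-p) :=
                  Real.rpow_le_rpow_of_nonpos (by positivity) hl (by linarith)
              _ = _ := by
                  rw [Real.div_rpow hpos.le (by norm_num), Real.rpow_neg (by norm_num : (0:ℝ) ≤ 5)]
                  field_simp
          calc r * ((1 - r) ^ (p - 2) * ‖(1:ℂ) - ρ * Complex.polarCoord.symm (r, θ)‖ ^ (-p))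
              ≤ 1 * ((1 - r) ^ (p - 2) * (5 ^ p * ((1 - ρ * r) + |θ|) ^ (-p))) := by gcongr
            _ = _ := by ring
        · have hmem : Complex.polarCoord.symm (r, θ) ∉ Metric.ball (0:ℂ) 1 := by
            rw [mem_ball_zero_iff, Complex.norm_polarCoord_symm, abs_of_pos hr]; exact hr1
          rw [indicator_of_notMem hmem]
          simp
    _ = ∫⁻ r in Ioi (0:ℝ), (Ioo (0:ℝ) 1).indicator (fun r => ENNReal.ofReal ((1 - r) ^ (p - 2))) r *
        ∫⁻ θ in Ioo (-π) π, ENNReal.ofReal (5 ^ p * ((1 - ρ * r) + |θ|) ^ (-p)) := by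
        rw [lintegral_prod]
        · refine lintegral_congr fun r => ?_
          dsimp only
          rw [lintegral_const_mul _ (by fun_prop)]
        · apply Measurable.aemeasurable
          apply Measurable.mul
          · exact (Measurable.indicator (by fun_prop) measurableSet_Ioo).comp measurable_fst
          · fun_prop
    _ ≤ ∫⁻ r in Ioi (0:ℝ), (Ioo (0:ℝ) 1).indicator (fun r => ENNReal.ofReal (5 ^ p * (2 / (p - 1))) *
          ENNReal.ofReal ((1 - r) ^ (p - 2) * (1 - ρ * r) ^ (1 - p))) r := by
        refine lintegral_mono fun r => ?_
        by_cases hr : r ∈ Ioo (0:ℝ) 1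
        · rw [indicator_of_mem hr, indicator_of_mem hr]
          have hr2 : 0 < 1 - r := by linarith [hr.2]
          have hr3 : 0 < 1 - ρ * r := by nlinarith [hr.1, hr.2]
          have := aux_ang p (1 - ρ * r) hp hr3
          simp_rw [ENNReal.ofReal_mul (show (0:ℝ) ≤ 5 ^ p by positivity)]
          rw [lintegral_const_mul _ (by fun_prop)]
          calc _ ≤ ENNReal.ofReal ((1 - r) ^ (p - 2)) * (ENNReal.ofReal (5 ^ p) *
                ENNReal.ofReal (2 / (p - 1) * (1 - ρ * r) ^ (1 - p))) := by gcongr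
            _ = _ := by
              rw [← ENNReal.ofReal_mul (by positivity), ← ENNReal.ofReal_mul (by positivity),
                ← ENNReal.ofReal_mul (by positivity), ← ENNReal.ofReal_mul (by positivity)]
              congr 1; ring
        · rw [indicator_of_notMem hr, indicator_of_notMem hr]; simp
    _ ≤ ∫⁻ r, (Ioo (0:ℝ) 1).indicator (fun r => ENNReal.ofReal (5 ^ p * (2 / (p - 1))) *
          ENNReal.ofReal ((1 - r) ^ (p - 2) * (1 - ρ * r) ^ (1 - p))) r :=
        setLIntegral_le_lintegral _ _
    _ ≤ _ := by
        rw [lintegral_indicator measurableSet_Ioo, lintegral_const_mul _ (by fun_prop),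
          ENNReal.ofReal_mul (show (0:ℝ) ≤ 5 ^ p * (2 / (p - 1)) by positivity)]
        gcongr
        exact aux_rad p ρ hp h0 h1

lemma aux_disc (p : ℝ) (hp : 1 < p) : ∃ C : ℝ, 0 < C ∧ ∀ a ∈ Metric.ball (0:ℂ) 1,
    ∫⁻ z in Metric.ball (0:ℂ) 1, ENNReal.ofReal ((1 - ‖z‖) ^ (p - 2) *
      ‖(1:ℂ) - (starRingEnd ℂ) a * z‖ ^ (-p)) ∂dA ≤
      ENNReal.ofReal (C * Real.log (2 / (1 - ‖a‖))) := by
  have hp1 : 0 < p - 1 := by linarith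
  refine ⟨π⁻¹ * (5 ^ p * (2 / (p - 1)) * (1 / (p - 1) / Real.log 2 + 1)), ?_, ?_⟩
  · have : 0 < Real.log 2 := Real.log_pos (by norm_num)
    have := Real.pi_pos
    positivity
  intro a ha
  have hna : ‖a‖ < 1 := by simpa using ha
  have hl2 : 0 < Real.log 2 := Real.log_pos (by norm_num)
  have hrot : ∃ e : ℂ ≃ₗᵢ[ℝ] ℂ, ∀ z, (starRingEnd ℂ) a * z = ‖a‖ * e z := by
    by_cases ha0 : a = 0
    · exact ⟨LinearIsometryEquiv.refl ℝ ℂ, by simp [ha0]⟩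
    · have hn0 : (‖a‖ : ℂ) ≠ 0 := by simpa using ha0
      have hu : (starRingEnd ℂ) a / ‖a‖ ∈ Submonoid.unitSphere ℂ := by
        refine mem_sphere_zero_iff_norm.2 ?_
        rw [norm_div, RCLike.norm_conj, Complex.norm_real, norm_norm, div_self]
        simpa using ha0
      let c : Circle := ⟨(starRingEnd ℂ) a / ‖a‖, hu⟩
      refine ⟨rotation c, fun z => ?_⟩
      rw [rotation_apply]
      change _ = (‖a‖ : ℂ) * ((starRingEnd ℂ) a / ‖a‖ * z)
      field_simp
  obtain ⟨e, he⟩ := hrot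
  have h1 : ∫⁻ z in Metric.ball (0:ℂ) 1, ENNReal.ofReal ((1 - ‖z‖) ^ (p - 2) *
      ‖(1:ℂ) - (starRingEnd ℂ) a * z‖ ^ (-p)) =
      ∫⁻ z in Metric.ball (0:ℂ) 1, ENNReal.ofReal ((1 - ‖z‖) ^ (p - 2) *
        ‖(1:ℂ) - (‖a‖ : ℂ) * z‖ ^ (-p)) := by
    have hpre : e ⁻¹' (Metric.ball (0:ℂ) 1) = Metric.ball (0:ℂ) 1 := by
      ext z; simp
    rw [← e.measurePreserving.setLIntegral_comp_preimage
      (f := fun z => ENNReal.ofReal ((1 - ‖z‖) ^ (p - 2) * ‖(1:ℂ) - (‖a‖ : ℂ) * z‖ ^ (-p)))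
      measurableSet_ball (by fun_prop), hpre]
    simp only [he, LinearIsometryEquiv.norm_map]
  rw [dA, Measure.restrict_smul, lintegral_smul_measure, h1, smul_eq_mul]
  calc _ ≤ (ENNReal.ofReal π)⁻¹ * ENNReal.ofReal
          (5 ^ p * (2 / (p - 1)) * (1 / (p - 1) + Real.log (1 / (1 - ‖a‖)))) :=
        mul_le_mul_right (aux_disc0 p ‖a‖ hp (norm_nonneg a) hna) _
    _ ≤ _ := by
      rw [← ENNReal.ofReal_inv_of_pos Real.pi_pos, ← ENNReal.ofReal_mul (by positivity)]
      refine ENNReal.ofReal_le_ofReal ?_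
      have hpos : 0 < 1 - ‖a‖ := by linarith
      have e2 : Real.log (2 / (1 - ‖a‖)) = Real.log 2 + Real.log (1 / (1 - ‖a‖)) := by
        rw [← Real.log_mul (by norm_num) (by positivity)]; congr 1; ring
      have hl : 0 ≤ Real.log (1 / (1 - ‖a‖)) := by
        apply Real.log_nonneg
        rw [le_div_iff₀ hpos]; linarith [norm_nonneg a]
      rw [e2, mul_assoc π⁻¹, mul_assoc (5 ^ p * (2 / (p - 1)))]
      have := Real.pi_pos
      gcongr
      have : (1 / (p - 1) / Real.log 2 + 1) * (Real.log 2 + Real.log (1 / (1 - ‖a‖))) =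
        1 / (p - 1) + Real.log (1 / (1 - ‖a‖)) + Real.log 2 +
          1 / (p - 1) / Real.log 2 * Real.log (1 / (1 - ‖a‖)) := by
        field_simp; ring
      rw [this]
      have : 0 ≤ 1 / (p - 1) / Real.log 2 * Real.log (1 / (1 - ‖a‖)) := by positivity
      linarith

/-- The basic logarithmic test function. -/
noncomputable def tf (a z : ℂ) : ℂ := -Complex.log ((1 - (starRingEnd ℂ) a * z) / 2)

lemma q_lower {a z : ℂ} (ha : ‖a‖ < 1) : 1 - ‖z‖ ≤ ‖1 - (starRingEnd ℂ) a * z‖ := by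
  have := norm_sub_norm_le (1:ℂ) ((starRingEnd ℂ) a * z)
  rw [norm_mul, RCLike.norm_conj, norm_one] at this
  nlinarith [norm_nonneg z]

lemma q_upper {a z : ℂ} (ha : ‖a‖ < 1) (hz : ‖z‖ < 1) : ‖1 - (starRingEnd ℂ) a * z‖ ≤ 2 := by
  have := norm_sub_le (1:ℂ) ((starRingEnd ℂ) a * z)
  rw [norm_mul, RCLike.norm_conj, norm_one] at this
  nlinarith [norm_nonneg z, norm_nonneg a]

lemma q_re {a z : ℂ} (ha : ‖a‖ < 1) (hz : ‖z‖ < 1) : 0 < (1 - (starRingEnd ℂ) a * z).re := by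
  have := Complex.re_le_norm ((starRingEnd ℂ) a * z)
  rw [norm_mul, RCLike.norm_conj] at this
  rw [Complex.sub_re, Complex.one_re]
  nlinarith [norm_nonneg z, norm_nonneg a]

lemma tf_hasDerivAt {a z : ℂ} (ha : ‖a‖ < 1) (hz : ‖z‖ < 1) :
    HasDerivAt (tf a) ((starRingEnd ℂ) a / (1 - (starRingEnd ℂ) a * z)) z := by
  have hre := q_re ha hz
  have hne : (1 - (starRingEnd ℂ) a * z) ≠ 0 := by
    intro h; rw [h] at hre; simp at hre
  have h1 : HasDerivAt (fun z : ℂ => (1 - (starRingEnd ℂ) a * z) / 2)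
      (-((starRingEnd ℂ) a) / 2) z := by
    have := (((hasDerivAt_id z).const_mul ((starRingEnd ℂ) a)).const_sub 1).div_const 2
    simpa using this
  have hs : (1 - (starRingEnd ℂ) a * z) / 2 ∈ Complex.slitPlane := by
    left
    rw [show ((1 - (starRingEnd ℂ) a * z) / 2).re = (1 - (starRingEnd ℂ) a * z).re / 2 by simp]
    positivity
  have h2 := (h1.clog hs).neg
  refine h2.congr_deriv ?_
  rw [neg_div, neg_div, neg_neg, div_div_div_cancel_right₀ (by norm_num)]

lemma tf_re {a z : ℂ} (ha : ‖a‖ < 1) (hz : ‖z‖ < 1) :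
    (tf a z).re = Real.log (2 / ‖1 - (starRingEnd ℂ) a * z‖) := by
  have h1 := q_lower (z := z) ha
  have h2 : 0 < ‖1 - (starRingEnd ℂ) a * z‖ := by linarith
  rw [tf, Complex.neg_re, Complex.log_re, norm_div, Complex.norm_two, ← Real.log_inv, inv_div]

lemma tf_re_nonneg {a z : ℂ} (ha : ‖a‖ < 1) (hz : ‖z‖ < 1) :
    0 ≤ (tf a z).re := by
  rw [tf_re ha hz]
  have h1 := q_lower (z := z) ha
  have h2 : 0 < ‖1 - (starRingEnd ℂ) a * z‖ := by linarith
  apply Real.log_nonneg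
  rw [le_div_iff₀ h2]
  linarith [q_upper ha hz]

lemma tf_norm {a z : ℂ} {R : ℝ} (ha : ‖a‖ < 1) (hz : ‖z‖ < R) (hR : R < 1) :
    ‖tf a z‖ ≤ Real.log (2 / (1 - R)) + π := by
  have hz1 : ‖z‖ < 1 := hz.trans hR
  refine (Complex.norm_le_abs_re_add_abs_im _).trans ?_
  rw [abs_of_nonneg (tf_re_nonneg ha hz1), tf_re ha hz1]
  have h1 := q_lower (z := z) ha
  have h2 : 0 < ‖1 - (starRingEnd ℂ) a * z‖ := by linarith
  have h3 : 0 < 1 - R := by linarith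
  apply add_le_add
  · apply Real.log_le_log (by positivity)
    gcongr
    linarith
  · rw [tf, Complex.neg_im, abs_neg, Complex.log_im]
    exact Complex.abs_arg_le_pi _

lemma L_lower {a : ℂ} (ha : ‖a‖ < 1) : Real.log 2 ≤ Real.log (2 / (1 - ‖a‖)) := by
  apply Real.log_le_log (by norm_num)
  rw [le_div_iff₀ (by linarith)]
  linarith [norm_nonneg a]

lemma L_pos {a : ℂ} (ha : ‖a‖ < 1) : 0 < Real.log (2 / (1 - ‖a‖)) :=
  lt_of_lt_of_le (Real.log_pos (by norm_num)) (L_lower ha)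

lemma jensen_aux (p : ℝ) (hp : 1 < p) (w : ℕ → ℝ) (hw : ∀ k, 0 ≤ w k) (hw1 : HasSum w 1)
    (d : ℕ → ℂ) (S : ℂ) (hS : HasSum (fun k => (w k : ℂ) * d k) S) :
    ‖S‖ₑ ^ p ≤ ∑' k, ENNReal.ofReal (w k) * ‖d k‖ₑ ^ p := by
  have hp0 : 0 < p := by linarith
  have hlim : Tendsto (fun n => ‖∑ k ∈ Finset.range n, (w k : ℂ) * d k‖ₑ) atTop (nhds ‖S‖ₑ) :=
    hS.tendsto_sum_nat.enorm
  have hb : ‖S‖ₑ ≤ (∑' k, ENNReal.ofReal (w k) * ‖d k‖ₑ ^ p) ^ p⁻¹ := by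
    refine le_of_tendsto hlim (Eventually.of_forall fun n => ?_)
    calc _ ≤ ∑ k ∈ Finset.range n, ‖(w k : ℂ) * d k‖ₑ := enorm_sum_le _ _
      _ = ∑ k ∈ Finset.range n, ENNReal.ofReal (w k) * ‖d k‖ₑ := by
        refine Finset.sum_congr rfl fun k _ => ?_
        rw [enorm_mul]
        congr 1
        rw [← ofReal_norm, Complex.norm_real, Real.norm_of_nonneg (hw k)]
      _ ≤ _ := ENNReal.inner_le_weight_mul_Lp_of_nonneg _ hp.le _ _
      _ ≤ 1 * (∑' k, ENNReal.ofReal (w k) * ‖d k‖ₑ ^ p) ^ p⁻¹ := by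
        gcongr
        · apply ENNReal.rpow_le_one
          · rw [← ENNReal.ofReal_sum_of_nonneg (fun k _ => hw k), ENNReal.ofReal_le_one]
            exact sum_le_hasSum _ (fun k _ => hw k) hw1
          · rw [sub_nonneg]; exact inv_le_one_of_one_le₀ hp.le
        · exact ENNReal.sum_le_tsum _
      _ = _ := one_mul _
  calc _ ≤ ((∑' k, ENNReal.ofReal (w k) * ‖d k‖ₑ ^ p) ^ p⁻¹) ^ p := by gcongr
    _ = _ := by rw [← ENNReal.rpow_mul, inv_mul_cancel₀ hp0.ne', ENNReal.rpow_one]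

lemma besov_sum (p : ℝ) (hp : 1 < p) (a : ℕ → ℂ) (ha : ∀ k, ‖a k‖ < 1) :
    ∃ f ∈ Besov p, ∀ k, ∀ z : ℂ, ‖z‖ < 1 →
      (1 / 2 / 2 ^ k) * ((Real.log (2 / (1 - ‖a k‖))) ^ (-(1 / p)) *
        Real.log (2 / ‖1 - (starRingEnd ℂ) (a k) * z‖)) ≤ ‖f z‖ := by
  have hp0 : 0 < p := by linarith
  set w : ℕ → ℝ := fun k => 1 / 2 / 2 ^ k with hwdef
  have hw0 : ∀ k, 0 ≤ w k := fun k => by simp only [hwdef]; positivity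
  have hw1 : HasSum w 1 := hasSum_geometric_two' 1
  set c : ℕ → ℝ := fun k => (Real.log (2 / (1 - ‖a k‖))) ^ (-(1 / p)) with hcdef
  have hc0 : ∀ k, 0 < c k := fun k => Real.rpow_pos_of_pos (L_pos (ha k)) _
  have hcb : ∀ k, c k ≤ (Real.log 2) ^ (-(1 / p)) := fun k =>
    Real.rpow_le_rpow_of_nonpos (Real.log_pos (by norm_num)) (L_lower (ha k))
      (by rw [neg_nonpos]; positivity)
  set F : ℕ → ℂ → ℂ := fun k z => (w k : ℂ) * ((c k : ℂ) * tf (a k) z) with hF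
  have hFd : ∀ k z, ‖z‖ < 1 → HasDerivAt (F k) ((w k : ℂ) * ((c k : ℂ) *
      ((starRingEnd ℂ) (a k) / (1 - (starRingEnd ℂ) (a k) * z)))) z := fun k z hz =>
    ((tf_hasDerivAt (ha k) hz).const_mul _).const_mul _
  have hFb : ∀ R < 1, ∀ k z, ‖z‖ < R → ‖F k z‖ ≤
      w k * ((Real.log 2) ^ (-(1 / p)) * (Real.log (2 / (1 - R)) + π)) := by
    intro R hR k z hz
    simp only [hF, norm_mul, Complex.norm_real, Real.norm_of_nonneg (hw0 k),
      Real.norm_of_nonneg (hc0 k).le]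
    have := tf_norm (ha k) hz hR
    have := hcb k
    have := hw0 k
    have : 0 ≤ (Real.log 2) ^ (-(1 / p)) := le_trans (hc0 k).le (hcb k)
    gcongr
  have hsumm : ∀ R : ℝ, Summable (fun k => w k *
      ((Real.log 2) ^ (-(1 / p)) * (Real.log (2 / (1 - R)) + π))) :=
    fun R => hw1.summable.mul_right _
  have hFdiff : ∀ R < 1, ∀ k, DifferentiableOn ℂ (F k) (Metric.ball 0 R) := by
    intro R hR k z hz
    rw [mem_ball_zero_iff] at hz
    exact (hFd k z (hz.trans hR)).differentiableAt.differentiableWithinAt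
  set f : ℂ → ℂ := fun z => ∑' k, F k z with hf
  have hmid : ∀ z : ℂ, ‖z‖ < 1 → ∃ R < 1, ‖z‖ < R := fun z hz => by
    obtain ⟨R, h1, h2⟩ := exists_between hz
    exact ⟨R, h2, h1⟩
  have hfder : ∀ z : ℂ, ‖z‖ < 1 → HasSum (fun k => (w k : ℂ) * ((c k : ℂ) *
      ((starRingEnd ℂ) (a k) / (1 - (starRingEnd ℂ) (a k) * z)))) (deriv f z) := by
    intro z hz
    obtain ⟨R, hR, hzR⟩ := hmid z hz
    have := Complex.hasSum_deriv_of_summable_norm (hsumm R) (hFdiff R hR) isOpen_ball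
      (fun k w hw => hFb R hR k w (by simpa using hw)) (z := z) (by simpa using hzR)
    simpa only [(hFd _ z hz).deriv] using this
  have hfdiff : HolOn f := by
    intro z hz
    rw [mem_ball_zero_iff] at hz
    obtain ⟨R, hR, hzR⟩ := hmid z hz
    have := Complex.differentiableOn_tsum_of_summable_norm (hsumm R) (hFdiff R hR) isOpen_ball
      (fun k w hw => hFb R hR k w (by simpa using hw))
    exact (this.differentiableAt (isOpen_ball.mem_nhds (by simpa using hzR))).differentiableWithinAt
  obtain ⟨C, hC0, hC⟩ := aux_disc p hp
  refine ⟨f, ⟨hfdiff, ?_⟩, ?_⟩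
  · calc _ ≤ ∫⁻ z in Metric.ball (0:ℂ) 1, ∑' k, ENNReal.ofReal (w k) *
          (ENNReal.ofReal ((Real.log (2 / (1 - ‖a k‖)))⁻¹) *
          ENNReal.ofReal ((1 - ‖z‖) ^ (p - 2) *
            ‖(1:ℂ) - (starRingEnd ℂ) (a k) * z‖ ^ (-p))) ∂dA := by
          refine setLIntegral_mono' measurableSet_ball fun z hz => ?_
          rw [mem_ball_zero_iff] at hz
          have hz1 : 0 < 1 - ‖z‖ := by linarith
          have hj := jensen_aux p hp w hw0 hw1 _ _ (hfder z hz)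
          rw [ENNReal.ofReal_mul (by positivity), ← ENNReal.ofReal_rpow_of_nonneg (norm_nonneg _)
            hp0.le, ofReal_norm]
          refine (mul_le_mul_right hj _).trans ?_
          rw [← ENNReal.tsum_mul_left]
          refine ENNReal.tsum_le_tsum fun k => ?_
          rw [mul_left_comm]
          refine mul_le_mul_right ?_ _
          have hL := L_pos (ha k)
          rw [← ofReal_norm, ENNReal.ofReal_rpow_of_nonneg (norm_nonneg _) hp0.le,
            ← ENNReal.ofReal_mul (by positivity), ← ENNReal.ofReal_mul (by positivity)]
          refine ENNReal.ofReal_le_ofReal ?_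
          have hq : 0 < ‖1 - (starRingEnd ℂ) (a k) * z‖ := by
            linarith [q_lower (z := z) (ha k)]
          rw [norm_mul, norm_div, RCLike.norm_conj, Complex.norm_real,
            Real.norm_of_nonneg (hc0 k).le, Real.mul_rpow (hc0 k).le (by positivity),
            Real.div_rpow (norm_nonneg _) hq.le, Real.rpow_neg hq.le]
          have hcp : c k ^ p = (Real.log (2 / (1 - ‖a k‖)))⁻¹ := by
            simp only [hcdef]
            rw [← Real.rpow_mul hL.le, ← Real.rpow_neg_one]
            congr 1; field_simp
          rw [hcp]
          have hap : ‖a k‖ ^ p ≤ 1 := Real.rpow_le_one (norm_nonneg _) (ha k).le hp0.le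
          calc (1 - ‖z‖) ^ (p - 2) * ((Real.log (2 / (1 - ‖a k‖)))⁻¹ *
                (‖a k‖ ^ p / ‖1 - (starRingEnd ℂ) (a k) * z‖ ^ p))
              ≤ (1 - ‖z‖) ^ (p - 2) * ((Real.log (2 / (1 - ‖a k‖)))⁻¹ *
                (1 / ‖1 - (starRingEnd ℂ) (a k) * z‖ ^ p)) := by gcongr
            _ = _ := by rw [one_div]; ring
      _ = ∑' k, ENNReal.ofReal (w k) *
          (ENNReal.ofReal ((Real.log (2 / (1 - ‖a k‖)))⁻¹) *
          ∫⁻ z in Metric.ball (0:ℂ) 1, ENNReal.ofReal ((1 - ‖z‖) ^ (p - 2) *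
            ‖(1:ℂ) - (starRingEnd ℂ) (a k) * z‖ ^ (-p)) ∂dA) := by
          rw [lintegral_tsum (fun k => by fun_prop)]
          refine tsum_congr fun k => ?_
          rw [lintegral_const_mul _ (by fun_prop), lintegral_const_mul _ (by fun_prop)]
      _ ≤ ∑' k, ENNReal.ofReal (w k) * ENNReal.ofReal C := by
          refine ENNReal.tsum_le_tsum fun k => mul_le_mul_right ?_ _
          have hL := L_pos (ha k)
          refine (mul_le_mul_right (hC (a k) (by simpa using ha k)) _).trans ?_
          rw [← ENNReal.ofReal_mul (by positivity)]
          refine ENNReal.ofReal_le_ofReal (le_of_eq ?_)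
          field_simp
      _ < ⊤ := by
          rw [ENNReal.tsum_mul_right, ← ENNReal.ofReal_tsum_of_nonneg hw0 hw1.summable]
          exact ENNReal.mul_lt_top ENNReal.ofReal_lt_top ENNReal.ofReal_lt_top
  · intro k z hz
    obtain ⟨R, hR, hzR⟩ := hmid z hz
    have hs : Summable (fun k => F k z) :=
      Summable.of_norm_bounded (hsumm R) (fun k => hFb R hR k z hzR)
    have hre : ∀ k, (F k z).re = w k * (c k * (tf (a k) z).re) := fun k => by
      simp only [hF]
      rw [Complex.re_ofReal_mul, Complex.re_ofReal_mul]
    have h1 : HasSum (fun k => (F k z).re) (f z).re := Complex.hasSum_re hs.hasSum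
    have h2 : (F k z).re ≤ (f z).re := le_hasSum h1 k (fun j _ => by
      rw [hre]
      exact mul_nonneg (hw0 j) (mul_nonneg (hc0 j).le (tf_re_nonneg (ha j) hz)))
    rw [hre, tf_re (ha k) hz] at h2
    exact h2.trans (Complex.re_le_norm _)

lemma Tg_deriv (g f : ℂ → ℂ) (hg : HolOn g) (hf : HolOn f) (z : ℂ) (hz : ‖z‖ < 1) :
    deriv (Tg g f) z = deriv g z * f z := by
  have hh : DifferentiableOn ℂ (fun z => deriv g z * f z) (Metric.ball (0:ℂ) 1) :=
    (hg.deriv isOpen_ball).mul hf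
  obtain ⟨H, hH⟩ := hh.isExactOn_ball
  have key : ∀ u ∈ Metric.ball (0:ℂ) 1, Tg g f u = H u - H 0 := by
    intro u hu
    have hseg : ∀ t ∈ uIcc (0:ℝ) 1, (t:ℂ) * u ∈ Metric.ball (0:ℂ) 1 := by
      intro t ht
      rw [uIcc_of_le zero_le_one] at ht
      rw [mem_ball_zero_iff] at hu ⊢
      rw [norm_mul, Complex.norm_real, Real.norm_of_nonneg ht.1]
      nlinarith [ht.2, norm_nonneg u]
    have hd : ∀ t ∈ uIcc (0:ℝ) 1, HasDerivAt (fun t : ℝ => H ((t:ℂ) * u))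
        ((deriv g ((t:ℂ) * u) * f ((t:ℂ) * u)) * u) t := by
      intro t ht
      have h1 : HasDerivAt (fun t : ℝ => (t:ℂ) * u) u t := by
        simpa using (Complex.ofRealCLM.hasDerivAt (x := t)).mul_const u
      exact (hH _ (hseg t ht)).comp t h1
    have hcont : ContinuousOn (fun t : ℝ => (deriv g ((t:ℂ) * u) * f ((t:ℂ) * u)) * u)
        (uIcc (0:ℝ) 1) := by
      apply ContinuousOn.mul _ continuousOn_const
      exact hh.continuousOn.comp (f := fun t : ℝ => (t:ℂ) * u) (by fun_prop) hseg
    have := intervalIntegral.integral_eq_sub_of_hasDerivAt hd hcont.intervalIntegrable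
    rw [intervalIntegral.integral_mul_const] at this
    simp only [Complex.ofReal_one, Complex.ofReal_zero, one_mul, zero_mul] at this
    rw [Tg, mul_comm, this]
  have hzb : z ∈ Metric.ball (0:ℂ) 1 := by simpa using hz
  have he : Tg g f =ᶠ[nhds z] fun u => H u - H 0 := by
    filter_upwards [isOpen_ball.mem_nhds hzb] with u hu using key u hu
  rw [he.deriv_eq]
  exact ((hH z hzb).sub_const _).deriv

lemma phi_id {a z : ℂ} (ha : ‖a‖ < 1) (hz : ‖z‖ < 1) :
    1 - ‖phi a z‖ ^ 2 = (1 - ‖a‖ ^ 2) * (1 - ‖z‖ ^ 2) / ‖1 - (starRingEnd ℂ) a * z‖ ^ 2 := by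
  have hq : 0 < ‖1 - (starRingEnd ℂ) a * z‖ := by linarith [q_lower (z := z) ha]
  rw [phi, norm_div, div_pow, eq_div_iff (by positivity), sub_mul, div_mul_cancel₀ _ (by positivity)]
  simp only [← Complex.normSq_eq_norm_sq, Complex.normSq_apply, Complex.sub_re, Complex.sub_im,
    Complex.mul_re, Complex.mul_im, Complex.conj_re, Complex.conj_im, Complex.one_re,
    Complex.one_im]
  ring

lemma pw (s α : ℝ) (hs : 0 < s) (hα : 0 < α) : ∃ C : ℝ, 0 < C ∧ ∀ a z : ℂ, ‖a‖ < 1 → ‖z‖ < 1 →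
    Real.log (2 / (1 - ‖a‖)) ^ (2 * α) * (1 - ‖phi a z‖ ^ 2) ^ s ≤
      16 * (Real.log (2 / (1 - ‖a‖)) ^ (α - 1) *
        Real.log (2 / ‖1 - (starRingEnd ℂ) a * z‖)) ^ 2 * (1 - ‖phi a z‖ ^ 2) ^ s +
      C * (1 - ‖z‖ ^ 2) ^ s := by
  set ε := s / (4 * α) with hε
  have hε0 : 0 < ε := by positivity
  refine ⟨(2 ^ (s / 2) / ε ^ (2 * α)) * 2 ^ s, by positivity, ?_⟩
  intro a z ha hz
  have hL := L_pos ha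
  set L := Real.log (2 / (1 - ‖a‖)) with hLdef
  set q := ‖1 - (starRingEnd ℂ) a * z‖ with hqdef
  have hq : 0 < q := by linarith [q_lower (z := z) ha]
  have hδ : 0 < 1 - ‖a‖ := by linarith
  set δ := 1 - ‖a‖ with hδdef
  have hδ1 : δ ≤ 1 := by linarith [norm_nonneg a]
  have hid := phi_id ha hz
  have hz2 : 0 < 1 - ‖z‖ ^ 2 := by nlinarith [norm_nonneg z]
  have ha2 : 0 < 1 - ‖a‖ ^ 2 := by nlinarith [norm_nonneg a]
  have hphi : 0 < 1 - ‖phi a z‖ ^ 2 := by rw [hid]; positivity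
  rcases le_or_gt q (δ ^ (1/4 : ℝ)) with hle | hgt
  · have h1 : L / 4 ≤ Real.log (2 / q) := by
      have : Real.log q ≤ 1/4 * Real.log δ := by
        rw [← Real.log_rpow hδ]; exact Real.log_le_log hq hle
      rw [hLdef, Real.log_div (by norm_num) hδ.ne', Real.log_div (by norm_num) hq.ne']
      have : 0 < Real.log 2 := Real.log_pos (by norm_num)
      linarith
    have h2 : L ^ (2 * α) ≤ 16 * (L ^ (α - 1) * Real.log (2 / q)) ^ 2 := by
      calc L ^ (2 * α) = 16 * (L ^ (α - 1) * (L / 4)) ^ 2 := by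
            rw [Real.rpow_sub_one hL.ne', show 2 * α = α * (2:ℕ) by push_cast; ring,
              Real.rpow_mul_natCast hL.le]
            field_simp; norm_num
        _ ≤ _ := by gcongr
    have h3 : 0 ≤ (2 ^ (s / 2) / ε ^ (2 * α)) * 2 ^ s * (1 - ‖z‖ ^ 2) ^ s := by positivity
    calc _ ≤ 16 * (L ^ (α - 1) * Real.log (2 / q)) ^ 2 * (1 - ‖phi a z‖ ^ 2) ^ s := by gcongr
      _ ≤ _ := by linarith
  · have h1 : 1 - ‖phi a z‖ ^ 2 ≤ 2 * δ ^ (1/2 : ℝ) * (1 - ‖z‖ ^ 2) := by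
      rw [hid, div_le_iff₀ (by positivity)]
      have h2 : δ ^ (1/2 : ℝ) ≤ q ^ 2 := by
        calc δ ^ (1/2 : ℝ) = (δ ^ (1/4 : ℝ)) ^ 2 := by
              rw [← Real.rpow_mul_natCast hδ.le]; norm_num
          _ ≤ _ := by gcongr
      have h3 : 1 - ‖a‖ ^ 2 ≤ 2 * δ := by nlinarith [norm_nonneg a]
      have h4 : δ = δ ^ (1/2 : ℝ) * δ ^ (1/2 : ℝ) := by
        rw [← Real.rpow_add hδ]; norm_num
      calc (1 - ‖a‖ ^ 2) * (1 - ‖z‖ ^ 2) ≤ 2 * δ * (1 - ‖z‖ ^ 2) := by gcongr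
        _ = 2 * δ ^ (1/2 : ℝ) * (1 - ‖z‖ ^ 2) * δ ^ (1/2 : ℝ) := by
            nth_rewrite 1 [h4]; ring
        _ ≤ _ := by gcongr
    have h2 : (1 - ‖phi a z‖ ^ 2) ^ s ≤ 2 ^ s * δ ^ (s / 2) * (1 - ‖z‖ ^ 2) ^ s := by
      calc _ ≤ (2 * δ ^ (1/2 : ℝ) * (1 - ‖z‖ ^ 2)) ^ s := by gcongr
        _ = _ := by
          rw [Real.mul_rpow (by positivity) hz2.le, Real.mul_rpow (by norm_num) (by positivity),
            ← Real.rpow_mul hδ.le]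
          congr 3; ring
    have h3 : L ^ (2 * α) ≤ 2 ^ (s / 2) / ε ^ (2 * α) * δ ^ (-(s / 2)) := by
      calc L ^ (2 * α) ≤ ((2 / δ) ^ ε / ε) ^ (2 * α) := by
            gcongr
            exact Real.log_le_rpow_div (by positivity) hε0
        _ = _ := by
            rw [Real.div_rpow (by positivity) hε0.le, ← Real.rpow_mul (by positivity),
              show ε * (2 * α) = s / 2 by rw [hε]; field_simp; norm_num,
              Real.div_rpow (by norm_num) hδ.le, Real.rpow_neg hδ.le]
            field_simp
    have h4 : 0 ≤ 16 * (L ^ (α - 1) * Real.log (2 / q)) ^ 2 * (1 - ‖phi a z‖ ^ 2) ^ s := by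
      positivity
    calc _ ≤ (2 ^ (s / 2) / ε ^ (2 * α) * δ ^ (-(s / 2))) *
          (2 ^ s * δ ^ (s / 2) * (1 - ‖z‖ ^ 2) ^ s) := by gcongr
      _ = (2 ^ (s / 2) / ε ^ (2 * α)) * 2 ^ s * (1 - ‖z‖ ^ 2) ^ s *
          (δ ^ (-(s / 2)) * δ ^ (s / 2)) := by ring
      _ = (2 ^ (s / 2) / ε ^ (2 * α)) * 2 ^ s * (1 - ‖z‖ ^ 2) ^ s := by
          rw [← Real.rpow_add hδ]; simp
      _ ≤ _ := by linarith

/-- For `1 < p < ∞`, `0 < s ≤ 1`, `p'` the conjugate exponent of `p`, and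
`g` holomorphic on the unit disc: if `T_g` maps `Bᵖ` into `Q_s` then `g ∈ Q_{s,log,1/p'}`. -/
theorem stmt6 (p p' s : ℝ) (hp : 1 < p) (hpp' : 1 / p + 1 / p' = 1)
    (hs0 : 0 < s) (hs1 : s ≤ 1) (g : ℂ → ℂ) (hg : HolOn g)
    (h : MapsInto (Tg g) (Besov p) (Qs s)) :
    g ∈ QsLog s (1 / p') := by
  have hp0 : 0 < p := by linarith
  set α := 1 / p' with hαdef
  have hα1 : α - 1 = -(1 / p) := by linarith
  have hα : 0 < α := by
    have : 1 / p < 1 := by rw [div_lt_one hp0]; exact hp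
    linarith
  obtain ⟨C, hC0, hC⟩ := pw s α hs0 hα
  have hone : (fun _ : ℂ => (1:ℂ)) ∈ Besov p := by
    refine ⟨differentiableOn_const _, ?_⟩
    simp [Real.zero_rpow hp0.ne']
  have hJ : ∫⁻ z in Metric.ball (0:ℂ) 1,
      ENNReal.ofReal (‖deriv g z‖ ^ 2 * (1 - ‖z‖ ^ 2) ^ s) ∂dA < ⊤ := by
    refine lt_of_le_of_lt ?_ (h _ hone).2
    refine le_trans ?_ (le_iSup₂ (0:ℂ) (by simp))
    refine setLIntegral_mono' measurableSet_ball fun z hz => ?_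
    rw [mem_ball_zero_iff] at hz
    rw [Tg_deriv g _ hg hone.1 z hz]
    simp [phi]
  set J := ∫⁻ z in Metric.ball (0:ℂ) 1,
      ENNReal.ofReal (‖deriv g z‖ ^ 2 * (1 - ‖z‖ ^ 2) ^ s) ∂dA with hJdef
  refine ⟨hg, ?_⟩
  by_contra hcon
  rw [not_lt, top_le_iff] at hcon
  have hex : ∀ k : ℕ, ∃ a : ℂ, ‖a‖ < 1 ∧ ENNReal.ofReal (8 ^ k) <
      (ENNReal.ofReal ((Real.log (2 / (1 - ‖a‖))) ^ (2 * α)) *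
        ∫⁻ z in Metric.ball (0:ℂ) 1,
          ENNReal.ofReal (‖deriv g z‖ ^ 2 *
            (1 - ‖phi a z‖ ^ 2) ^ s) ∂dA) := by
    intro k
    have : ENNReal.ofReal (8 ^ k) < ⊤ := ENNReal.ofReal_lt_top
    rw [← hcon, lt_iSup_iff] at this
    obtain ⟨a, ha⟩ := this
    rw [lt_iSup_iff] at ha
    obtain ⟨hab, ha⟩ := ha
    exact ⟨a, by simpa using hab, ha⟩
  choose a ha hak using hex
  obtain ⟨f, hfB, hfl⟩ := besov_sum p hp a ha
  have hM := (h f hfB).2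
  set M := ⨆ a ∈ Metric.ball (0:ℂ) 1, ∫⁻ z in Metric.ball (0:ℂ) 1,
      ENNReal.ofReal (‖deriv (Tg g f) z‖ ^ 2 *
        (1 - ‖phi a z‖ ^ 2) ^ s) ∂dA with hMdef
  have key : ∀ k : ℕ, ENNReal.ofReal (8 ^ k) ≤
      ENNReal.ofReal C * J + ENNReal.ofReal (64 * 4 ^ k) * M := by
    intro k
    have hL := L_pos (ha k)
    calc _ ≤ _ := (hak k).le
      _ = ∫⁻ z in Metric.ball (0:ℂ) 1, ENNReal.ofReal ((Real.log (2 / (1 - ‖a k‖))) ^ (2 * α)) *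
          ENNReal.ofReal (‖deriv g z‖ ^ 2 * (1 - ‖phi (a k) z‖ ^ 2) ^ s) ∂dA :=
        (lintegral_const_mul' _ _ ENNReal.ofReal_ne_top).symm
      _ ≤ ∫⁻ z in Metric.ball (0:ℂ) 1,
          (ENNReal.ofReal C * ENNReal.ofReal (‖deriv g z‖ ^ 2 * (1 - ‖z‖ ^ 2) ^ s) +
          ENNReal.ofReal (64 * 4 ^ k) * ENNReal.ofReal (‖deriv (Tg g f) z‖ ^ 2 *
            (1 - ‖phi (a k) z‖ ^ 2) ^ s)) ∂dA := by
        refine setLIntegral_mono' measurableSet_ball fun z hz => ?_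
        rw [mem_ball_zero_iff] at hz
        rw [Tg_deriv g f hg hfB.1 z hz]
        have hz2 : 0 < 1 - ‖z‖ ^ 2 := by nlinarith [norm_nonneg z]
        have ha2 : 0 < 1 - ‖a k‖ ^ 2 := by nlinarith [norm_nonneg (a k), ha k]
        have hq : 0 < ‖1 - (starRingEnd ℂ) (a k) * z‖ := by
          linarith [q_lower (z := z) (ha k)]
        have hphi : 0 < 1 - ‖phi (a k) z‖ ^ 2 := by rw [phi_id (ha k) hz]; positivity
        rw [← ENNReal.ofReal_mul (by positivity), ← ENNReal.ofReal_mul (by positivity),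
          ← ENNReal.ofReal_mul (by positivity), ← ENNReal.ofReal_add (by positivity) (by positivity)]
        refine ENNReal.ofReal_le_ofReal ?_
        have h1 := hC (a k) z (ha k) hz
        have h2 := hfl k z hz
        rw [hα1] at h1
        set X := Real.log (2 / (1 - ‖a k‖)) ^ (-(1 / p)) *
          Real.log (2 / ‖1 - (starRingEnd ℂ) (a k) * z‖) with hX
        have hX0 : 0 ≤ X := by
          have := tf_re_nonneg (ha k) hz
          rw [tf_re (ha k) hz] at this
          positivity
        have h3 : 16 * X ^ 2 ≤ 64 * 4 ^ k * ‖f z‖ ^ 2 := by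
          calc 16 * X ^ 2 = 64 * 4 ^ k * (1 / 2 / 2 ^ k * X) ^ 2 := by
                rw [show (4:ℝ) = 2 ^ 2 by norm_num, ← pow_mul, mul_comm 2 k, pow_mul]
                field_simp; ring
            _ ≤ _ := by gcongr
        set P := (1 - ‖phi (a k) z‖ ^ 2) ^ s with hP
        have hP0 : 0 ≤ P := by positivity
        rw [norm_mul]
        calc _ = ‖deriv g z‖ ^ 2 * (Real.log (2 / (1 - ‖a k‖)) ^ (2 * α) * P) := by ring
          _ ≤ ‖deriv g z‖ ^ 2 * (64 * 4 ^ k * ‖f z‖ ^ 2 * P + C * (1 - ‖z‖ ^ 2) ^ s) := by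
            gcongr
            refine h1.trans ?_
            gcongr
          _ = _ := by ring
      _ = ENNReal.ofReal C * J + ENNReal.ofReal (64 * 4 ^ k) * ∫⁻ z in Metric.ball (0:ℂ) 1,
          ENNReal.ofReal (‖deriv (Tg g f) z‖ ^ 2 * (1 - ‖phi (a k) z‖ ^ 2) ^ s) ∂dA := by
        rw [lintegral_add_left (by have := measurable_deriv g; fun_prop),
          lintegral_const_mul' _ _ ENNReal.ofReal_ne_top,
          lintegral_const_mul' _ _ ENNReal.ofReal_ne_top]
      _ ≤ _ := by
        gcongr
        exact le_iSup₂ (f := fun (a : ℂ) (_ : a ∈ Metric.ball (0:ℂ) 1) =>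
          ∫⁻ z in Metric.ball (0:ℂ) 1, ENNReal.ofReal (‖deriv (Tg g f) z‖ ^ 2 *
            (1 - ‖phi a z‖ ^ 2) ^ s) ∂dA) (a k) (by simpa using ha k)
  obtain ⟨n, hn⟩ := pow_unbounded_of_one_lt (C * J.toReal + 64 * M.toReal) (one_lt_two)
  have hk := key n
  rw [← ENNReal.ofReal_toReal hJ.ne, ← ENNReal.ofReal_toReal hM.ne,
    ← ENNReal.ofReal_mul (by positivity), ← ENNReal.ofReal_mul (by positivity),
    ← ENNReal.ofReal_add (by positivity) (by positivity),
    ENNReal.ofReal_le_ofReal_iff (by positivity)] at hk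
  have h8 : (8:ℝ) ^ n = 4 ^ n * 2 ^ n := by rw [← mul_pow]; norm_num
  have h4 : (1:ℝ) ≤ 4 ^ n := one_le_pow₀ (by norm_num)
  have hCJ : 0 ≤ C * J.toReal := by positivity
  have : (4:ℝ) ^ n * (C * J.toReal + 64 * M.toReal) < 4 ^ n * 2 ^ n := by gcongr
  nlinarith
end

section
/- Suppose 1 < p < ∞, let p' be the conjugate exponent of p, and let g be holomorphic on the unit disc D. Then the Volterra operator T_g maps the Besov space B^p into Q_1 (= BMOA) if and only if g ∈ Q_{1,log,1/p'}. -/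
open MeasureTheory Metric Complex Real Filter Set

section Aux

theorem aux_den_ne {a z : ℂ} (ha : a ∈ ball (0:ℂ) 1) (hz : z ∈ ball (0:ℂ) 1) :
    1 - (starRingEnd ℂ) a * z ≠ 0 := by
  intro h
  have h1 : (starRingEnd ℂ) a * z = 1 := (sub_eq_zero.mp h).symm
  have h2 : ‖a‖ * ‖z‖ = 1 := by
    have := congrArg norm h1
    simpa using this
  rw [mem_ball_zero_iff] at ha hz
  nlinarith [norm_nonneg a, norm_nonneg z]

theorem aux_one_sub {a z : ℂ} (ha : a ∈ ball (0:ℂ) 1) (hz : z ∈ ball (0:ℂ) 1) :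
    1 - ‖phi a z‖ ^ 2 = (1 - ‖a‖ ^ 2) * (1 - ‖z‖ ^ 2) / ‖1 - (starRingEnd ℂ) a * z‖ ^ 2 := by
  have h := aux_den_ne ha hz
  have h' : ‖1 - (starRingEnd ℂ) a * z‖ ^ 2 ≠ 0 := by positivity
  unfold phi
  rw [norm_div, div_pow, eq_div_iff h', sub_mul, div_mul_cancel₀ _ h']
  simp only [← Complex.normSq_eq_norm_sq, Complex.normSq_apply]
  simp
  ring

theorem aux_phi_mem {a z : ℂ} (ha : a ∈ ball (0:ℂ) 1) (hz : z ∈ ball (0:ℂ) 1) :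
    phi a z ∈ ball (0:ℂ) 1 := by
  have h := aux_one_sub ha hz
  have h1 := norm_pos_iff.mpr (aux_den_ne ha hz)
  rw [mem_ball_zero_iff] at *
  have : 0 < 1 - ‖phi a z‖ ^ 2 := by
    rw [h]
    have : ‖a‖ ^ 2 < 1 := by nlinarith [norm_nonneg a]
    have : ‖z‖ ^ 2 < 1 := by nlinarith [norm_nonneg z]
    apply div_pos (mul_pos (by linarith) (by linarith)) (by positivity)
  nlinarith [norm_nonneg (phi a z)]

theorem aux_conj_one_sub_pos {a : ℂ} (ha : a ∈ ball (0:ℂ) 1) :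
    1 - (starRingEnd ℂ) a * a ≠ 0 := aux_den_ne ha ha

theorem aux_phi_phi {a z : ℂ} (ha : a ∈ ball (0:ℂ) 1) (hz : z ∈ ball (0:ℂ) 1) :
    phi a (phi a z) = z := by
  have h := aux_den_ne ha hz
  have h2 := aux_den_ne ha ha
  have h3 : 1 - (starRingEnd ℂ) a * phi a z ≠ 0 := aux_den_ne ha (aux_phi_mem ha hz)
  have e : phi a z * (1 - (starRingEnd ℂ) a * z) = a - z := by
    unfold phi; rw [div_mul_cancel₀ _ h]
  conv_lhs => unfold phi
  change (a - phi a z) / (1 - (starRingEnd ℂ) a * phi a z) = z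
  rw [div_eq_iff h3]
  have := e
  linear_combination -e

theorem aux_phi_deriv {a z : ℂ} (ha : a ∈ ball (0:ℂ) 1) (hz : z ∈ ball (0:ℂ) 1) :
    HasDerivAt (phi a) (-(1 - (starRingEnd ℂ) a * a) / (1 - (starRingEnd ℂ) a * z) ^ 2) z := by
  have h := aux_den_ne ha hz
  have h1 : HasDerivAt (fun z : ℂ => a - z) (-1) z := by
    simpa using (hasDerivAt_id z).const_sub a
  have h2 : HasDerivAt (fun z : ℂ => 1 - (starRingEnd ℂ) a * z) (-(starRingEnd ℂ) a) z := by
    simpa using ((hasDerivAt_id z).const_mul ((starRingEnd ℂ) a)).const_sub 1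
  have := h1.div h2 h
  refine HasDerivAt.congr_deriv (f := phi a) this ?_
  congr 1
  ring

theorem aux_phi_deriv_norm {a z : ℂ} (ha : a ∈ ball (0:ℂ) 1) (hz : z ∈ ball (0:ℂ) 1) :
    ‖deriv (phi a) z‖ * (1 - ‖z‖ ^ 2) = 1 - ‖phi a z‖ ^ 2 := by
  rw [(aux_phi_deriv ha hz).deriv, aux_one_sub ha hz, norm_div, norm_neg, norm_pow]
  have : ‖1 - (starRingEnd ℂ) a * a‖ = 1 - ‖a‖ ^ 2 := by
    have e : (1 - (starRingEnd ℂ) a * a) = ((1 - ‖a‖ ^ 2 : ℝ) : ℂ) := by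
      rw [← Complex.normSq_eq_conj_mul_self, Complex.normSq_eq_norm_sq]; push_cast; ring
    rw [e, Complex.norm_real, Real.norm_of_nonneg]
    rw [mem_ball_zero_iff] at ha
    nlinarith [norm_nonneg a]
  rw [this]; ring

theorem aux_weight_comp {a b z : ℂ} (ha : a ∈ ball (0:ℂ) 1) (hb : b ∈ ball (0:ℂ) 1)
    (hz : z ∈ ball (0:ℂ) 1) :
    1 - ‖phi (phi a b) (phi a z)‖ ^ 2 = 1 - ‖phi b z‖ ^ 2 := by
  have hab := aux_phi_mem ha hb
  have haz := aux_phi_mem ha hz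
  rw [aux_one_sub hab haz, aux_one_sub ha hb, aux_one_sub ha hz, aux_one_sub hb hz]
  have n1 := aux_den_ne ha hb
  have n2 := aux_den_ne ha hz
  have n3 := aux_den_ne hb hz
  have n4 := aux_den_ne ha ha
  have n1' : 1 - a * (starRingEnd ℂ) b ≠ 0 := by
    intro h; apply n1
    have := congrArg (starRingEnd ℂ) h
    simpa using this
  have e : 1 - (starRingEnd ℂ) (phi a b) * phi a z
      = (1 - (starRingEnd ℂ) a * a) * (1 - (starRingEnd ℂ) b * z) /
        ((1 - a * (starRingEnd ℂ) b) * (1 - (starRingEnd ℂ) a * z)) := by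
    unfold phi
    simp only [map_div₀, map_sub, map_one, map_mul, Complex.conj_conj]
    have n1'' : 1 - (starRingEnd ℂ) b * a ≠ 0 := by rwa [mul_comm]
    field_simp
    ring
  have ea : ‖1 - (starRingEnd ℂ) a * a‖ = 1 - ‖a‖ ^ 2 := by
    have e : (1 - (starRingEnd ℂ) a * a) = ((1 - ‖a‖ ^ 2 : ℝ) : ℂ) := by
      rw [← Complex.normSq_eq_conj_mul_self, Complex.normSq_eq_norm_sq]; push_cast; ring
    rw [e, Complex.norm_real, Real.norm_of_nonneg]
    rw [mem_ball_zero_iff] at ha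
    nlinarith [norm_nonneg a]
  have eb : ‖1 - a * (starRingEnd ℂ) b‖ = ‖1 - (starRingEnd ℂ) a * b‖ := by
    rw [← Complex.norm_conj]; simp
  rw [e, norm_div, norm_mul, norm_mul, ea, eb]
  have p1 := norm_pos_iff.mpr n1
  have p2 := norm_pos_iff.mpr n2
  have p3 := norm_pos_iff.mpr n3
  have p4 := norm_pos_iff.mpr n4
  rw [ea] at p4
  have p5 : (1 - ‖a‖ ^ 2) ≠ 0 := p4.ne'
  field_simp

theorem aux_phi_image {a : ℂ} (ha : a ∈ ball (0:ℂ) 1) :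
    phi a '' ball (0:ℂ) 1 = ball (0:ℂ) 1 := by
  ext w
  constructor
  · rintro ⟨z, hz, rfl⟩
    exact aux_phi_mem ha hz
  · intro hw
    exact ⟨phi a w, aux_phi_mem ha hw, aux_phi_phi ha hw⟩

theorem aux_phi_inj {a : ℂ} (ha : a ∈ ball (0:ℂ) 1) : InjOn (phi a) (ball (0:ℂ) 1) := by
  intro z hz w hw h
  rw [← aux_phi_phi ha hz, h, aux_phi_phi ha hw]

theorem aux_det (c : ℂ) :
    (((ContinuousLinearMap.toSpanSingleton ℂ c : ℂ →L[ℂ] ℂ).restrictScalars ℝ).det) = ‖c‖ ^ 2 := by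
  rw [ContinuousLinearMap.det, ← LinearMap.det_toMatrix Complex.basisOneI,
    Matrix.det_fin_two]
  simp [LinearMap.toMatrix_apply, ← Complex.normSq_eq_norm_sq, Complex.normSq_apply]

/-- restricted area measure -/
theorem aux_lint_dA (s : Set ℂ) (h : ℂ → ENNReal) :
    ∫⁻ z in s, h z ∂dA = (ENNReal.ofReal π)⁻¹ * ∫⁻ z in s, h z := by
  unfold dA
  rw [Measure.restrict_smul, lintegral_smul_measure]
  rfl

theorem aux_change {a : ℂ} (ha : a ∈ ball (0:ℂ) 1) (h : ℂ → ENNReal) :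
    ∫⁻ z in ball (0:ℂ) 1, ENNReal.ofReal (‖deriv (phi a) z‖ ^ 2) * h (phi a z) ∂dA
      = ∫⁻ z in ball (0:ℂ) 1, h z ∂dA := by
  rw [aux_lint_dA, aux_lint_dA]
  congr 1
  conv_rhs => rw [← aux_phi_image ha]
  rw [lintegral_image_eq_lintegral_abs_det_fderiv_mul volume measurableSet_ball
    (f' := fun z => (ContinuousLinearMap.toSpanSingleton ℂ (deriv (phi a) z) :
      ℂ →L[ℂ] ℂ).restrictScalars ℝ) ?_ (aux_phi_inj ha)]
  · apply setLIntegral_congr_fun measurableSet_ball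
    intro z hz
    simp only [aux_det]
    rw [abs_of_nonneg (by positivity)]
  · intro z hz
    have := (aux_phi_deriv ha hz).differentiableAt.hasDerivAt.hasFDerivAt
    exact (this.restrictScalars ℝ).hasFDerivWithinAt

end Aux


section Aux2

theorem aux_polar (H : ℂ → ENNReal) (hH : Measurable H) :
    ∫⁻ z, H z = ∫⁻ r in Ioi (0:ℝ), ∫⁻ θ in Ioo (-π) π,
      ENNReal.ofReal r * H (circleMap 0 r θ) := by
  rw [← Complex.lintegral_comp_polarCoord_symm]
  have e : ∀ p : ℝ × ℝ, Complex.polarCoord.symm p = circleMap 0 p.1 p.2 := by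
    intro p
    simp [circleMap, Complex.exp_mul_I]
  simp only [e, smul_eq_mul]
  change ∫⁻ p in Ioi (0:ℝ) ×ˢ Ioo (-π) π, _ ∂(volume.prod volume) = _
  rw [setLIntegral_prod]
  apply Measurable.aemeasurable
  have : Measurable fun p : ℝ × ℝ => circleMap 0 p.1 p.2 := by
    unfold circleMap
    fun_prop
  exact (ENNReal.measurable_ofReal.comp measurable_fst).mul (hH.comp this)

theorem aux_circle_mean {h : ℂ → ℂ} (hh : DifferentiableOn ℂ h (ball 0 1)) {c : ℂ} {r : ℝ}
    (hr : 0 < r) (hc : closedBall c r ⊆ ball 0 1) {q : ℝ} (hq : 1 ≤ q) :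
    ENNReal.ofReal (‖h c‖ ^ q) * ENNReal.ofReal (2 * π) ≤
      ∫⁻ θ in Ioo (-π) π, ENNReal.ofReal (‖h (c + circleMap 0 r θ)‖ ^ q) := by
  have ecm : ∀ θ, c + circleMap 0 r θ = circleMap c r θ := by intro θ; simp [circleMap]
  simp only [ecm]
  have hmem : ∀ θ, circleMap c r θ ∈ ball (0:ℂ) 1 := fun θ =>
    hc (circleMap_mem_closedBall c hr.le θ)
  have hcont : Continuous fun θ => h (circleMap c r θ) :=
    hh.continuousOn.comp_continuous (continuous_circleMap c r) hmem
  have hmean : circleAverage h c r = h c := by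
    apply DiffContOnCl.circleAverage
    rw [abs_of_pos hr]
    apply DifferentiableOn.diffContOnCl
    rw [closure_ball _ hr.ne']
    exact hh.mono hc
  have hper : Function.Periodic (fun θ => h (circleMap c r θ)) (2 * π) := by
    intro θ
    simp [periodic_circleMap c r θ]
  have hcirc : ∫ θ in (0:ℝ)..(2 * π), h (circleMap c r θ) = ∫ θ in Ioo (-π) π, h (circleMap c r θ) := by
    have := hper.intervalIntegral_add_eq 0 (-π)
    rw [zero_add] at this
    rw [this, intervalIntegral.integral_of_le (by linarith [pi_pos]), integral_Ioc_eq_integral_Ioo]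
    congr 2
    ring_nf
  have hvol : volume (Ioo (-π) π) = ENNReal.ofReal (2 * π) := by
    rw [Real.volume_Ioo]; ring_nf
  have hvolr : volume.real (Ioo (-π) π) = 2 * π := by
    rw [Measure.real, hvol, ENNReal.toReal_ofReal (by positivity)]
  have hI1 : IntegrableOn (fun θ => ‖h (circleMap c r θ)‖) (Ioo (-π) π) :=
    (hcont.norm.integrableOn_Icc).mono_set Ioo_subset_Icc_self
  have hc2 : Continuous (fun θ => ‖h (circleMap c r θ)‖ ^ q) :=
    hcont.norm.rpow_const (fun _ => Or.inr (by linarith))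
  have hI2 : IntegrableOn (fun θ => ‖h (circleMap c r θ)‖ ^ q) (Ioo (-π) π) :=
    hc2.integrableOn_Icc.mono_set Ioo_subset_Icc_self
  have hle : ‖h c‖ ≤ ⨍ θ in Ioo (-π) π, ‖h (circleMap c r θ)‖ := by
    rw [setAverage_eq, hvolr, ← hmean, circleAverage_def, hcirc, norm_smul, smul_eq_mul,
      Real.norm_of_nonneg (by positivity)]
    gcongr
    exact norm_integral_le_integral_norm _
  have hJ := ConvexOn.map_set_average_le (μ := volume) (t := Ioo (-π) π)
    (f := fun θ => ‖h (circleMap c r θ)‖) (convexOn_rpow hq)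
    (continuousOn_id.rpow_const (fun _ _ => Or.inr (by linarith))) isClosed_Ici
    (by rw [hvol]; simp [pi_pos]) (by rw [hvol]; exact ENNReal.ofReal_ne_top) (by simp) hI1 hI2
  have h1 : ‖h c‖ ^ q ≤ ⨍ θ in Ioo (-π) π, ‖h (circleMap c r θ)‖ ^ q :=
    (Real.rpow_le_rpow (norm_nonneg _) hle (by linarith)).trans hJ
  rw [setAverage_eq, hvolr, smul_eq_mul] at h1
  rw [← ofReal_integral_eq_lintegral_ofReal hI2 (Eventually.of_forall fun θ => by positivity),
    ← ENNReal.ofReal_mul (by positivity)]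
  apply ENNReal.ofReal_le_ofReal
  have hpi : 0 < 2 * π := by positivity
  rw [inv_mul_eq_div, le_div_iff₀ hpi] at h1
  exact h1

theorem aux_meas {h : ℂ → ℂ} (hh : DifferentiableOn ℂ h (ball 0 1)) :
    Measurable ((ball (0:ℂ) 1).indicator h) := by
  classical
  have := hh.continuousOn.measurable_piecewise (g := fun _ => (0:ℂ)) continuousOn_const
    measurableSet_ball
  rwa [show (fun _ : ℂ => (0:ℂ)) = 0 from rfl, piecewise_eq_indicator] at this

theorem aux_submean {h : ℂ → ℂ} (hh : DifferentiableOn ℂ h (ball 0 1)) {c : ℂ} {r : ℝ}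
    (hr : 0 < r) (hc : closedBall c r ⊆ ball 0 1) {q : ℝ} (hq : 1 ≤ q) :
    ENNReal.ofReal (‖h c‖ ^ q) * ENNReal.ofReal (r ^ 2) ≤
      ∫⁻ w in ball c r, ENNReal.ofReal (‖h w‖ ^ q) ∂dA := by
  rw [aux_lint_dA]
  have hpi : ENNReal.ofReal π ≠ 0 := by simp [pi_pos]
  have hpi' : ENNReal.ofReal π ≠ ⊤ := by simp
  set k : ℂ → ℂ := (ball (0:ℂ) 1).indicator h with hk
  have hkm : Measurable k := aux_meas hh
  have e1 : ∫⁻ w in ball c r, ENNReal.ofReal (‖h w‖ ^ q)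
      = ∫⁻ u, (ball (0:ℂ) r).indicator (fun u => ENNReal.ofReal (‖k (c + u)‖ ^ q)) u := by
    rw [← lintegral_indicator measurableSet_ball,
      ← lintegral_add_left_eq_self _ c]
    congr 1
    ext u
    by_cases hu : u ∈ ball (0:ℂ) r
    · have hu' : c + u ∈ ball c r := by simpa using hu
      rw [indicator_of_mem hu, indicator_of_mem hu']
      rw [hk, indicator_of_mem (hc (ball_subset_closedBall hu'))]
    · have hu' : c + u ∉ ball c r := by simpa using hu
      rw [indicator_of_notMem hu, indicator_of_notMem hu']
  have e2 : ENNReal.ofReal (‖h c‖ ^ q) * ENNReal.ofReal (r ^ 2) = (ENNReal.ofReal π)⁻¹ *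
      ∫⁻ u, (ball (0:ℂ) r).indicator (fun u => ENNReal.ofReal (‖h c‖ ^ q)) u := by
    rw [lintegral_indicator measurableSet_ball, setLIntegral_const, Complex.volume_ball]
    have hpe : ((NNReal.pi : NNReal) : ENNReal) = ENNReal.ofReal π := by
      rw [← NNReal.coe_real_pi, ENNReal.ofReal_coe_nnreal]
    rw [← ENNReal.ofReal_pow hr.le, hpe]
    generalize ENNReal.ofReal (‖h c‖ ^ q) = A
    generalize ENNReal.ofReal (r ^ 2) = B
    rw [show (ENNReal.ofReal π)⁻¹ * (A * (B * ENNReal.ofReal π)) =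
      ((ENNReal.ofReal π)⁻¹ * ENNReal.ofReal π) * (A * B) by ring,
      ENNReal.inv_mul_cancel hpi hpi', one_mul]
  rw [e1, e2, aux_polar _ (measurable_const.indicator measurableSet_ball), aux_polar _ ?_]
  · refine mul_le_mul_right ?_ _
    apply setLIntegral_mono_ae' measurableSet_Ioi
    apply Eventually.of_forall
    intro ρ hρ
    have hρ : 0 < ρ := hρ
    by_cases hρr : ρ < r
    · have hb : ∀ θ, circleMap 0 ρ θ ∈ ball (0:ℂ) r := by
        intro θ; simp [abs_of_pos hρ, hρr]
      simp only [indicator_of_mem (hb _)]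
      rw [setLIntegral_const, Real.volume_Ioo, lintegral_const_mul' _ _ (by simp), mul_assoc]
      gcongr
      have hsub : closedBall c ρ ⊆ ball 0 1 := (closedBall_subset_closedBall hρr.le).trans hc
      have := aux_circle_mean hh hρ hsub hq
      have e3 : ∀ θ, k (c + circleMap 0 ρ θ) = h (c + circleMap 0 ρ θ) := by
        intro θ
        rw [hk, indicator_of_mem]
        apply hsub
        simp [abs_of_pos hρ]
      simp only [e3]
      rwa [show π - -π = 2 * π by ring]
    · have hb : ∀ θ, circleMap 0 ρ θ ∉ ball (0:ℂ) r := by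
        intro θ; simp [abs_of_pos hρ]; linarith
      simp only [indicator_of_notMem (hb _)]
      simp
  · apply Measurable.indicator _ measurableSet_ball
    apply ENNReal.measurable_ofReal.comp
    apply Measurable.pow_const
    exact (hkm.comp (measurable_const_add c)).norm

end Aux2


section Aux3

instance aux_sfinite : SFinite dA := by
  unfold dA
  infer_instance

theorem aux_rpow_comp {A B k : ℝ} (hA : 0 < A) (hB : 0 < B) (h1 : A ≤ 2 * B) (h2 : B ≤ 2 * A) :
    A ^ k ≤ 2 ^ |k| * B ^ k := by
  rcases le_total 0 k with hk | hk
  · rw [abs_of_nonneg hk, ← Real.mul_rpow (by norm_num) hB.le]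
    exact Real.rpow_le_rpow hA.le h1 hk
  · rw [abs_of_nonpos hk]
    have : (2:ℝ) ^ (-k) = (1/2) ^ k := by
      rw [one_div, Real.inv_rpow (by norm_num), Real.rpow_neg (by norm_num)]
    rw [this, ← Real.mul_rpow (by norm_num) hB.le]
    exact Real.rpow_le_rpow_of_nonpos (by positivity) (by linarith) hk

theorem aux_master (q e : ℝ) (hq : 1 ≤ q) : ∃ C : ℝ, 0 ≤ C ∧
    ∀ h : ℂ → ℂ, DifferentiableOn ℂ h (ball 0 1) → ∀ ζ : ℂ, ‖ζ‖ = 1 → ∀ R : ℝ, 0 ≤ R → R < 1 →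
    ∫⁻ s in Ioo 0 R, ENNReal.ofReal (‖h (s * ζ)‖ ^ q * (1 - s) ^ e) ≤
      ENNReal.ofReal C * ∫⁻ w in ball (0:ℂ) 1,
        {w : ℂ | ‖1 - (starRingEnd ℂ) w * (R * ζ)‖ ≤ 5 * (1 - ‖w‖)}.indicator
        (fun w => ENNReal.ofReal (‖h w‖ ^ q * (1 - ‖w‖) ^ (e - 1))) w ∂dA := by
  set K : ℝ := 2 ^ |e - 2| with hK
  have hKpos : 0 < K := by positivity
  refine ⟨8 * K, by positivity, ?_⟩
  intro h hh ζ hζ R hR0 hR1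
  set k : ℂ → ℂ := (ball (0:ℂ) 1).indicator h with hk
  have hkm : Measurable k := aux_meas hh
  set Γ : Set ℂ := {w : ℂ | ‖1 - (starRingEnd ℂ) w * (R * ζ)‖ ≤ 5 * (1 - ‖w‖)} with hΓ
  have hΓm : MeasurableSet Γ := by
    apply IsClosed.measurableSet
    apply isClosed_le
    · have := Complex.continuous_conj
      fun_prop
    · fun_prop
  set Φ : ℂ → ENNReal := Γ.indicator
    (fun w => ENNReal.ofReal (4 * K * (‖k w‖ ^ q * (1 - ‖w‖) ^ (e - 2)))) with hΦ
  have hΦm : Measurable Φ := by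
    apply Measurable.indicator _ hΓm
    apply ENNReal.measurable_ofReal.comp
    apply Measurable.const_mul
    apply (hkm.norm.pow_const q).mul
    apply Measurable.pow_const
    fun_prop
  set S : Set (ℝ × ℂ) := {x | |x.1 - ‖x.2‖| < 1 - ‖x.2‖} with hS
  have hSm : MeasurableSet S := by
    apply IsOpen.measurableSet
    apply isOpen_lt
    · fun_prop
    · fun_prop
  -- pointwise estimate
  have hpt : ∀ s ∈ Ioo 0 R, ENNReal.ofReal (‖h (s * ζ)‖ ^ q * (1 - s) ^ e) ≤
      ∫⁻ w in ball (0:ℂ) 1, S.indicator (fun x => Φ x.2) (s, w) ∂dA := by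
    intro s hs
    have hs1 : s < 1 := hs.2.trans hR1
    have hs0 : 0 < s := hs.1
    have hρ : 0 < (1 - s) / 2 := by linarith
    have hnorm : ‖(s:ℂ) * ζ‖ = s := by simp [hζ, abs_of_pos hs0]
    have hsub : closedBall ((s:ℂ) * ζ) ((1 - s) / 2) ⊆ ball 0 1 := by
      intro w hw
      rw [mem_closedBall, dist_eq_norm] at hw
      rw [mem_ball_zero_iff]
      have := norm_sub_norm_le w (s * ζ)
      rw [hnorm] at this
      linarith
    have hm := aux_submean hh hρ hsub hq
    have e1 : ENNReal.ofReal (‖h (s * ζ)‖ ^ q * (1 - s) ^ e) =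
        ENNReal.ofReal (4 * (1 - s) ^ (e - 2)) *
        (ENNReal.ofReal (‖h (s * ζ)‖ ^ q) * ENNReal.ofReal (((1 - s) / 2) ^ 2)) := by
      rw [← ENNReal.ofReal_mul (by positivity), ← ENNReal.ofReal_mul (by
        have : 0 < 1 - s := by linarith
        positivity)]
      congr 1
      have : (1 - s) ^ e = (1 - s) ^ (e - 2) * (1 - s) ^ 2 := by
        rw [← Real.rpow_natCast, ← Real.rpow_add (by linarith)]; congr 1; push_cast; ring
      rw [this]; ring
    rw [e1]
    refine (mul_le_mul_right hm _).trans ?_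
    rw [← lintegral_const_mul' _ _ ENNReal.ofReal_ne_top]
    have hbsub : ball ((s:ℂ) * ζ) ((1 - s) / 2) ⊆ ball (0:ℂ) 1 :=
      ball_subset_closedBall.trans hsub
    refine le_trans ?_ (lintegral_mono_set hbsub)
    apply setLIntegral_mono_ae' measurableSet_ball
    apply Eventually.of_forall
    intro w hw
    have hwD := hbsub hw
    rw [mem_ball, dist_eq_norm] at hw
    rw [mem_ball_zero_iff] at hwD
    have t1 := norm_sub_norm_le w (s * ζ)
    have t2 := norm_sub_norm_le (s * ζ) w
    rw [norm_sub_rev (s * ζ : ℂ) w] at t2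
    rw [hnorm] at t1 t2
    have hwS : (s, w) ∈ S := by
      simp only [hS, mem_ofPred_eq]
      rw [abs_lt]; constructor <;> linarith
    have hwΓ : w ∈ Γ := by
      simp only [hΓ, mem_ofPred_eq]
      have hsplit : 1 - (starRingEnd ℂ) w * (R * ζ) =
          ((1 - s * R : ℝ) : ℂ) - (starRingEnd ℂ) (w - s * ζ) * (R * ζ) := by
        have hzz : (starRingEnd ℂ) ζ * ζ = 1 := by
          rw [← Complex.normSq_eq_conj_mul_self, Complex.normSq_eq_norm_sq, hζ]; simp
        simp only [map_sub, map_mul, Complex.conj_ofReal]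
        push_cast
        linear_combination -(s * R : ℂ) * hzz
      rw [hsplit]
      have hsR : 0 ≤ 1 - s * R := by nlinarith
      have hsR2 : 1 - s * R ≤ 2 * (1 - s) := by nlinarith [hs.2]
      calc _ ≤ ‖((1 - s * R : ℝ) : ℂ)‖ + ‖(starRingEnd ℂ) (w - s * ζ) * (R * ζ)‖ := norm_sub_le _ _
        _ = (1 - s * R) + ‖w - s * ζ‖ * R := by
          rw [Complex.norm_real, Real.norm_of_nonneg hsR, norm_mul, Complex.norm_conj, norm_mul, hζ,
            Complex.norm_real, Real.norm_of_nonneg hR0, mul_one]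
        _ ≤ 2 * (1 - s) + (1 - s) / 2 := by nlinarith [norm_nonneg (w - s * ζ)]
        _ ≤ _ := by linarith
    rw [indicator_of_mem hwS, hΦ]
    simp only
    rw [indicator_of_mem hwΓ, hk, indicator_of_mem (mem_ball_zero_iff.mpr hwD),
      ← ENNReal.ofReal_mul (by
        have : 0 < 1 - s := by linarith
        positivity)]
    apply ENNReal.ofReal_le_ofReal
    have := aux_rpow_comp (A := 1 - s) (B := 1 - ‖w‖) (k := e - 2) (by linarith) (by linarith)
      (by linarith) (by linarith)
    rw [← hK] at this
    have hq0 : 0 ≤ ‖h w‖ ^ q := by positivity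
    nlinarith
  calc _ ≤ ∫⁻ s in Ioo 0 R, ∫⁻ w in ball (0:ℂ) 1, S.indicator (fun x => Φ x.2) (s, w) ∂dA := by
        apply setLIntegral_mono_ae' measurableSet_Ioo
        exact Eventually.of_forall hpt
    _ = ∫⁻ w in ball (0:ℂ) 1, (∫⁻ s in Ioo 0 R, S.indicator (fun x => Φ x.2) (s, w)) ∂dA := by
        apply lintegral_lintegral_swap
        apply Measurable.aemeasurable
        exact Measurable.indicator (hΦm.comp measurable_snd) hSm
    _ ≤ ∫⁻ w in ball (0:ℂ) 1, ENNReal.ofReal (8 * K) * Γ.indicator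
        (fun w => ENNReal.ofReal (‖h w‖ ^ q * (1 - ‖w‖) ^ (e - 1))) w ∂dA := by
        apply setLIntegral_mono_ae' measurableSet_ball
        apply Eventually.of_forall
        intro w hw
        have hw1 : ‖w‖ < 1 := mem_ball_zero_iff.mp hw
        calc _ ≤ ∫⁻ s, (Ioo (‖w‖ - (1 - ‖w‖)) (‖w‖ + (1 - ‖w‖))).indicator (fun _ => Φ w) s := by
              refine (setLIntegral_le_lintegral _ _).trans ?_
              apply lintegral_mono
              intro s
              by_cases hs : (s, w) ∈ S
              · have : s ∈ (Ioo (‖w‖ - (1 - ‖w‖)) (‖w‖ + (1 - ‖w‖))) := by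
                  simp only [hS, mem_ofPred_eq, abs_lt] at hs
                  constructor <;> linarith [hs.1, hs.2]
                simp only [indicator_of_mem hs, indicator_of_mem this]; exact le_rfl
              · simp only [indicator_of_notMem hs]; exact zero_le
          _ = Φ w * ENNReal.ofReal (2 * (1 - ‖w‖)) := by
              rw [lintegral_indicator measurableSet_Ioo, setLIntegral_const, Real.volume_Ioo]
              congr 2; ring
          _ ≤ _ := by
              by_cases hwΓ : w ∈ Γ
              · rw [hΦ, indicator_of_mem hwΓ, indicator_of_mem hwΓ, hk, indicator_of_mem hw]
                have : 0 < 1 - ‖w‖ := by linarith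
                rw [← ENNReal.ofReal_mul (by positivity), ← ENNReal.ofReal_mul (by positivity)]
                apply le_of_eq
                congr 1
                have : (1 - ‖w‖) ^ (e - 1) = (1 - ‖w‖) ^ (e - 2) * (1 - ‖w‖) := by
                  rw [← Real.rpow_add_one this.ne']; congr 1; ring
                rw [this]; ring
              · rw [hΦ, indicator_of_notMem hwΓ]; simp
    _ = _ := by rw [lintegral_const_mul' _ _ ENNReal.ofReal_ne_top]

end Aux3


section Aux4

theorem aux_ftc {G u : ℝ → ℝ} {A B : ℝ} (hAB : A ≤ B) (hd : ∀ s ∈ Icc A B, HasDerivAt G (u s) s)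
    (hc : ContinuousOn u (Icc A B)) (h0 : ∀ s ∈ Icc A B, 0 ≤ u s) :
    ∫⁻ s in Ioo A B, ENNReal.ofReal (u s) = ENNReal.ofReal (G B - G A) := by
  have hI : IntegrableOn u (Icc A B) := hc.integrableOn_Icc
  have hI2 : IntervalIntegrable u volume A B := by
    rw [intervalIntegrable_iff_integrableOn_Icc_of_le hAB]; exact hI
  rw [← ofReal_integral_eq_lintegral_ofReal (hI.mono_set Ioo_subset_Icc_self)]
  · rw [← integral_Ioc_eq_integral_Ioo, ← intervalIntegral.integral_of_le hAB,
      intervalIntegral.integral_eq_sub_of_hasDerivAt _ hI2]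
    intro s hs
    rw [uIcc_of_le hAB] at hs
    exact hd s hs
  · rw [EventuallyLE, ae_restrict_iff' measurableSet_Ioo]
    exact Eventually.of_forall fun s hs => h0 s (Ioo_subset_Icc_self hs)

theorem aux_int_log {R : ℝ} (h0 : 0 ≤ R) (h1 : R < 1) :
    ∫⁻ s in Ioo 0 R, ENNReal.ofReal ((1 - s) ^ (-1:ℝ)) = ENNReal.ofReal (Real.log (1 / (1 - R))) := by
  have := aux_ftc (G := fun s => -Real.log (1 - s)) (u := fun s => (1 - s) ^ (-1:ℝ)) h0 ?_ ?_ ?_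
  · rw [this]; simp
  · intro s hs
    have hs1 : 0 < 1 - s := by linarith [hs.2]
    have := (((hasDerivAt_id s).const_sub 1).log hs1.ne').neg
    refine this.congr_deriv ?_
    rw [Real.rpow_neg_one]; simp only [id]; ring
  · intro s hs
    have hs1 : 0 < 1 - s := by linarith [hs.2]
    apply ContinuousAt.continuousWithinAt
    exact ContinuousAt.rpow_const (by fun_prop) (Or.inl hs1.ne')
  · intro s hs
    have hs1 : 0 < 1 - s := by linarith [hs.2]
    positivity

theorem aux_int_pow {R θ : ℝ} (h0 : 0 ≤ R) (h1 : R < 1) (hθ : θ < 1) :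
    ∫⁻ s in Ioo 0 R, ENNReal.ofReal ((1 - s) ^ (-θ)) ≤ ENNReal.ofReal (1 / (1 - θ)) := by
  have hθ' : 0 < 1 - θ := by linarith
  have := aux_ftc (G := fun s => -((1 - s) ^ (1 - θ) / (1 - θ))) (u := fun s => (1 - s) ^ (-θ)) h0 ?_ ?_ ?_
  · rw [this]; apply ENNReal.ofReal_le_ofReal
    have : 0 ≤ (1 - R) ^ (1 - θ) / (1 - θ) := by
      have : 0 < 1 - R := by linarith
      positivity
    simp only [sub_zero, Real.one_rpow]
    linarith
  · intro s hs
    have hs1 : 0 < 1 - s := by linarith [hs.2]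
    have := ((((hasDerivAt_id s).const_sub 1).rpow_const (p := 1 - θ) (Or.inl hs1.ne')).div_const (1 - θ)).neg
    refine this.congr_deriv ?_
    simp only [id]
    rw [show 1 - θ - 1 = -θ by ring]
    field_simp
  · intro s hs
    have hs1 : 0 < 1 - s := by linarith [hs.2]
    apply ContinuousAt.continuousWithinAt
    exact ContinuousAt.rpow_const (by fun_prop) (Or.inl hs1.ne')
  · intro s hs
    have hs1 : 0 < 1 - s := by linarith [hs.2]
    positivity

theorem aux_growth {f : ℂ → ℂ} (hf : HolOn f) {ζ : ℂ} (hζ : ‖ζ‖ = 1) {R : ℝ} (h0 : 0 ≤ R)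
    (h1 : R < 1) {p p' : ℝ} (hpp : p.HolderConjugate p') (e : ℝ) :
    ENNReal.ofReal ‖f (R * ζ) - f 0‖ ≤
      (∫⁻ s in Ioo 0 R, ENNReal.ofReal (‖deriv f (s * ζ)‖ ^ p * (1 - s) ^ e)) ^ (1 / p) *
      (∫⁻ s in Ioo 0 R, ENNReal.ofReal ((1 - s) ^ (-(e / (p - 1))))) ^ (1 / p') := by
  have hp : 1 < p := hpp.lt
  have hdf : DifferentiableOn ℂ (deriv f) (ball 0 1) := hf.deriv isOpen_ball
  have hmem : ∀ s ∈ Icc 0 R, (s:ℂ) * ζ ∈ ball (0:ℂ) 1 := by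
    intro s hs
    rw [mem_ball_zero_iff]; simp [hζ, abs_of_nonneg hs.1]; linarith [hs.2]
  have hcont : ContinuousOn (fun s : ℝ => deriv f (s * ζ) * ζ) (Icc 0 R) := by
    apply ContinuousOn.mul _ continuousOn_const
    apply hdf.continuousOn.comp _ hmem
    fun_prop
  have hFTC : ∫ s in (0:ℝ)..R, deriv f (s * ζ) * ζ = f (R * ζ) - f 0 := by
    have := intervalIntegral.integral_eq_sub_of_hasDerivAt (a := 0) (b := R)
      (f := fun s : ℝ => f (s * ζ)) (f' := fun s : ℝ => deriv f (s * ζ) * ζ) ?_ ?_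
    · rw [this]; simp
    · intro s hs
      rw [uIcc_of_le h0] at hs
      have h2 : HasDerivAt f (deriv f (s * ζ)) ((s:ℂ) * ζ) :=
        (hf.differentiableAt (isOpen_ball.mem_nhds (hmem s hs))).hasDerivAt
      have h3 : HasDerivAt (fun s : ℝ => (s:ℂ) * ζ) ζ s := by
        simpa using (Complex.ofRealCLM.hasDerivAt (x := s)).mul_const ζ
      exact h2.comp s h3
    · rw [intervalIntegrable_iff_integrableOn_Icc_of_le h0]
      exact hcont.integrableOn_Icc
  have hmd : Measurable fun s : ℝ => ‖deriv f (s * ζ)‖ := by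
    apply Measurable.norm
    apply (measurable_deriv f).comp
    fun_prop
  have hmp : ∀ k : ℝ, Measurable fun s : ℝ => (1 - s) ^ k := by
    intro k
    apply Measurable.pow_const; fun_prop
  calc ENNReal.ofReal ‖f (R * ζ) - f 0‖ = ‖∫ s in (0:ℝ)..R, deriv f (s * ζ) * ζ‖ₑ := by
        rw [hFTC, ofReal_norm]
    _ ≤ ∫⁻ s in Ioo 0 R, ‖deriv f (s * ζ) * ζ‖ₑ := by
        rw [intervalIntegral.integral_of_le h0, integral_Ioc_eq_integral_Ioo]
        exact enorm_integral_le_lintegral_enorm _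
    _ = ∫⁻ s in Ioo 0 R, ((fun s : ℝ => ENNReal.ofReal (‖deriv f (s * ζ)‖ * (1 - s) ^ (e / p))) *
          (fun s : ℝ => ENNReal.ofReal ((1 - s) ^ (-(e / p))))) s := by
        apply setLIntegral_congr_fun measurableSet_Ioo
        intro s hs
        have hs1 : 0 < 1 - s := by linarith [hs.2]
        simp only [Pi.mul_apply]
        rw [← ENNReal.ofReal_mul (by positivity), ← ofReal_norm, mul_assoc,
          ← Real.rpow_add hs1, norm_mul, hζ]
        simp
    _ ≤ _ := by
        refine (ENNReal.lintegral_mul_le_Lp_mul_Lq _ hpp ?_ ?_).trans (le_of_eq ?_)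
        · apply Measurable.aemeasurable
          exact ENNReal.measurable_ofReal.comp (hmd.mul (hmp _))
        · apply Measurable.aemeasurable
          exact ENNReal.measurable_ofReal.comp (hmp _)
        · congr 2
          · apply setLIntegral_congr_fun measurableSet_Ioo
            intro s hs
            have hs1 : 0 < 1 - s := by linarith [hs.2]
            simp only
            rw [ENNReal.ofReal_rpow_of_nonneg (by positivity) (by linarith), Real.mul_rpow (by positivity)
              (by positivity), ← Real.rpow_mul hs1.le, div_mul_cancel₀ _ (by linarith)]
          · apply setLIntegral_congr_fun measurableSet_Ioo
            intro s hs
            have hs1 : 0 < 1 - s := by linarith [hs.2]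
            simp only
            rw [ENNReal.ofReal_rpow_of_nonneg (by positivity) hpp.symm.nonneg, ← Real.rpow_mul hs1.le]
            congr 2
            rw [hpp.conjugate_eq]
            have : p - 1 ≠ 0 := by linarith
            field_simp

theorem aux_polarform {z : ℂ} (hz : z ∈ ball (0:ℂ) 1) :
    ∃ ζ : ℂ, ‖ζ‖ = 1 ∧ z = ((‖z‖ : ℝ) : ℂ) * ζ := by
  by_cases h : z = 0
  · exact ⟨1, by simp, by simp [h]⟩
  · refine ⟨z / ‖z‖, ?_, ?_⟩
    · rw [norm_div]; simp [h]
    · have : ((‖z‖ : ℝ) : ℂ) ≠ 0 := by simpa using h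
      field_simp

theorem aux_growth_log {p p' : ℝ} (hpp : p.HolderConjugate p') {f : ℂ → ℂ} (hf : f ∈ Besov p) :
    ∃ C : ℝ, 0 ≤ C ∧ ∀ a ∈ ball (0:ℂ) 1, ‖f a‖ ≤ C * (Real.log (2 / (1 - ‖a‖))) ^ (1 / p') := by
  obtain ⟨hhol, hfin⟩ := hf
  obtain ⟨C, hC, hM⟩ := aux_master p (p - 1) hpp.lt.le
  have hp0 : 0 < p := hpp.pos
  have hp'0 : 0 < p' := hpp.symm.pos
  set N := ∫⁻ z in Metric.ball (0:ℂ) 1,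
      ENNReal.ofReal ((1 - ‖z‖) ^ (p - 2) * ‖deriv f z‖ ^ p) ∂dA with hN
  set B : ENNReal := (ENNReal.ofReal C * N) ^ (1 / p) with hB
  have hBtop : B ≠ ⊤ := by
    apply ENNReal.rpow_ne_top_of_nonneg (by positivity)
    exact ENNReal.mul_ne_top ENNReal.ofReal_ne_top hfin.ne
  have hlog2 : 0 < Real.log 2 := Real.log_pos (by norm_num)
  refine ⟨B.toReal + ‖f 0‖ / (Real.log 2) ^ (1 / p'), by positivity, ?_⟩
  intro a ha
  obtain ⟨ζ, hζ, haζ⟩ := aux_polarform ha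
  have ha1 : ‖a‖ < 1 := mem_ball_zero_iff.mp ha
  set R := ‖a‖ with hR
  have hR0 : 0 ≤ R := norm_nonneg a
  have hL : Real.log 2 ≤ Real.log (2 / (1 - R)) := by
    apply Real.log_le_log (by norm_num)
    rw [le_div_iff₀ (by linarith)]; linarith
  have hL0 : 0 < Real.log (2 / (1 - R)) := lt_of_lt_of_le hlog2 hL
  have hg := aux_growth hhol hζ hR0 ha1 hpp (p - 1)
  have hp1 : p - 1 ≠ 0 := by linarith [hpp.lt]
  rw [div_self hp1, aux_int_log hR0 ha1, ← haζ] at hg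
  have h2 : (∫⁻ s in Ioo 0 R, ENNReal.ofReal (‖deriv f (s * ζ)‖ ^ p * (1 - s) ^ (p - 1))) ^ (1 / p) ≤ B := by
    apply ENNReal.rpow_le_rpow _ (by positivity)
    refine (hM _ (hhol.deriv isOpen_ball) ζ hζ R hR0 ha1).trans ?_
    refine mul_le_mul_right ?_ _
    apply lintegral_mono
    intro w
    refine (indicator_le_self _ _ _).trans ?_
    apply le_of_eq
    rw [mul_comm]; congr 3; ring
  have h3 : (ENNReal.ofReal (Real.log (1 / (1 - R)))) ^ (1 / p') ≤
      ENNReal.ofReal ((Real.log (2 / (1 - R))) ^ (1 / p')) := by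
    rw [← ENNReal.ofReal_rpow_of_nonneg hL0.le (by positivity)]
    apply ENNReal.rpow_le_rpow _ (by positivity)
    apply ENNReal.ofReal_le_ofReal
    have : 0 < 1 - R := by linarith
    apply Real.log_le_log (by positivity)
    gcongr; norm_num
  have h4 : ‖f a - f 0‖ ≤ B.toReal * (Real.log (2 / (1 - R))) ^ (1 / p') := by
    rw [← ENNReal.ofReal_le_ofReal_iff (by positivity), ENNReal.ofReal_mul (by positivity),
      ENNReal.ofReal_toReal hBtop]
    exact hg.trans (mul_le_mul' h2 h3)
  have h5 : ‖f 0‖ ≤ ‖f 0‖ / (Real.log 2) ^ (1 / p') * (Real.log (2 / (1 - R))) ^ (1 / p') := by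
    rw [div_mul_eq_mul_div, le_div_iff₀ (by positivity)]
    gcongr
  have h6 : ‖f a‖ ≤ ‖f a - f 0‖ + ‖f 0‖ := by
    simpa using norm_add_le (f a - f 0) (f 0)
  rw [add_mul]; linarith

theorem aux_growth_q {q : ℝ} (hq : 2 ≤ q) : ∃ C : ℝ, 0 ≤ C ∧ ∀ f : ℂ → ℂ, HolOn f →
    ∀ z ∈ ball (0:ℂ) 1, ENNReal.ofReal (‖f z - f 0‖ ^ q) ≤ ENNReal.ofReal C *
      ∫⁻ w in ball (0:ℂ) 1, {w : ℂ | ‖1 - (starRingEnd ℂ) w * z‖ ≤ 5 * (1 - ‖w‖)}.indicator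
        (fun w => ENNReal.ofReal (‖deriv f w‖ ^ q * (1 - ‖w‖) ^ (q - 3))) w ∂dA := by
  obtain ⟨C, hC, hM⟩ := aux_master q (q - 2) (by linarith)
  have hpp := Real.HolderConjugate.conjExponent (p := q) (by linarith)
  set q' := Real.conjExponent q
  have hq' : 0 < q' := hpp.symm.pos
  refine ⟨C * (q - 1) ^ (q / q'), by
    have : 0 ≤ q - 1 := by linarith
    positivity, ?_⟩
  intro f hf z hz
  obtain ⟨ζ, hζ, hzζ⟩ := aux_polarform hz
  have hz1 : ‖z‖ < 1 := mem_ball_zero_iff.mp hz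
  have hg := aux_growth hf hζ (norm_nonneg z) hz1 hpp (q - 2)
  have hm := hM _ (hf.deriv isOpen_ball) ζ hζ ‖z‖ (norm_nonneg z) hz1
  rw [← hzζ] at hg hm
  rw [show q - 2 - 1 = q - 3 by ring] at hm
  have hθ : (q - 2) / (q - 1) < 1 := by
    rw [div_lt_one (by linarith)]; linarith
  have hi := aux_int_pow (norm_nonneg z) hz1 hθ
  have e : 1 / (1 - (q - 2) / (q - 1)) = q - 1 := by
    have : q - 1 ≠ 0 := by linarith
    field_simp
    ring
  rw [e] at hi
  rw [← ENNReal.ofReal_rpow_of_nonneg (norm_nonneg _) (by linarith)]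
  calc _ ≤ _ := ENNReal.rpow_le_rpow hg (by linarith : 0 ≤ q)
    _ ≤ _ := by
      rw [ENNReal.mul_rpow_of_nonneg _ _ (by linarith), ← ENNReal.rpow_mul, ← ENNReal.rpow_mul,
        one_div_mul_cancel (by linarith), ENNReal.rpow_one, ENNReal.ofReal_mul hC]
      rw [mul_assoc, mul_comm (ENNReal.ofReal ((q - 1) ^ (q / q'))), ← mul_assoc]
      refine mul_le_mul' hm ?_
      rw [← ENNReal.ofReal_rpow_of_nonneg (by linarith) (by positivity), one_div_mul_eq_div]
      exact ENNReal.rpow_le_rpow hi (by positivity)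

end Aux4


section Aux5

theorem aux_phi_zero (z : ℂ) : ‖phi 0 z‖ = ‖z‖ := by simp [phi]

theorem aux_key {q : ℝ} (hq : 2 ≤ q) : ∃ C : ℝ, 0 ≤ C ∧ ∀ G F : ℂ → ℂ, HolOn F →
    ∀ M : ENNReal, (∀ b ∈ ball (0:ℂ) 1, ∫⁻ z in ball (0:ℂ) 1,
      ENNReal.ofReal (‖deriv G z‖ ^ 2 * (1 - ‖phi b z‖ ^ 2)) ∂dA ≤ M) →
    ∫⁻ z in ball (0:ℂ) 1, ENNReal.ofReal (‖deriv G z‖ ^ 2 * (1 - ‖z‖ ^ 2)) *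
      ENNReal.ofReal (‖F z - F 0‖ ^ 2) ∂dA ≤
    M + ENNReal.ofReal C * M * ∫⁻ w in ball (0:ℂ) 1,
      ENNReal.ofReal (‖deriv F w‖ ^ q * (1 - ‖w‖ ^ 2) ^ (q - 2)) ∂dA := by
  obtain ⟨C₀, hC₀, hgr⟩ := aux_growth_q hq
  refine ⟨25 * C₀, by positivity, ?_⟩
  intro G F hF M hM
  set m : ℂ → ENNReal := fun z => ENNReal.ofReal (‖deriv G z‖ ^ 2 * (1 - ‖z‖ ^ 2)) with hm
  set Ψ : ℂ → ENNReal := fun w => ENNReal.ofReal (‖deriv F w‖ ^ q * (1 - ‖w‖) ^ (q - 3)) with hΨ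
  set S : Set (ℂ × ℂ) := {x | ‖1 - (starRingEnd ℂ) x.2 * x.1‖ ≤ 5 * (1 - ‖x.2‖)} with hS
  have hSm : MeasurableSet S := by
    apply IsClosed.measurableSet
    apply isClosed_le
    · have := Complex.continuous_conj
      fun_prop
    · fun_prop
  have hmm : Measurable m := by
    apply ENNReal.measurable_ofReal.comp
    apply Measurable.mul
    · exact (measurable_deriv G).norm.pow_const 2
    · fun_prop
  have hΨm : Measurable Ψ := by
    apply ENNReal.measurable_ofReal.comp
    apply Measurable.mul
    · exact (measurable_deriv F).norm.pow_const q
    · apply Measurable.pow_const; fun_prop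
  have hm0 : ∫⁻ z in ball (0:ℂ) 1, m z ∂dA ≤ M := by
    have := hM 0 (by simp)
    simpa only [aux_phi_zero] using this
  have step1 : ∀ z ∈ ball (0:ℂ) 1, m z * ENNReal.ofReal (‖F z - F 0‖ ^ 2) ≤
      m z + ENNReal.ofReal C₀ * ∫⁻ w in ball (0:ℂ) 1,
        S.indicator (fun x => m x.1 * Ψ x.2) (z, w) ∂dA := by
    intro z hz
    have h1 : ENNReal.ofReal (‖F z - F 0‖ ^ 2) ≤ 1 + ENNReal.ofReal (‖F z - F 0‖ ^ q) := by
      rw [← ENNReal.ofReal_one, ← ENNReal.ofReal_add (by norm_num) (by positivity)]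
      apply ENNReal.ofReal_le_ofReal
      have hx := norm_nonneg (F z - F 0)
      rcases le_total ‖F z - F 0‖ 1 with h | h
      · have : 0 ≤ ‖F z - F 0‖ ^ q := by positivity
        nlinarith
      · have : ‖F z - F 0‖ ^ (2:ℝ) ≤ ‖F z - F 0‖ ^ q := Real.rpow_le_rpow_of_exponent_le h hq
        rw [Real.rpow_two] at this
        linarith
    refine (mul_le_mul_right (h1.trans (add_le_add_right (hgr F hF z hz) _)) _).trans ?_
    rw [mul_add, mul_one, mul_left_comm, ← lintegral_const_mul' _ _ ENNReal.ofReal_ne_top]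
    gcongr with w
    by_cases hw : (z, w) ∈ S
    · have hw' : w ∈ {w : ℂ | ‖1 - (starRingEnd ℂ) w * z‖ ≤ 5 * (1 - ‖w‖)} := hw
      rw [indicator_of_mem hw, indicator_of_mem hw']
    · have hw' : w ∉ {w : ℂ | ‖1 - (starRingEnd ℂ) w * z‖ ≤ 5 * (1 - ‖w‖)} := hw
      rw [indicator_of_notMem hw, indicator_of_notMem hw']; simp
  have step2 : ∀ w ∈ ball (0:ℂ) 1, ∫⁻ z in ball (0:ℂ) 1,
      S.indicator (fun x => m x.1 * Ψ x.2) (z, w) ∂dA ≤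
      25 * M * ENNReal.ofReal (‖deriv F w‖ ^ q * (1 - ‖w‖ ^ 2) ^ (q - 2)) := by
    intro w hw
    have hw1 : ‖w‖ < 1 := mem_ball_zero_iff.mp hw
    have hw2 : 0 < 1 - ‖w‖ := by linarith
    calc _ ≤ ∫⁻ z in ball (0:ℂ) 1, (Ψ w * ENNReal.ofReal (25 * (1 - ‖w‖))) *
          ENNReal.ofReal (‖deriv G z‖ ^ 2 * (1 - ‖phi w z‖ ^ 2)) ∂dA := by
          apply setLIntegral_mono_ae' measurableSet_ball
          apply Eventually.of_forall
          intro z hz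
          by_cases hzS : (z, w) ∈ S
          · rw [indicator_of_mem hzS]
            simp only [hS, mem_ofPred_eq] at hzS
            change m z * Ψ w ≤ _
            rw [mul_comm (m z) (Ψ w), mul_assoc]
            refine mul_le_mul' le_rfl ?_
            rw [← ENNReal.ofReal_mul (by positivity)]
            apply ENNReal.ofReal_le_ofReal
            rw [aux_one_sub hw hz]
            have hd := norm_pos_iff.mpr (aux_den_ne hw hz)
            set d := ‖1 - (starRingEnd ℂ) w * z‖
            have hz1 : ‖z‖ < 1 := mem_ball_zero_iff.mp hz
            have hz2 : 0 ≤ 1 - ‖z‖ ^ 2 := by nlinarith [norm_nonneg z]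
            have hd2 : d ^ 2 ≤ 25 * (1 - ‖w‖) ^ 2 := by nlinarith
            have hd3 : d ^ 2 ≤ 25 * (1 - ‖w‖) * (1 - ‖w‖ ^ 2) := by
              nlinarith [mul_nonneg hw2.le (mul_nonneg (norm_nonneg w) hw2.le)]
            have : 1 ≤ 25 * (1 - ‖w‖) * (1 - ‖w‖ ^ 2) / d ^ 2 := by
              rw [le_div_iff₀ (by positivity)]; linarith
            calc _ = ‖deriv G z‖ ^ 2 * (1 - ‖z‖ ^ 2) * 1 := by ring
              _ ≤ ‖deriv G z‖ ^ 2 * (1 - ‖z‖ ^ 2) * (25 * (1 - ‖w‖) * (1 - ‖w‖ ^ 2) / d ^ 2) := by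
                gcongr
              _ = _ := by ring
          · rw [indicator_of_notMem hzS]; exact zero_le
      _ ≤ (Ψ w * ENNReal.ofReal (25 * (1 - ‖w‖))) * M := by
          rw [lintegral_const_mul' _ _ (ENNReal.mul_ne_top ENNReal.ofReal_ne_top ENNReal.ofReal_ne_top)]
          exact mul_le_mul_right (hM w hw) _
      _ ≤ (25 * ENNReal.ofReal (‖deriv F w‖ ^ q * (1 - ‖w‖ ^ 2) ^ (q - 2))) * M := by
          refine mul_le_mul_left ?_ _
          rw [hΨ, show (25:ENNReal) = ENNReal.ofReal 25 by simp]
          simp only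
          rw [← ENNReal.ofReal_mul (by positivity), ← ENNReal.ofReal_mul (by positivity)]
          apply ENNReal.ofReal_le_ofReal
          have e1 : (1 - ‖w‖) ^ (q - 2) = (1 - ‖w‖) ^ (q - 3) * (1 - ‖w‖) := by
            rw [← Real.rpow_add_one hw2.ne']; congr 1; ring
          have e2 : (1 - ‖w‖) ^ (q - 2) ≤ (1 - ‖w‖ ^ 2) ^ (q - 2) := by
            apply Real.rpow_le_rpow hw2.le _ (by linarith)
            nlinarith [norm_nonneg w]
          calc _ = 25 * (‖deriv F w‖ ^ q * (1 - ‖w‖) ^ (q - 2)) := by rw [e1]; ring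
            _ ≤ _ := by gcongr
      _ = _ := by ring
  calc _ ≤ ∫⁻ z in ball (0:ℂ) 1, (m z + ENNReal.ofReal C₀ * ∫⁻ w in ball (0:ℂ) 1,
        S.indicator (fun x => m x.1 * Ψ x.2) (z, w) ∂dA) ∂dA := by
        apply setLIntegral_mono_ae' measurableSet_ball
        exact Eventually.of_forall step1
    _ = (∫⁻ z in ball (0:ℂ) 1, m z ∂dA) + ENNReal.ofReal C₀ * ∫⁻ z in ball (0:ℂ) 1,
        ∫⁻ w in ball (0:ℂ) 1, S.indicator (fun x => m x.1 * Ψ x.2) (z, w) ∂dA ∂dA := by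
        rw [lintegral_add_left hmm, lintegral_const_mul' _ _ ENNReal.ofReal_ne_top]
    _ = (∫⁻ z in ball (0:ℂ) 1, m z ∂dA) + ENNReal.ofReal C₀ * ∫⁻ w in ball (0:ℂ) 1,
        ∫⁻ z in ball (0:ℂ) 1, S.indicator (fun x => m x.1 * Ψ x.2) (z, w) ∂dA ∂dA := by
        congr 2
        apply lintegral_lintegral_swap
        apply Measurable.aemeasurable
        exact Measurable.indicator ((hmm.comp measurable_fst).mul (hΨm.comp measurable_snd)) hSm
    _ ≤ M + ENNReal.ofReal C₀ * ∫⁻ w in ball (0:ℂ) 1,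
        25 * M * ENNReal.ofReal (‖deriv F w‖ ^ q * (1 - ‖w‖ ^ 2) ^ (q - 2)) ∂dA := by
        refine add_le_add hm0 (mul_le_mul_right ?_ _)
        apply setLIntegral_mono_ae' measurableSet_ball
        exact Eventually.of_forall step2
    _ = _ := by
        rw [lintegral_const_mul]
        · rw [ENNReal.ofReal_mul (by norm_num)]
          simp only [ENNReal.ofReal_ofNat]
          ring
        · apply ENNReal.measurable_ofReal.comp
          apply Measurable.mul
          · exact (measurable_deriv F).norm.pow_const q
          · apply Measurable.pow_const; fun_prop

theorem aux_key_mobius {q : ℝ} (hq : 2 ≤ q) : ∃ C : ℝ, 0 ≤ C ∧ ∀ g f : ℂ → ℂ, HolOn g → HolOn f →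
    ∀ M : ENNReal, (∀ b ∈ ball (0:ℂ) 1, ∫⁻ z in ball (0:ℂ) 1,
      ENNReal.ofReal (‖deriv g z‖ ^ 2 * (1 - ‖phi b z‖ ^ 2)) ∂dA ≤ M) → ∀ a ∈ ball (0:ℂ) 1,
    ∫⁻ z in ball (0:ℂ) 1, ENNReal.ofReal (‖deriv g z‖ ^ 2 * (1 - ‖phi a z‖ ^ 2)) *
      ENNReal.ofReal (‖f z - f a‖ ^ 2) ∂dA ≤
    M + ENNReal.ofReal C * M * ∫⁻ w in ball (0:ℂ) 1,
      ENNReal.ofReal (‖deriv f w‖ ^ q * (1 - ‖w‖ ^ 2) ^ (q - 2)) ∂dA := by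
  obtain ⟨C, hC, hk⟩ := aux_key hq
  refine ⟨C, hC, ?_⟩
  intro g f hg hf M hM a ha
  have hder : ∀ h : ℂ → ℂ, HolOn h → ∀ z ∈ ball (0:ℂ) 1,
      HasDerivAt (fun z => h (phi a z)) (deriv h (phi a z) * deriv (phi a) z) z := by
    intro h hh z hz
    have h1 : HasDerivAt h (deriv h (phi a z)) (phi a z) :=
      (hh.differentiableAt (isOpen_ball.mem_nhds (aux_phi_mem ha hz))).hasDerivAt
    have h2 := (aux_phi_deriv ha hz).differentiableAt.hasDerivAt
    exact h1.comp z h2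
  have hF : HolOn (fun z => f (phi a z)) := fun z hz =>
    (hder f hf z hz).differentiableAt.differentiableWithinAt
  have h0 : phi a 0 = a := by simp [phi]
  have key := hk (fun z => g (phi a z)) (fun z => f (phi a z)) hF M ?_
  · rw [← aux_change ha, ← aux_change ha (fun w => ENNReal.ofReal (‖deriv f w‖ ^ q * _))]
    convert key using 1
    · apply setLIntegral_congr_fun measurableSet_ball
      intro z hz
      simp only
      rw [(hder g hg z hz).deriv, aux_phi_phi ha hz, h0, ← mul_assoc, ← ENNReal.ofReal_mul (by positivity),
        norm_mul]
      congr 2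
      ring
    · congr 2
      apply setLIntegral_congr_fun measurableSet_ball
      intro z hz
      simp only
      rw [(hder f hf z hz).deriv, ← ENNReal.ofReal_mul (by positivity), norm_mul]
      congr 1
      have h1 := aux_phi_deriv_norm ha hz
      have hz1 : 0 < 1 - ‖z‖ ^ 2 := by
        have := mem_ball_zero_iff.mp hz
        nlinarith [norm_nonneg z]
      have hz2 : 0 < 1 - ‖phi a z‖ ^ 2 := by
        have := mem_ball_zero_iff.mp (aux_phi_mem ha hz)
        nlinarith [norm_nonneg (phi a z)]
      have hpos : 0 < ‖deriv (phi a) z‖ := by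
        by_contra hcon
        have : ‖deriv (phi a) z‖ = 0 := le_antisymm (not_lt.mp hcon) (norm_nonneg _)
        rw [this] at h1; linarith
      rw [← h1, Real.mul_rpow hpos.le hz1.le, Real.mul_rpow (norm_nonneg _) hpos.le]
      have e : ‖deriv (phi a) z‖ ^ q = ‖deriv (phi a) z‖ ^ (q - 2) * ‖deriv (phi a) z‖ ^ 2 := by
        rw [← Real.rpow_natCast, ← Real.rpow_add hpos]; congr 1; push_cast; ring
      rw [e]; ring
  · intro b hb
    refine le_trans (le_of_eq ?_) (hM (phi a b) (aux_phi_mem ha hb))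
    rw [← aux_change ha (fun z => ENNReal.ofReal (‖deriv g z‖ ^ 2 * (1 - ‖phi (phi a b) z‖ ^ 2)))]
    apply setLIntegral_congr_fun measurableSet_ball
    intro z hz
    simp only
    rw [(hder g hg z hz).deriv, ← ENNReal.ofReal_mul (by positivity), aux_weight_comp ha hb hz, norm_mul]
    congr 1
    ring

theorem aux_bloch {p : ℝ} (hp : 1 < p) {f : ℂ → ℂ} (hf : f ∈ Besov p) :
    ∃ B : ℝ, 0 ≤ B ∧ ∀ w ∈ ball (0:ℂ) 1, (1 - ‖w‖) * ‖deriv f w‖ ≤ B := by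
  obtain ⟨hhol, hfin⟩ := hf
  set N := ∫⁻ z in Metric.ball (0:ℂ) 1,
      ENNReal.ofReal ((1 - ‖z‖) ^ (p - 2) * ‖deriv f z‖ ^ p) ∂dA with hN
  set K : ℝ := 4 * 2 ^ |p - 2| with hK
  refine ⟨(K * N.toReal) ^ (1 / p), by positivity, ?_⟩
  intro w hw
  have hw1 : ‖w‖ < 1 := mem_ball_zero_iff.mp hw
  have hw2 : 0 < 1 - ‖w‖ := by linarith
  have hsub : closedBall w ((1 - ‖w‖) / 2) ⊆ ball 0 1 := by
    intro x hx
    rw [mem_closedBall, dist_eq_norm] at hx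
    rw [mem_ball_zero_iff]
    have := norm_sub_norm_le x w
    linarith
  have hbsub := ball_subset_closedBall.trans hsub
  have hs := aux_submean (hhol.deriv isOpen_ball) (by linarith : 0 < (1 - ‖w‖) / 2) hsub hp.le
  have h1 : ENNReal.ofReal (4 * (1 - ‖w‖) ^ (p - 2)) * ∫⁻ x in ball w ((1 - ‖w‖) / 2),
      ENNReal.ofReal (‖deriv f x‖ ^ p) ∂dA ≤ ENNReal.ofReal K * N := by
    rw [← lintegral_const_mul' _ _ ENNReal.ofReal_ne_top, hN,
      ← lintegral_const_mul' _ _ ENNReal.ofReal_ne_top]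
    refine le_trans ?_ (lintegral_mono_set hbsub)
    apply setLIntegral_mono_ae' measurableSet_ball
    apply Eventually.of_forall
    intro x hx
    have hx1 := mem_ball_zero_iff.mp (hbsub hx)
    rw [mem_ball, dist_eq_norm] at hx
    have t1 := norm_sub_norm_le x w
    have t2 := norm_sub_norm_le w x
    rw [norm_sub_rev w x] at t2
    rw [← ENNReal.ofReal_mul (by positivity), ← ENNReal.ofReal_mul (by positivity)]
    apply ENNReal.ofReal_le_ofReal
    have := aux_rpow_comp (A := 1 - ‖w‖) (B := 1 - ‖x‖) (k := p - 2) (by linarith) (by linarith)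
      (by linarith) (by linarith)
    calc _ ≤ 4 * (2 ^ |p - 2| * (1 - ‖x‖) ^ (p - 2)) * ‖deriv f x‖ ^ p := by gcongr
      _ = _ := by rw [hK]; ring
  have h2 : ENNReal.ofReal (((1 - ‖w‖) * ‖deriv f w‖) ^ p) ≤ ENNReal.ofReal (K * N.toReal) := by
    rw [ENNReal.ofReal_mul (by positivity), ENNReal.ofReal_toReal hfin.ne]
    refine le_trans (le_of_eq ?_) ((mul_le_mul_right hs _).trans h1)
    rw [← ENNReal.ofReal_mul (by positivity), ← ENNReal.ofReal_mul (by positivity),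
      Real.mul_rpow hw2.le (norm_nonneg _)]
    congr 1
    have : (1 - ‖w‖) ^ p = (1 - ‖w‖) ^ (p - 2) * (1 - ‖w‖) ^ 2 := by
      rw [← Real.rpow_natCast, ← Real.rpow_add hw2]; congr 1; push_cast; ring
    rw [this]; ring
  rw [ENNReal.ofReal_le_ofReal_iff (by positivity)] at h2
  rw [← Real.rpow_le_rpow_iff (z := p) (by positivity) (by positivity) (by linarith),
    ← Real.rpow_mul (by positivity), one_div_mul_cancel (by linarith), Real.rpow_one]
  exact h2

theorem aux_incl {p q : ℝ} (hp : 1 < p) (hpq : p ≤ q) (hq : 2 ≤ q) {f : ℂ → ℂ} (hf : f ∈ Besov p) :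
    ∫⁻ w in ball (0:ℂ) 1, ENNReal.ofReal (‖deriv f w‖ ^ q * (1 - ‖w‖ ^ 2) ^ (q - 2)) ∂dA < ⊤ := by
  obtain ⟨B, hB, hb⟩ := aux_bloch hp hf
  obtain ⟨hhol, hfin⟩ := hf
  calc _ ≤ ∫⁻ w in ball (0:ℂ) 1, ENNReal.ofReal (2 ^ (q - 2) * B ^ (q - p)) *
        ENNReal.ofReal ((1 - ‖w‖) ^ (p - 2) * ‖deriv f w‖ ^ p) ∂dA := by
        apply setLIntegral_mono_ae' measurableSet_ball
        apply Eventually.of_forall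
        intro w hw
        have hw1 : ‖w‖ < 1 := mem_ball_zero_iff.mp hw
        have hw2 : 0 < 1 - ‖w‖ := by linarith
        have hw3 : 0 ≤ 1 - ‖w‖ ^ 2 := by nlinarith [norm_nonneg w]
        rw [← ENNReal.ofReal_mul (by positivity)]
        apply ENNReal.ofReal_le_ofReal
        have e1 : (1 - ‖w‖ ^ 2) ^ (q - 2) ≤ 2 ^ (q - 2) * (1 - ‖w‖) ^ (q - 2) := by
          rw [← Real.mul_rpow (by norm_num) hw2.le]
          apply Real.rpow_le_rpow hw3 _ (by linarith)
          nlinarith [norm_nonneg w]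
        have e2 : (1 - ‖w‖) ^ (q - 2) = (1 - ‖w‖) ^ (p - 2) * (1 - ‖w‖) ^ (q - p) := by
          rw [← Real.rpow_add hw2]; congr 1; ring
        have e3 : ‖deriv f w‖ ^ q = ‖deriv f w‖ ^ p * ‖deriv f w‖ ^ (q - p) := by
          rw [← Real.rpow_add_of_nonneg (norm_nonneg _) (by linarith) (by linarith)]; congr 1; ring
        have e4 : (1 - ‖w‖) ^ (q - p) * ‖deriv f w‖ ^ (q - p) ≤ B ^ (q - p) := by
          rw [← Real.mul_rpow hw2.le (norm_nonneg _)]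
          exact Real.rpow_le_rpow (by positivity) (hb w hw) (by linarith)
        calc _ ≤ ‖deriv f w‖ ^ q * (2 ^ (q - 2) * (1 - ‖w‖) ^ (q - 2)) := by gcongr
          _ = 2 ^ (q - 2) * ((1 - ‖w‖) ^ (p - 2) * ‖deriv f w‖ ^ p) *
              ((1 - ‖w‖) ^ (q - p) * ‖deriv f w‖ ^ (q - p)) := by rw [e2, e3]; ring
          _ ≤ 2 ^ (q - 2) * ((1 - ‖w‖) ^ (p - 2) * ‖deriv f w‖ ^ p) * B ^ (q - p) := by gcongr
          _ = _ := by ring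
    _ < ⊤ := by
        rw [lintegral_const_mul' _ _ ENNReal.ofReal_ne_top]
        exact ENNReal.mul_lt_top ENNReal.ofReal_lt_top hfin

end Aux5


section Aux6

theorem aux_Tg {g f : ℂ → ℂ} (hg : HolOn g) (hf : HolOn f) :
    HolOn (Tg g f) ∧ ∀ z ∈ ball (0:ℂ) 1, deriv (Tg g f) z = deriv g z * f z := by
  have hdg : DifferentiableOn ℂ (deriv g) (ball 0 1) := hg.deriv isOpen_ball
  have hh : DifferentiableOn ℂ (fun z => deriv g z * f z) (ball (0:ℂ) 1) := hdg.mul hf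
  obtain ⟨H, hH0, hH⟩ := hh.isExactOn_ball.with_val_at 0 0
  have heq : ∀ z ∈ ball (0:ℂ) 1, Tg g f z = H z := by
    intro z hz
    have hz1 : ‖z‖ < 1 := mem_ball_zero_iff.mp hz
    have hmem : ∀ t ∈ Icc (0:ℝ) 1, (t:ℂ) * z ∈ ball (0:ℂ) 1 := by
      intro t ht
      rw [mem_ball_zero_iff, norm_mul, Complex.norm_real, Real.norm_of_nonneg ht.1]
      nlinarith [norm_nonneg z, ht.2]
    have hc : ContinuousOn (fun t : ℝ => deriv g ((t:ℂ) * z) * f ((t:ℂ) * z)) (Icc 0 1) := by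
      have := hh.continuousOn.comp (f := fun t : ℝ => (t:ℂ) * z) (s := Icc 0 1) (by fun_prop) hmem
      exact this
    have hder : ∀ t ∈ uIcc (0:ℝ) 1, HasDerivAt (fun t : ℝ => H ((t:ℂ) * z))
        (deriv g ((t:ℂ) * z) * f ((t:ℂ) * z) * z) t := by
      intro t ht
      rw [uIcc_of_le zero_le_one] at ht
      have h1 := hH _ (hmem t ht)
      have h2 : HasDerivAt (fun t : ℝ => (t:ℂ) * z) z t := by
        simpa using (Complex.ofRealCLM.hasDerivAt (x := t)).mul_const z
      exact h1.comp t h2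
    have := intervalIntegral.integral_eq_sub_of_hasDerivAt hder (by
      apply ContinuousOn.intervalIntegrable
      rw [uIcc_of_le zero_le_one]
      exact hc.mul continuousOn_const)
    rw [intervalIntegral.integral_mul_const] at this
    simp only [ofReal_one, one_mul, ofReal_zero, zero_mul, hH0, sub_zero] at this
    rw [Tg, mul_comm]; exact this
  have hd : ∀ z ∈ ball (0:ℂ) 1, HasDerivAt (Tg g f) (deriv g z * f z) z := by
    intro z hz
    refine (hH z hz).congr_of_eventuallyEq ?_
    filter_upwards [isOpen_ball.mem_nhds hz] with w hw using heq w hw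
  exact ⟨fun z hz => (hd z hz).differentiableAt.differentiableWithinAt, fun z hz => (hd z hz).deriv⟩

theorem aux_Lpos {a : ℂ} (ha : a ∈ ball (0:ℂ) 1) : Real.log 2 ≤ Real.log (2 / (1 - ‖a‖)) := by
  have h := mem_ball_zero_iff.mp ha
  apply Real.log_le_log (by norm_num)
  rw [le_div_iff₀ (by linarith)]
  nlinarith [norm_nonneg a]

theorem aux_suff {p p' : ℝ} (hpp : p.HolderConjugate p') {g : ℂ → ℂ}
    (hgQ : g ∈ QsLog 1 (1 / p')) : MapsInto (Tg g) (Besov p) (Qs 1) := by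
  intro f hf
  obtain ⟨hg, hK⟩ := hgQ
  have hfH : HolOn f := hf.1
  have hp : 1 < p := hpp.lt
  have hp' : 0 < p' := hpp.symm.pos
  obtain ⟨hT, hTd⟩ := aux_Tg hg hfH
  refine ⟨hT, ?_⟩
  simp only [Real.rpow_one] at hK ⊢
  set K := ⨆ a ∈ Metric.ball (0:ℂ) 1,
      (ENNReal.ofReal ((Real.log (2 / (1 - ‖a‖))) ^ (2 * (1 / p'))) *
        ∫⁻ z in Metric.ball (0:ℂ) 1,
          ENNReal.ofReal (‖deriv g z‖ ^ 2 * (1 - ‖phi a z‖ ^ 2)) ∂dA) with hKd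
  have hKa : ∀ a ∈ ball (0:ℂ) 1, ENNReal.ofReal ((Real.log (2 / (1 - ‖a‖))) ^ (2 * (1 / p'))) *
        ∫⁻ z in Metric.ball (0:ℂ) 1,
          ENNReal.ofReal (‖deriv g z‖ ^ 2 * (1 - ‖phi a z‖ ^ 2)) ∂dA ≤ K := fun a ha =>
    le_iSup₂ (f := fun (a:ℂ) (_ : a ∈ ball (0:ℂ) 1) =>
      ENNReal.ofReal ((Real.log (2 / (1 - ‖a‖))) ^ (2 * (1 / p'))) *
        ∫⁻ z in Metric.ball (0:ℂ) 1,
          ENNReal.ofReal (‖deriv g z‖ ^ 2 * (1 - ‖phi a z‖ ^ 2)) ∂dA) a ha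
  have hl2 : 0 < Real.log 2 := Real.log_pos (by norm_num)
  set c := ENNReal.ofReal ((Real.log 2) ^ (2 * (1 / p'))) with hc
  have hc0 : c ≠ 0 := by
    rw [hc, Ne, ENNReal.ofReal_eq_zero, not_le]; positivity
  set M := K / c with hMd
  have hMfin : M ≠ ⊤ := ENNReal.div_ne_top hK.ne hc0
  have hM : ∀ b ∈ ball (0:ℂ) 1, ∫⁻ z in ball (0:ℂ) 1,
      ENNReal.ofReal (‖deriv g z‖ ^ 2 * (1 - ‖phi b z‖ ^ 2)) ∂dA ≤ M := by
    intro b hb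
    rw [hMd, ENNReal.le_div_iff_mul_le (Or.inl hc0) (Or.inl ENNReal.ofReal_ne_top), mul_comm]
    refine le_trans (mul_le_mul' ?_ le_rfl) (hKa b hb)
    apply ENNReal.ofReal_le_ofReal
    exact Real.rpow_le_rpow hl2.le (aux_Lpos hb) (by positivity)
  obtain ⟨C, hC, hgrow⟩ := aux_growth_log hpp hf
  obtain ⟨C₁, hC₁, hkey⟩ := aux_key_mobius (q := max p 2) (le_max_right _ _)
  set N := ∫⁻ w in ball (0:ℂ) 1, ENNReal.ofReal (‖deriv f w‖ ^ (max p 2) *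
      (1 - ‖w‖ ^ 2) ^ (max p 2 - 2)) ∂dA with hN
  have hNfin : N < ⊤ := aux_incl hp (le_max_left _ _) (le_max_right _ _) hf
  refine lt_of_le_of_lt (b := ENNReal.ofReal (2 * C ^ 2) * K + 2 * (M + ENNReal.ofReal C₁ * M * N)) ?_ ?_
  · refine iSup₂_le fun a ha => ?_
    have hl : 0 < Real.log (2 / (1 - ‖a‖)) := hl2.trans_le (aux_Lpos ha)
    calc _ ≤ ∫⁻ z in ball (0:ℂ) 1, (ENNReal.ofReal (2 * C ^ 2) *
          ENNReal.ofReal ((Real.log (2 / (1 - ‖a‖))) ^ (2 * (1 / p')))) *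
            ENNReal.ofReal (‖deriv g z‖ ^ 2 * (1 - ‖phi a z‖ ^ 2)) +
          2 * (ENNReal.ofReal (‖deriv g z‖ ^ 2 * (1 - ‖phi a z‖ ^ 2)) *
            ENNReal.ofReal (‖f z - f a‖ ^ 2)) ∂dA := by
          apply setLIntegral_mono_ae' measurableSet_ball
          apply Eventually.of_forall
          intro z hz
          have hw : 0 ≤ 1 - ‖phi a z‖ ^ 2 := by
            have := mem_ball_zero_iff.mp (aux_phi_mem ha hz)
            nlinarith [norm_nonneg (phi a z)]
          rw [hTd z hz, show (2:ENNReal) = ENNReal.ofReal 2 by simp,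
            ← ENNReal.ofReal_mul (by positivity), ← ENNReal.ofReal_mul (by positivity),
            ← ENNReal.ofReal_mul (by positivity), ← ENNReal.ofReal_mul (by positivity),
            ← ENNReal.ofReal_add (by positivity) (by positivity)]
          apply ENNReal.ofReal_le_ofReal
          have h1 := hgrow a ha
          have h2 : ‖f a‖ ^ 2 ≤ C ^ 2 * (Real.log (2 / (1 - ‖a‖))) ^ (2 * (1 / p')) := by
            rw [mul_comm 2, Real.rpow_mul hl.le, Real.rpow_two, ← mul_pow]
            gcongr
          have h3 : ‖f z‖ ≤ ‖f a‖ + ‖f z - f a‖ := by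
            have := norm_add_le (f a) (f z - f a); simpa using this
          have h4 : ‖f z‖ ^ 2 ≤ 2 * ‖f a‖ ^ 2 + 2 * ‖f z - f a‖ ^ 2 := by
            nlinarith [norm_nonneg (f z), sq_nonneg (‖f a‖ - ‖f z - f a‖), norm_nonneg (f a),
              norm_nonneg (f z - f a)]
          rw [norm_mul]
          set X := ‖deriv g z‖ ^ 2 * (1 - ‖phi a z‖ ^ 2) with hX
          have hX0 : 0 ≤ X := by positivity
          calc _ = X * ‖f z‖ ^ 2 := by rw [hX]; ring
            _ ≤ X * (2 * (C ^ 2 * (Real.log (2 / (1 - ‖a‖))) ^ (2 * (1 / p'))) +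
                2 * ‖f z - f a‖ ^ 2) := by
                apply mul_le_mul_of_nonneg_left _ hX0
                linarith
            _ = _ := by ring
      _ ≤ _ := by
          rw [lintegral_add_left]
          · rw [lintegral_const_mul' _ _ (ENNReal.mul_ne_top ENNReal.ofReal_ne_top
              ENNReal.ofReal_ne_top), lintegral_const_mul' _ _ (by simp), mul_assoc]
            gcongr
            · exact hKa a ha
            · exact hkey g f hg hfH M hM a ha
          · apply Measurable.const_mul
            apply ENNReal.measurable_ofReal.comp
            apply Measurable.mul
            · exact (measurable_deriv g).norm.pow_const 2
            · unfold phi; fun_prop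
  · have := hK.ne
    have := hNfin.ne
    exact lt_top_iff_ne_top.mpr (by finiteness)

end Aux6


section Aux7

theorem aux_circ_lower {ρ θ : ℝ} (h0 : 0 ≤ ρ) (h1 : ρ < 1) (hθ : |θ| ≤ π) :
    (1 - ρ) + |θ| ≤ 8 * ‖1 - circleMap 0 ρ θ‖ := by
  have hn : ‖circleMap 0 ρ θ‖ = ρ := by simp [abs_of_nonneg h0]
  have e1 : 1 - ρ ≤ ‖1 - circleMap 0 ρ θ‖ := by
    have := norm_sub_norm_le 1 (circleMap 0 ρ θ)
    rw [hn] at this; simpa using this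
  have hpi := Real.pi_gt_three
  have hpi2 := Real.pi_lt_d2
  have e2 : |θ| ≤ 2 * π * ‖1 - circleMap 0 ρ θ‖ := by
    rcases lt_or_ge ρ (1/2) with h | h
    · nlinarith
    · have hsq : ‖1 - circleMap 0 ρ θ‖ ^ 2 = (1 - ρ) ^ 2 + 2 * ρ * (1 - Real.cos θ) := by
        rw [← Complex.normSq_eq_norm_sq, Complex.normSq_apply]
        have hre : (circleMap 0 ρ θ).re = ρ * Real.cos θ := by
          simp [circleMap, Complex.exp_ofReal_mul_I_re, Complex.exp_ofReal_mul_I_im]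
        have him : (circleMap 0 ρ θ).im = ρ * Real.sin θ := by
          simp [circleMap, Complex.exp_ofReal_mul_I_re, Complex.exp_ofReal_mul_I_im]
        rw [Complex.sub_re, Complex.sub_im, hre, him, Complex.one_re, Complex.one_im]
        nlinarith [Real.sin_sq_add_cos_sq θ]
      have hcos := Real.cos_le_one_sub_mul_cos_sq hθ
      have hq : 0 ≤ 2 / π ^ 2 * θ ^ 2 := by positivity
      have h3 : 2 / π ^ 2 * θ ^ 2 ≤ ‖1 - circleMap 0 ρ θ‖ ^ 2 := by
        rw [hsq]; nlinarith [sq_nonneg (1 - ρ)]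
      have h4 : θ ^ 2 ≤ (2 * π * ‖1 - circleMap 0 ρ θ‖) ^ 2 := by
        have : θ ^ 2 = π ^ 2 / 2 * (2 / π ^ 2 * θ ^ 2) := by field_simp
        rw [this, mul_pow]
        nlinarith [mul_le_mul_of_nonneg_left h3 (by positivity : 0 ≤ π ^ 2 / 2),
          mul_nonneg (sq_nonneg π) (sq_nonneg ‖1 - circleMap 0 ρ θ‖)]
      exact abs_le_of_sq_le_sq h4 (by positivity)
  nlinarith [norm_nonneg (1 - circleMap 0 ρ θ)]

theorem aux_circ_int {p : ℝ} (hp : 1 < p) {ρ : ℝ} (h0 : 0 ≤ ρ) (h1 : ρ < 1) :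
    ∫⁻ θ in Ioo (-π) π, ENNReal.ofReal (‖1 - circleMap 0 ρ θ‖ ^ (-p)) ≤
      ENNReal.ofReal (8 ^ p * (2 / (p - 1)) * (1 - ρ) ^ (1 - p)) := by
  have hδ : 0 < 1 - ρ := by linarith
  set δ := 1 - ρ with hδd
  have hp1 : 0 < p - 1 := by linarith
  have hpi := Real.pi_pos
  have hpos : ∀ s ∈ Icc 0 π, 0 < δ + s := fun s hs => by linarith [hs.1]
  have hpos' : ∀ s ∈ Icc (-π) 0, 0 < δ - s := fun s hs => by linarith [hs.2]
  have i1 : ∫⁻ θ in Ioo 0 π, ENNReal.ofReal ((δ + θ) ^ (-p)) ≤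
      ENNReal.ofReal (δ ^ (1 - p) / (p - 1)) := by
    rw [aux_ftc (G := fun s => -((δ + s) ^ (1 - p) / (p - 1))) hpi.le]
    · apply ENNReal.ofReal_le_ofReal
      have : 0 ≤ (δ + π) ^ (1 - p) / (p - 1) := by positivity
      simp only [add_zero]; linarith
    · intro s hs
      have := ((((hasDerivAt_id s).const_add δ).rpow_const (p := 1 - p)
        (Or.inl (hpos s hs).ne')).div_const (p - 1)).neg
      refine this.congr_deriv ?_
      simp only [id]
      rw [show 1 - p - 1 = -p by ring]; field_simp; ring
    · apply ContinuousOn.rpow_const (by fun_prop)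
      intro s hs; exact Or.inl (hpos s hs).ne'
    · intro s hs; exact Real.rpow_nonneg (hpos s hs).le _
  have i2 : ∫⁻ θ in Ioo (-π) 0, ENNReal.ofReal ((δ - θ) ^ (-p)) ≤
      ENNReal.ofReal (δ ^ (1 - p) / (p - 1)) := by
    rw [aux_ftc (G := fun s => (δ - s) ^ (1 - p) / (p - 1)) (by linarith)]
    · apply ENNReal.ofReal_le_ofReal
      have : 0 ≤ (δ - -π) ^ (1 - p) / (p - 1) := by
        have : 0 < δ - -π := by linarith
        positivity
      simp only [sub_zero]; linarith
    · intro s hs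
      have := ((((hasDerivAt_id s).const_sub δ).rpow_const (p := 1 - p)
        (Or.inl (hpos' s hs).ne')).div_const (p - 1))
      refine this.congr_deriv ?_
      simp only [id]
      rw [show 1 - p - 1 = -p by ring]; field_simp; ring
    · apply ContinuousOn.rpow_const (by fun_prop)
      intro s hs; exact Or.inl (hpos' s hs).ne'
    · intro s hs; exact Real.rpow_nonneg (hpos' s hs).le _
  have hpt : ∀ θ ∈ Ioo (-π) π, ENNReal.ofReal (‖1 - circleMap 0 ρ θ‖ ^ (-p)) ≤
      ENNReal.ofReal (8 ^ p) * ENNReal.ofReal ((δ + |θ|) ^ (-p)) := by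
    intro θ hθ
    have hl := aux_circ_lower h0 h1 (abs_le.mpr ⟨hθ.1.le, hθ.2.le⟩)
    rw [← hδd] at hl
    have hs : 0 < δ + |θ| := by positivity
    have hn : 0 < ‖1 - circleMap 0 ρ θ‖ := by linarith
    rw [← ENNReal.ofReal_mul (by positivity)]
    apply ENNReal.ofReal_le_ofReal
    have h3 : (8 * ‖1 - circleMap 0 ρ θ‖) ^ (-p) ≤ (δ + |θ|) ^ (-p) :=
      Real.rpow_le_rpow_of_nonpos hs hl (by linarith)
    rw [Real.mul_rpow (by norm_num) hn.le] at h3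
    calc _ = 8 ^ p * (8 ^ (-p) * ‖1 - circleMap 0 ρ θ‖ ^ (-p)) := by
          rw [← mul_assoc, ← Real.rpow_add (by norm_num)]; simp
      _ ≤ _ := by gcongr
  calc _ ≤ ∫⁻ θ in Ioo (-π) π, ENNReal.ofReal (8 ^ p) * ENNReal.ofReal ((δ + |θ|) ^ (-p)) :=
        setLIntegral_mono_ae' measurableSet_Ioo (Eventually.of_forall hpt)
    _ = ENNReal.ofReal (8 ^ p) * ∫⁻ θ in Ioo (-π) π, ENNReal.ofReal ((δ + |θ|) ^ (-p)) :=
        lintegral_const_mul' _ _ ENNReal.ofReal_ne_top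
    _ ≤ ENNReal.ofReal (8 ^ p) * (ENNReal.ofReal (δ ^ (1 - p) / (p - 1)) +
          ENNReal.ofReal (δ ^ (1 - p) / (p - 1))) := by
        refine mul_le_mul' le_rfl ?_
        have hsub : Ioo (-π) π ⊆ (Ioo (-π) 0 ∪ Ioo 0 π) ∪ {0} := by
          intro x hx
          rcases lt_trichotomy x 0 with h | h | h
          · exact Or.inl (Or.inl ⟨hx.1, h⟩)
          · exact Or.inr h
          · exact Or.inl (Or.inr ⟨h, hx.2⟩)
        refine (lintegral_mono_set hsub).trans ((lintegral_union_le _ _ _).trans ?_)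
        rw [show ∫⁻ θ in ({0}:Set ℝ), ENNReal.ofReal ((δ + |θ|) ^ (-p)) = 0 from
          setLIntegral_measure_zero _ _ (by simp), add_zero]
        refine (lintegral_union_le _ _ _).trans (add_le_add ?_ ?_)
        · refine le_trans (le_of_eq ?_) i2
          apply setLIntegral_congr_fun measurableSet_Ioo
          intro s hs
          simp only
          rw [abs_of_neg hs.2]; rfl
        · refine le_trans (le_of_eq ?_) i1
          apply setLIntegral_congr_fun measurableSet_Ioo
          intro s hs
          simp only
          rw [abs_of_pos hs.1]
    _ = _ := by
        rw [← ENNReal.ofReal_add (by positivity) (by positivity), ← ENNReal.ofReal_mul (by positivity)]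
        congr 1; ring

theorem aux_int_end {p : ℝ} (hp : 1 < p) {t : ℝ} (h1 : t < 1) :
    ∫⁻ r in Ioo t 1, ENNReal.ofReal ((1 - r) ^ (p - 2)) =
      ENNReal.ofReal ((1 - t) ^ (p - 1) / (p - 1)) := by
  have hI : IntervalIntegrable (fun r : ℝ => (1 - r) ^ (p - 2)) volume t 1 := by
    have := (intervalIntegral.intervalIntegrable_rpow' (a := 1 - t) (b := 0)
      (r := p - 2) (by linarith)).comp_sub_left 1
    simpa using this
  rw [← ofReal_integral_eq_lintegral_ofReal]
  · rw [← integral_Ioc_eq_integral_Ioo, ← intervalIntegral.integral_of_le h1.le,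
      intervalIntegral.integral_comp_sub_left (fun x => x ^ (p - 2)) 1, integral_rpow]
    · have : p - 2 + 1 = p - 1 := by ring
      rw [this, sub_self, Real.zero_rpow (by linarith), sub_zero]
    · left; linarith
  · exact ((intervalIntegrable_iff_integrableOn_Ioo_of_le h1.le).mp hI)
  · refine (ae_restrict_iff' measurableSet_Ioo).mpr (Eventually.of_forall fun r hr => ?_)
    exact Real.rpow_nonneg (by linarith [hr.2]) _

theorem aux_radial {p : ℝ} (hp : 1 < p) {t : ℝ} (h0 : 0 ≤ t) (h1 : t < 1) :
    ∫⁻ r in Ioo 0 1, ENNReal.ofReal ((1 - r) ^ (p - 2) * (1 - t * r) ^ (1 - p)) ≤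
      ENNReal.ofReal (Real.log (1 / (1 - t)) + 1 / (p - 1)) := by
  have hε : 0 < 1 - t := by linarith
  have hsub : Ioo (0:ℝ) 1 ⊆ (Ioo 0 t ∪ Ioo t 1) ∪ {t} := by
    intro x hx
    rcases lt_trichotomy x t with h | h | h
    · exact Or.inl (Or.inl ⟨hx.1, h⟩)
    · exact Or.inr h
    · exact Or.inl (Or.inr ⟨h, hx.2⟩)
  refine (lintegral_mono_set hsub).trans ((lintegral_union_le _ _ _).trans ?_)
  rw [show ∫⁻ r in ({t}:Set ℝ), ENNReal.ofReal ((1 - r) ^ (p - 2) * (1 - t * r) ^ (1 - p)) = 0 from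
    setLIntegral_measure_zero _ _ (by simp), add_zero]
  have hlog : 0 ≤ Real.log (1 / (1 - t)) := by
    apply Real.log_nonneg; rw [le_div_iff₀ hε]; linarith
  rw [ENNReal.ofReal_add hlog (by
    have : 0 < p - 1 := by linarith
    positivity)]
  refine (lintegral_union_le _ _ _).trans (add_le_add ?_ ?_)
  · rw [← aux_int_log h0 h1]
    apply setLIntegral_mono_ae' measurableSet_Ioo
    refine Eventually.of_forall fun r hr => ?_
    apply ENNReal.ofReal_le_ofReal
    have hr1 : 0 < 1 - r := by linarith [hr.2]
    have : (1 - t * r) ^ (1 - p) ≤ (1 - r) ^ (1 - p) :=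
      Real.rpow_le_rpow_of_nonpos hr1 (by nlinarith [hr.1]) (by linarith)
    calc _ ≤ (1 - r) ^ (p - 2) * (1 - r) ^ (1 - p) := by gcongr
      _ = _ := by rw [← Real.rpow_add hr1]; congr 1; ring
  · calc _ ≤ ∫⁻ r in Ioo t 1, ENNReal.ofReal ((1 - t) ^ (1 - p)) * ENNReal.ofReal ((1 - r) ^ (p - 2)) := by
          apply setLIntegral_mono_ae' measurableSet_Ioo
          refine Eventually.of_forall fun r hr => ?_
          rw [← ENNReal.ofReal_mul (by positivity)]
          apply ENNReal.ofReal_le_ofReal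
          have hr1 : 0 < 1 - r := by linarith [hr.2]
          have : (1 - t * r) ^ (1 - p) ≤ (1 - t) ^ (1 - p) :=
            Real.rpow_le_rpow_of_nonpos hε (by nlinarith [hr.2]) (by linarith)
          rw [mul_comm]
          gcongr
      _ = ENNReal.ofReal (1 / (p - 1)) := by
          rw [lintegral_const_mul' _ _ ENNReal.ofReal_ne_top, aux_int_end hp h1,
            ← ENNReal.ofReal_mul (by positivity)]
          congr 1
          rw [← mul_div_assoc, ← Real.rpow_add hε]; simp
      _ ≤ _ := le_rfl

theorem aux_test_int {p : ℝ} (hp : 1 < p) : ∃ C : ℝ, 0 ≤ C ∧ ∀ a ∈ ball (0:ℂ) 1,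
    ∫⁻ z in ball (0:ℂ) 1, ENNReal.ofReal ((1 - ‖z‖) ^ (p - 2) *
      ‖1 - (starRingEnd ℂ) a * z‖ ^ (-p)) ∂dA ≤
      ENNReal.ofReal (C * Real.log (2 / (1 - ‖a‖))) := by
  have hp1 : 0 < p - 1 := by linarith
  have hl2 : 0 < Real.log 2 := Real.log_pos (by norm_num)
  have hpi := Real.pi_pos
  set A : ℝ := 8 ^ p * (2 / (p - 1)) with hA
  have hA0 : 0 ≤ A := by positivity
  refine ⟨π⁻¹ * (A * (1 + 1 / (p - 1) / Real.log 2)), by positivity, ?_⟩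
  intro a ha
  obtain ⟨ζ, hζ, haζ⟩ := aux_polarform ha
  set t := ‖a‖ with ht
  have ht0 : 0 ≤ t := norm_nonneg a
  have ht1 : t < 1 := mem_ball_zero_iff.mp ha
  set H : ℂ → ENNReal := (ball (0:ℂ) 1).indicator (fun z => ENNReal.ofReal ((1 - ‖z‖) ^ (p - 2) *
      ‖1 - (t:ℂ) * z‖ ^ (-p))) with hH
  have hHm : Measurable H := by
    apply Measurable.indicator _ measurableSet_ball
    apply ENNReal.measurable_ofReal.comp
    apply Measurable.mul
    · apply Measurable.pow_const; fun_prop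
    · apply Measurable.pow_const; fun_prop
  have hu : ‖(starRingEnd ℂ) ζ‖ = 1 := by simp [hζ]
  obtain ⟨u, hu'⟩ : ∃ u : Circle, (u : ℂ) = (starRingEnd ℂ) ζ :=
    ⟨⟨(starRingEnd ℂ) ζ, mem_sphere_zero_iff_norm.mpr hu⟩, rfl⟩
  set R := rotation u with hR
  have hRz : ∀ z, R z = (starRingEnd ℂ) ζ * z := fun z => by rw [hR, rotation_apply, hu']
  have h1 : ∫⁻ z in ball (0:ℂ) 1, ENNReal.ofReal ((1 - ‖z‖) ^ (p - 2) *
      ‖1 - (starRingEnd ℂ) a * z‖ ^ (-p)) = ∫⁻ z, H z := by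
    rw [← (R.measurePreserving).lintegral_comp hHm, ← lintegral_indicator measurableSet_ball]
    congr 1
    ext z
    have hn : ‖R z‖ = ‖z‖ := R.norm_map z
    by_cases hz : z ∈ ball (0:ℂ) 1
    · have hz' : R z ∈ ball (0:ℂ) 1 := by
        rw [mem_ball_zero_iff] at hz ⊢; rwa [hn]
      rw [hH, indicator_of_mem hz, indicator_of_mem hz', hn, hRz]
      congr 4
      rw [haζ]; simp; ring
    · have hz' : R z ∉ ball (0:ℂ) 1 := by
        rw [mem_ball_zero_iff] at hz ⊢; rwa [hn]
      rw [hH, indicator_of_notMem hz, indicator_of_notMem hz']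
  have h2 : ∫⁻ z, H z ≤ ENNReal.ofReal (A * (Real.log (1 / (1 - t)) + 1 / (p - 1))) := by
    rw [aux_polar H hHm]
    calc _ ≤ ∫⁻ r in Ioi (0:ℝ), (Iio 1).indicator (fun r => ENNReal.ofReal A *
          ENNReal.ofReal ((1 - r) ^ (p - 2) * (1 - t * r) ^ (1 - p))) r := by
          apply setLIntegral_mono_ae' measurableSet_Ioi
          refine Eventually.of_forall fun r hr => ?_
          have hr0 : 0 < r := hr
          have hnorm : ∀ θ, ‖circleMap 0 r θ‖ = r := fun θ => by simp [abs_of_pos hr0]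
          by_cases hr1 : r < 1
          · rw [indicator_of_mem (show r ∈ Iio 1 from hr1)]
            have hr2 : 0 < 1 - r := by linarith
            calc _ ≤ ∫⁻ θ in Ioo (-π) π, ENNReal.ofReal ((1 - r) ^ (p - 2)) *
                  ENNReal.ofReal (‖1 - circleMap 0 (t * r) θ‖ ^ (-p)) := by
                  apply lintegral_mono
                  intro θ
                  simp only
                  have hm : circleMap 0 r θ ∈ ball (0:ℂ) 1 := by
                    rw [mem_ball_zero_iff, hnorm]; exact hr1
                  rw [hH, indicator_of_mem hm, hnorm,
                    show circleMap 0 (t * r) θ = (t:ℂ) * circleMap 0 r θ by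
                      simp [circleMap]; ring, ← ENNReal.ofReal_mul hr0.le,
                      ← ENNReal.ofReal_mul (by positivity)]
                  apply ENNReal.ofReal_le_ofReal
                  exact mul_le_of_le_one_left (by positivity) hr1.le
              _ ≤ ENNReal.ofReal ((1 - r) ^ (p - 2)) *
                  ENNReal.ofReal (A * (1 - t * r) ^ (1 - p)) := by
                  rw [lintegral_const_mul' _ _ ENNReal.ofReal_ne_top]
                  exact mul_le_mul' le_rfl (aux_circ_int hp (by positivity) (by nlinarith))
              _ = _ := by
                  rw [← ENNReal.ofReal_mul (by positivity), ← ENNReal.ofReal_mul hA0]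
                  congr 1; ring
          · rw [indicator_of_notMem (show r ∉ Iio 1 from hr1)]
            rw [nonpos_iff_eq_zero, lintegral_eq_zero_iff' ?_]
            · refine Eventually.of_forall fun θ => ?_
              have hm : circleMap 0 r θ ∉ ball (0:ℂ) 1 := by
                rw [mem_ball_zero_iff, hnorm]; exact hr1
              simp only [hH]
              rw [indicator_of_notMem hm]; simp
            · apply Measurable.aemeasurable
              apply Measurable.const_mul
              exact hHm.comp (continuous_circleMap 0 r).measurable
      _ = ENNReal.ofReal A * ∫⁻ r in Ioo (0:ℝ) 1,
          ENNReal.ofReal ((1 - r) ^ (p - 2) * (1 - t * r) ^ (1 - p)) := by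
          rw [lintegral_indicator measurableSet_Iio, Measure.restrict_restrict measurableSet_Iio,
            inter_comm, Ioi_inter_Iio, lintegral_const_mul' _ _ ENNReal.ofReal_ne_top]
      _ ≤ _ := by
          rw [ENNReal.ofReal_mul hA0]
          exact mul_le_mul' le_rfl (aux_radial hp ht0 ht1)
  rw [aux_lint_dA, h1]
  refine (mul_le_mul' le_rfl h2).trans ?_
  rw [← ENNReal.ofReal_inv_of_pos hpi, ← ENNReal.ofReal_mul (by positivity)]
  apply ENNReal.ofReal_le_ofReal
  have hL := aux_Lpos ha
  have e1 : Real.log (1 / (1 - t)) ≤ Real.log (2 / (1 - t)) := by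
    have : 0 < 1 - t := by linarith
    apply Real.log_le_log (by positivity)
    gcongr; norm_num
  have e2 : 1 / (p - 1) ≤ 1 / (p - 1) / Real.log 2 * Real.log (2 / (1 - t)) := by
    rw [div_mul_eq_mul_div, le_div_iff₀ hl2]
    gcongr
  have e3 : A * (Real.log (1 / (1 - t)) + 1 / (p - 1)) ≤
      A * ((1 + 1 / (p - 1) / Real.log 2) * Real.log (2 / (1 - t))) := by
    apply mul_le_mul_of_nonneg_left _ hA0
    linarith
  calc _ ≤ π⁻¹ * (A * ((1 + 1 / (p - 1) / Real.log 2) * Real.log (2 / (1 - t)))) := by gcongr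
    _ = _ := by ring

end Aux7


section Aux8

/-- Normalized logarithmic test functions. -/
noncomputable def auxTest (p : ℝ) (a z : ℂ) : ℂ :=
  (((Real.log (2 / (1 - ‖a‖))) ^ (-(1 / p)) : ℝ) : ℂ) * -Complex.log (1 - (starRingEnd ℂ) a * z)

theorem aux_prod_lt {a z : ℂ} (ha : a ∈ ball (0:ℂ) 1) (hz : z ∈ ball (0:ℂ) 1) :
    ‖(starRingEnd ℂ) a * z‖ ≤ ‖z‖ ∧ ‖z‖ < 1 := by
  have h1 := mem_ball_zero_iff.mp ha
  refine ⟨?_, mem_ball_zero_iff.mp hz⟩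
  rw [norm_mul, RCLike.norm_conj]
  exact mul_le_of_le_one_left (norm_nonneg _) h1.le

theorem aux_test_hasDeriv (p : ℝ) {a z : ℂ} (ha : a ∈ ball (0:ℂ) 1) (hz : z ∈ ball (0:ℂ) 1) :
    HasDerivAt (auxTest p a) ((((Real.log (2 / (1 - ‖a‖))) ^ (-(1 / p)) : ℝ) : ℂ) *
      ((starRingEnd ℂ) a / (1 - (starRingEnd ℂ) a * z))) z := by
  obtain ⟨h1, h2⟩ := aux_prod_lt ha hz
  have hs : 1 - (starRingEnd ℂ) a * z ∈ slitPlane := by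
    left
    have := Complex.re_le_norm ((starRingEnd ℂ) a * z)
    rw [Complex.sub_re, Complex.one_re]
    linarith
  have h3 : HasDerivAt (fun z => 1 - (starRingEnd ℂ) a * z) (-(starRingEnd ℂ) a) z := by
    simpa using ((hasDerivAt_id z).const_mul ((starRingEnd ℂ) a)).const_sub 1
  have := (h3.clog hs).neg.const_mul ((((Real.log (2 / (1 - ‖a‖))) ^ (-(1 / p)) : ℝ) : ℂ))
  refine this.congr_deriv ?_
  rw [neg_div, neg_neg]

theorem aux_test_hol (p : ℝ) {a : ℂ} (ha : a ∈ ball (0:ℂ) 1) : HolOn (auxTest p a) :=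
  fun _ hz => (aux_test_hasDeriv p ha hz).differentiableAt.differentiableWithinAt

theorem aux_test_besov {p : ℝ} (hp : 1 < p) : ∃ C : ℝ, 0 ≤ C ∧ ∀ a ∈ ball (0:ℂ) 1,
    ∫⁻ z in ball (0:ℂ) 1, ENNReal.ofReal ((1 - ‖z‖) ^ (p - 2) *
      ‖deriv (auxTest p a) z‖ ^ p) ∂dA ≤ ENNReal.ofReal C := by
  obtain ⟨C, hC, h⟩ := aux_test_int hp
  refine ⟨C, hC, fun a ha => ?_⟩
  have ha1 := mem_ball_zero_iff.mp ha
  have hL : 0 < Real.log (2 / (1 - ‖a‖)) := (Real.log_pos (by norm_num)).trans_le (aux_Lpos ha)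
  set L := Real.log (2 / (1 - ‖a‖)) with hLd
  calc _ ≤ ∫⁻ z in ball (0:ℂ) 1, ENNReal.ofReal L⁻¹ * ENNReal.ofReal ((1 - ‖z‖) ^ (p - 2) *
      ‖1 - (starRingEnd ℂ) a * z‖ ^ (-p)) ∂dA := by
        apply setLIntegral_mono_ae' measurableSet_ball
        refine Eventually.of_forall fun z hz => ?_
        have hz1 : 0 < 1 - ‖z‖ := by linarith [mem_ball_zero_iff.mp hz]
        rw [← ENNReal.ofReal_mul (by positivity), (aux_test_hasDeriv p ha hz).deriv]
        apply ENNReal.ofReal_le_ofReal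
        rw [← hLd, norm_mul, norm_div, RCLike.norm_conj, Complex.norm_real,
          Real.norm_of_nonneg (by positivity), Real.mul_rpow (by positivity) (by positivity),
          Real.div_rpow (by positivity) (by positivity), ← Real.rpow_mul hL.le,
          show -(1 / p) * p = -1 by field_simp, Real.rpow_neg_one, Real.rpow_neg (norm_nonneg _)]
        have : ‖a‖ ^ p ≤ 1 := Real.rpow_le_one (norm_nonneg _) ha1.le (by linarith)
        calc _ ≤ (1 - ‖z‖) ^ (p - 2) * (L⁻¹ * (1 / ‖1 - (starRingEnd ℂ) a * z‖ ^ p)) := by gcongr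
          _ = _ := by ring
    _ ≤ ENNReal.ofReal L⁻¹ * ENNReal.ofReal (C * L) := by
        rw [lintegral_const_mul' _ _ ENNReal.ofReal_ne_top]
        exact mul_le_mul' le_rfl (h a ha)
    _ = _ := by
        rw [← ENNReal.ofReal_mul (by positivity)]
        congr 1; field_simp

theorem aux_test_bound {p : ℝ} (hp : 1 < p) : ∃ B : ℝ, 0 ≤ B ∧ ∀ a ∈ ball (0:ℂ) 1,
    ∀ z ∈ ball (0:ℂ) 1, ‖auxTest p a z‖ ≤ B / (1 - ‖z‖) := by
  have hl2 : 0 < Real.log 2 := Real.log_pos (by norm_num)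
  refine ⟨(Real.log 2) ^ (-(1 / p)) * 2, by positivity, ?_⟩
  intro a ha z hz
  obtain ⟨h1, h2⟩ := aux_prod_lt ha hz
  have hL := aux_Lpos ha
  have hL0 := hl2.trans_le hL
  rw [auxTest, norm_mul, Complex.norm_real, Real.norm_of_nonneg (by positivity), norm_neg, mul_div_assoc]
  have e1 : (Real.log (2 / (1 - ‖a‖))) ^ (-(1 / p)) ≤ (Real.log 2) ^ (-(1 / p)) :=
    Real.rpow_le_rpow_of_nonpos hl2 hL (by
      have : 0 < p := by linarith
      have : 0 < 1 / p := by positivity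
      linarith)
  have e2 : ‖Complex.log (1 - (starRingEnd ℂ) a * z)‖ ≤ 2 / (1 - ‖z‖) := by
    have := Complex.norm_log_one_add_le (z := -((starRingEnd ℂ) a * z)) (by rw [norm_neg]; linarith)
    rw [norm_neg, ← sub_eq_add_neg] at this
    refine this.trans ?_
    set x := ‖(starRingEnd ℂ) a * z‖
    have hx : 0 ≤ x := norm_nonneg _
    have hz1 : 0 < 1 - ‖z‖ := by linarith
    have hx1 : 0 < 1 - x := by linarith
    have e3 : (1 - x)⁻¹ ≤ (1 - ‖z‖)⁻¹ := by gcongr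
    have e4 : 1 ≤ (1 - ‖z‖)⁻¹ := by
      rw [one_le_inv₀ hz1]; linarith [norm_nonneg z]
    have e5 : x ^ 2 * (1 - x)⁻¹ ≤ (1 - ‖z‖)⁻¹ := by
      refine (mul_le_of_le_one_left (by positivity) ?_).trans e3
      nlinarith
    rw [div_eq_mul_inv 2]
    linarith
  gcongr

theorem aux_test_lower {p p' : ℝ} (hpp : p.HolderConjugate p') {a z : ℂ} (ha : a ∈ ball (0:ℂ) 1)
    (hz : z ∈ ball (0:ℂ) 1) (ha2 : 1 / 2 < ‖a‖)
    (hn : ‖1 - (starRingEnd ℂ) a * z‖ ≤ (1 - ‖a‖) ^ (1 / 4 : ℝ)) :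
    (Real.log (2 / (1 - ‖a‖))) ^ (1 / p') / 8 ≤ ‖auxTest p a z‖ := by
  have ha1 := mem_ball_zero_iff.mp ha
  have hl2 : 0 < Real.log 2 := Real.log_pos (by norm_num)
  have hL0 := hl2.trans_le (aux_Lpos ha)
  have hε : 0 < 1 - ‖a‖ := by linarith
  have hd := norm_pos_iff.mpr (aux_den_ne ha hz)
  have hL : Real.log (2 / (1 - ‖a‖)) ≤ 8 * -Real.log ‖1 - (starRingEnd ℂ) a * z‖ := by
    have h1 := Real.log_le_log hd hn
    rw [Real.log_rpow hε] at h1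
    rw [Real.log_div (by norm_num) hε.ne']
    have h2 : Real.log (1 - ‖a‖) ≤ Real.log (2⁻¹) := Real.log_le_log hε (by linarith)
    rw [Real.log_inv] at h2
    linarith
  have h3 : -Real.log ‖1 - (starRingEnd ℂ) a * z‖ ≤ ‖Complex.log (1 - (starRingEnd ℂ) a * z)‖ := by
    have := Complex.abs_re_le_norm (Complex.log (1 - (starRingEnd ℂ) a * z))
    rw [Complex.log_re] at this
    exact (neg_le_abs _).trans this
  rw [auxTest, norm_mul, Complex.norm_real, Real.norm_of_nonneg (by positivity), norm_neg]
  set L := Real.log (2 / (1 - ‖a‖)) with hLd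
  have e : L ^ (1 / p') = L ^ (-(1 / p)) * L := by
    rw [← Real.rpow_add_one hL0.ne']
    congr 1
    have := hpp.inv_add_inv_eq_one
    simp only [one_div]; linarith
  rw [e, mul_div_assoc]
  gcongr
  linarith

end Aux8


section Aux9

/-- Superposition of a sequence of functions with summable coefficients. -/
noncomputable def auxF (f : ℕ → ℂ → ℂ) (c : lp (fun _ : ℕ => ℂ) 1) (z : ℂ) : ℂ := ∑' n, c n * f n z

theorem aux_l1_summable (c : lp (fun _ : ℕ => ℂ) 1) : Summable (fun n => ‖c n‖) := by
  have := (memℓp_gen_iff (by norm_num)).mp (lp.memℓp c)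
  simpa using this

theorem aux_l1_norm (c : lp (fun _ : ℕ => ℂ) 1) : ‖c‖ = ∑' n, ‖c n‖ := by
  rw [lp.norm_eq_tsum_rpow (by norm_num)]
  simp

variable {f : ℕ → ℂ → ℂ} {B : ℝ}

theorem aux_F_summable (hb : ∀ n, ∀ z ∈ ball (0:ℂ) 1, ‖f n z‖ ≤ B / (1 - ‖z‖))
    (c : lp (fun _ : ℕ => ℂ) 1) {z : ℂ} (hz : z ∈ ball (0:ℂ) 1) :
    Summable (fun n => ‖c n * f n z‖) := by
  refine Summable.of_nonneg_of_le (fun n => norm_nonneg _) (fun n => ?_)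
    ((aux_l1_summable c).mul_right (B / (1 - ‖z‖)))
  rw [norm_mul]
  exact mul_le_mul_of_nonneg_left (hb n z hz) (norm_nonneg _)

theorem aux_F_bound (hb : ∀ n, ∀ z ∈ ball (0:ℂ) 1, ‖f n z‖ ≤ B / (1 - ‖z‖))
    (c : lp (fun _ : ℕ => ℂ) 1) {z : ℂ} (hz : z ∈ ball (0:ℂ) 1) :
    ‖auxF f c z‖ ≤ ‖c‖ * (B / (1 - ‖z‖)) := by
  have hs := aux_F_summable hb c hz
  refine (norm_tsum_le_tsum_norm hs).trans ?_
  rw [aux_l1_norm, ← tsum_mul_right]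
  refine Summable.tsum_le_tsum (fun n => ?_) hs ((aux_l1_summable c).mul_right _)
  rw [norm_mul]
  exact mul_le_mul_of_nonneg_left (hb n z hz) (norm_nonneg _)

theorem aux_F_add (hb : ∀ n, ∀ z ∈ ball (0:ℂ) 1, ‖f n z‖ ≤ B / (1 - ‖z‖))
    (c d : lp (fun _ : ℕ => ℂ) 1) {z : ℂ} (hz : z ∈ ball (0:ℂ) 1) :
    auxF f (c + d) z = auxF f c z + auxF f d z := by
  unfold auxF
  rw [← Summable.tsum_add (aux_F_summable hb c hz).of_norm (aux_F_summable hb d hz).of_norm]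
  congr 1; ext n
  simp [add_mul]

theorem aux_F_smul (k : ℂ) (c : lp (fun _ : ℕ => ℂ) 1) (z : ℂ) :
    auxF f (k • c) z = k * auxF f c z := by
  unfold auxF
  rw [← tsum_mul_left]
  congr 1; ext n
  simp [mul_assoc]

theorem aux_F_tendsto (hb : ∀ n, ∀ z ∈ ball (0:ℂ) 1, ‖f n z‖ ≤ B / (1 - ‖z‖))
    {c : ℕ → lp (fun _ : ℕ => ℂ) 1} {d : lp (fun _ : ℕ => ℂ) 1} (h : Tendsto c atTop (nhds d))
    {z : ℂ} (hz : z ∈ ball (0:ℂ) 1) :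
    Tendsto (fun k => auxF f (c k) z) atTop (nhds (auxF f d z)) := by
  rw [tendsto_iff_norm_sub_tendsto_zero] at h ⊢
  refine squeeze_zero (fun _ => norm_nonneg _) (fun k => ?_)
    (by simpa using h.mul_const (B / (1 - ‖z‖)))
  have : auxF f (c k) z - auxF f d z = auxF f (c k - d) z := by
    have := aux_F_add hb (c k - d) d hz
    rw [sub_add_cancel] at this
    rw [this]; ring
  rw [this]
  exact aux_F_bound hb _ hz

theorem aux_F_deriv (hB : 0 ≤ B) (hf : ∀ n, HolOn (f n))
    (hb : ∀ n, ∀ z ∈ ball (0:ℂ) 1, ‖f n z‖ ≤ B / (1 - ‖z‖))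
    (c : lp (fun _ : ℕ => ℂ) 1) {z : ℂ} (hz : z ∈ ball (0:ℂ) 1) :
    DifferentiableAt ℂ (auxF f c) z ∧ HasSum (fun n => c n * deriv (f n) z) (deriv (auxF f c) z) := by
  have hz1 := mem_ball_zero_iff.mp hz
  obtain ⟨r, hr1, hr2⟩ := exists_between hz1
  have hsub : ball (0:ℂ) r ⊆ ball 0 1 := ball_subset_ball hr2.le
  have hzr : z ∈ ball (0:ℂ) r := mem_ball_zero_iff.mpr hr1
  have hu := (aux_l1_summable c).mul_right (B / (1 - r))
  have hd : ∀ n, DifferentiableOn ℂ (fun z => c n * f n z) (ball 0 r) := fun n =>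
    ((hf n).mono hsub).const_mul (c n)
  have hle : ∀ n, ∀ w ∈ ball (0:ℂ) r, ‖c n * f n w‖ ≤ ‖c n‖ * (B / (1 - r)) := by
    intro n w hw
    rw [norm_mul]
    refine mul_le_mul_of_nonneg_left ((hb n w (hsub hw)).trans ?_) (norm_nonneg _)
    have := mem_ball_zero_iff.mp hw
    have : 0 < 1 - r := by linarith
    gcongr
  constructor
  · exact (Complex.differentiableOn_tsum_of_summable_norm hu hd isOpen_ball hle).differentiableAt
      (isOpen_ball.mem_nhds hzr)
  · have := Complex.hasSum_deriv_of_summable_norm hu hd isOpen_ball hle hzr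
    have e : (fun n => c n * deriv (f n) z) = fun n => deriv (fun z => c n * f n z) z := by
      ext n
      exact (deriv_const_mul _ ((hf n).differentiableAt (isOpen_ball.mem_nhds hz))).symm
    rw [e]
    exact this

theorem aux_ENN_holder {p p' : ℝ} (hpp : p.HolderConjugate p') (X Y : ℕ → ENNReal) :
    (∑' n, X n * Y n) ^ p ≤ (∑' n, X n) ^ (p / p') * ∑' n, X n * Y n ^ p := by
  have hp := hpp.pos
  have hp' := hpp.symm.pos
  have h := ENNReal.lintegral_mul_le_Lp_mul_Lq (Measure.count : Measure ℕ) hpp.symm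
    (f := fun n => X n ^ (1 / p')) (g := fun n => X n ^ (1 / p) * Y n)
    (by fun_prop) (by fun_prop)
  simp only [lintegral_count, Pi.mul_apply] at h
  have e0 : ∀ n, X n ^ (1 / p') * (X n ^ (1 / p) * Y n) = X n * Y n := by
    intro n
    rw [← mul_assoc, ← ENNReal.rpow_add_of_nonneg _ _ (by positivity) (by positivity)]
    have := hpp.symm.inv_add_inv_eq_one
    simp only [one_div]
    rw [this, ENNReal.rpow_one]
  have e1 : ∀ n, (X n ^ (1 / p')) ^ p' = X n := by
    intro n
    rw [← ENNReal.rpow_mul, one_div_mul_cancel hp'.ne', ENNReal.rpow_one]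
  have e2 : ∀ n, (X n ^ (1 / p) * Y n) ^ p = X n * Y n ^ p := by
    intro n
    rw [ENNReal.mul_rpow_of_nonneg _ _ hp.le, ← ENNReal.rpow_mul, one_div_mul_cancel hp.ne',
      ENNReal.rpow_one]
  simp only [e0, e1, e2] at h
  refine (ENNReal.rpow_le_rpow h hp.le).trans (le_of_eq ?_)
  rw [ENNReal.mul_rpow_of_nonneg _ _ hp.le, ← ENNReal.rpow_mul, ← ENNReal.rpow_mul,
    one_div_mul_cancel hp.ne', ENNReal.rpow_one]
  congr 2; ring

theorem aux_F_besov {p p' : ℝ} (hpp : p.HolderConjugate p') (hB : 0 ≤ B) (hf : ∀ n, HolOn (f n))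
    (hb : ∀ n, ∀ z ∈ ball (0:ℂ) 1, ‖f n z‖ ≤ B / (1 - ‖z‖)) {C : ℝ}
    (hC : ∀ n, ∫⁻ z in ball (0:ℂ) 1, ENNReal.ofReal ((1 - ‖z‖) ^ (p - 2) *
      ‖deriv (f n) z‖ ^ p) ∂dA ≤ ENNReal.ofReal C)
    (c : lp (fun _ : ℕ => ℂ) 1) : auxF f c ∈ Besov p := by
  have hp := hpp.pos
  have hp' := hpp.symm.pos
  refine ⟨fun z hz => (aux_F_deriv hB hf hb c hz).1.differentiableWithinAt, ?_⟩
  have hcfin : ∑' n, ‖c n‖ₑ ≠ ⊤ := by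
    have h1 := (aux_l1_summable c).tsum_ofReal_ne_top
    simpa only [ofReal_norm] using h1
  set S := ∑' n, ‖c n‖ₑ with hS
  have conv : ∀ h : ℂ → ℂ, ∀ z ∈ ball (0:ℂ) 1, ENNReal.ofReal ((1 - ‖z‖) ^ (p - 2) *
      ‖deriv h z‖ ^ p) = ENNReal.ofReal ((1 - ‖z‖) ^ (p - 2)) * ‖deriv h z‖ₑ ^ p := by
    intro h z hz
    have : 0 < 1 - ‖z‖ := by linarith [mem_ball_zero_iff.mp hz]
    rw [ENNReal.ofReal_mul (by positivity), ← ENNReal.ofReal_rpow_of_nonneg (norm_nonneg _) hp.le,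
      ofReal_norm]
  have hm : ∀ n, Measurable (fun z => ENNReal.ofReal ((1 - ‖z‖) ^ (p - 2)) * ‖deriv (f n) z‖ₑ ^ p) := by
    intro n
    apply Measurable.mul
    · apply ENNReal.measurable_ofReal.comp
      apply Measurable.pow_const; fun_prop
    · exact (measurable_deriv (f n)).enorm.pow_const p
  calc _ ≤ ∫⁻ z in ball (0:ℂ) 1, S ^ (p / p') * ∑' n, ‖c n‖ₑ *
        (ENNReal.ofReal ((1 - ‖z‖) ^ (p - 2)) * ‖deriv (f n) z‖ₑ ^ p) ∂dA := by
        apply setLIntegral_mono_ae' measurableSet_ball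
        refine Eventually.of_forall fun z hz => ?_
        rw [conv _ z hz]
        have h1 : ‖deriv (auxF f c) z‖ₑ ≤ ∑' n, ‖c n‖ₑ * ‖deriv (f n) z‖ₑ := by
          rw [← (aux_F_deriv hB hf hb c hz).2.tsum_eq]
          refine enorm_tsum_le_tsum_enorm.trans (le_of_eq ?_)
          congr 1; ext n; rw [enorm_mul]
        have h2 := (ENNReal.rpow_le_rpow h1 hp.le).trans (aux_ENN_holder hpp _ _)
        refine (mul_le_mul' le_rfl h2).trans (le_of_eq ?_)
        rw [mul_left_comm, ← ENNReal.tsum_mul_left]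
        congr 2; ext n; ring
    _ = S ^ (p / p') * ∑' n, ‖c n‖ₑ * ∫⁻ z in ball (0:ℂ) 1,
        (ENNReal.ofReal ((1 - ‖z‖) ^ (p - 2)) * ‖deriv (f n) z‖ₑ ^ p) ∂dA := by
        rw [lintegral_const_mul' _ _ (ENNReal.rpow_ne_top_of_nonneg (by positivity) hcfin),
          lintegral_tsum]
        · congr 2; ext n
          rw [lintegral_const_mul _ (hm n)]
        · intro n
          exact ((hm n).const_mul _).aemeasurable
    _ ≤ S ^ (p / p') * ∑' n, ‖c n‖ₑ * ENNReal.ofReal C := by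
        refine mul_le_mul' le_rfl (ENNReal.tsum_le_tsum fun n => mul_le_mul' le_rfl ?_)
        refine le_trans (le_of_eq ?_) (hC n)
        apply setLIntegral_congr_fun measurableSet_ball
        intro z hz
        exact (conv (f n) z hz).symm
    _ < ⊤ := by
        rw [ENNReal.tsum_mul_right]
        exact ENNReal.mul_lt_top (ENNReal.rpow_lt_top_of_nonneg (by positivity) hcfin)
          (ENNReal.mul_lt_top hcfin.lt_top ENNReal.ofReal_lt_top)

end Aux9


section Aux10

/-- The weighted measure attached to `g` and `a`. -/
noncomputable def auxNu (g : ℂ → ℂ) (a : ℂ) : Measure ℂ :=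
  (dA.restrict (ball (0:ℂ) 1)).withDensity
    (fun z => ENNReal.ofReal (‖deriv g z‖ ^ 2 * (1 - ‖phi a z‖ ^ 2)))

theorem aux_w_meas (g : ℂ → ℂ) (a : ℂ) :
    Measurable (fun z => ENNReal.ofReal (‖deriv g z‖ ^ 2 * (1 - ‖phi a z‖ ^ 2))) := by
  apply ENNReal.measurable_ofReal.comp
  apply Measurable.mul
  · exact (measurable_deriv g).norm.pow_const 2
  · unfold phi; fun_prop

theorem aux_nu_norm {g : ℂ → ℂ} {a : ℂ} (ha : a ∈ ball (0:ℂ) 1) (F : ℂ → ℂ) :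
    eLpNorm F 2 (auxNu g a) = (∫⁻ z in ball (0:ℂ) 1, ENNReal.ofReal (‖deriv g z * F z‖ ^ 2 *
      (1 - ‖phi a z‖ ^ 2)) ∂dA) ^ (1 / 2 : ℝ) := by
  rw [eLpNorm_eq_lintegral_rpow_enorm_toReal (by norm_num) (by norm_num), auxNu,
    lintegral_withDensity_eq_lintegral_mul_non_measurable _ (aux_w_meas g a)
      (Eventually.of_forall fun _ => ENNReal.ofReal_lt_top)]
  simp only [ENNReal.toReal_ofNat]
  congr 1
  apply setLIntegral_congr_fun measurableSet_ball
  intro z hz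
  have hw : 0 ≤ 1 - ‖phi a z‖ ^ 2 := by
    have := mem_ball_zero_iff.mp (aux_phi_mem ha hz)
    nlinarith [norm_nonneg (phi a z)]
  simp only [Pi.mul_apply]
  rw [← ofReal_norm, ENNReal.ofReal_rpow_of_nonneg (norm_nonneg _) (by norm_num),
    ← ENNReal.ofReal_mul (by positivity), norm_mul, Real.rpow_two]
  congr 1; ring

theorem aux_nu_ae (g : ℂ → ℂ) (a : ℂ) : ∀ᵐ z ∂(auxNu g a), z ∈ ball (0:ℂ) 1 :=
  (withDensity_absolutelyContinuous _ _).ae_le (ae_restrict_mem measurableSet_ball)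

theorem aux_baire {p p' : ℝ} (hpp : p.HolderConjugate p') {g : ℂ → ℂ} (hg : HolOn g)
    (hT : MapsInto (Tg g) (Besov p) (Qs 1))
    {f : ℕ → ℂ → ℂ} {B : ℝ} (hB : 0 ≤ B) (hf : ∀ n, HolOn (f n))
    (hb : ∀ n, ∀ z ∈ ball (0:ℂ) 1, ‖f n z‖ ≤ B / (1 - ‖z‖)) {C : ℝ}
    (hC : ∀ n, ∫⁻ z in ball (0:ℂ) 1, ENNReal.ofReal ((1 - ‖z‖) ^ (p - 2) *
      ‖deriv (f n) z‖ ^ p) ∂dA ≤ ENNReal.ofReal C) :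
    ∃ K : ℝ, 0 ≤ K ∧ ∀ n, ∀ a ∈ ball (0:ℂ) 1, ∫⁻ z in ball (0:ℂ) 1,
      ENNReal.ofReal (‖deriv g z * f n z‖ ^ 2 * (1 - ‖phi a z‖ ^ 2)) ∂dA ≤ ENNReal.ofReal K := by
  set N : lp (fun _ : ℕ => ℂ) 1 → ENNReal :=
    fun c => ⨆ a ∈ ball (0:ℂ) 1, eLpNorm (auxF f c) 2 (auxNu g a) with hN
  have hle : ∀ c, ∀ a ∈ ball (0:ℂ) 1, eLpNorm (auxF f c) 2 (auxNu g a) ≤ N c := fun c a ha =>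
    le_iSup₂ (f := fun (a:ℂ) (_ : a ∈ ball (0:ℂ) 1) => eLpNorm (auxF f c) 2 (auxNu g a)) a ha
  have hhol : ∀ c, HolOn (auxF f c) := fun c z hz =>
    (aux_F_deriv hB hf hb c hz).1.differentiableWithinAt
  have hmeas : ∀ c a, AEStronglyMeasurable (auxF f c) (auxNu g a) := by
    intro c a
    exact ((hhol c).continuousOn.aestronglyMeasurable measurableSet_ball).mono_ac
      (withDensity_absolutelyContinuous _ _)
  have hfin : ∀ c, N c ≠ ⊤ := by
    intro c
    obtain ⟨h1, h2⟩ := hT _ (aux_F_besov hpp hB hf hb hC c)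
    have hd := (aux_Tg hg (hhol c)).2
    simp only [Real.rpow_one] at h2
    set Q := ⨆ a ∈ ball (0:ℂ) 1, ∫⁻ z in ball (0:ℂ) 1, ENNReal.ofReal
      (‖deriv (Tg g (auxF f c)) z‖ ^ 2 * (1 - ‖phi a z‖ ^ 2)) ∂dA with hQ
    have : N c ≤ Q ^ (1 / 2 : ℝ) := by
      refine iSup₂_le fun a ha => ?_
      rw [aux_nu_norm ha]
      apply ENNReal.rpow_le_rpow _ (by norm_num)
      refine le_trans (le_of_eq ?_) (le_iSup₂ (f := fun (a:ℂ) (_ : a ∈ ball (0:ℂ) 1) =>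
        ∫⁻ z in ball (0:ℂ) 1, ENNReal.ofReal
          (‖deriv (Tg g (auxF f c)) z‖ ^ 2 * (1 - ‖phi a z‖ ^ 2)) ∂dA) a ha)
      apply setLIntegral_congr_fun measurableSet_ball
      intro z hz
      simp only
      rw [hd z hz]
    exact ne_top_of_le_ne_top (ENNReal.rpow_ne_top_of_nonneg (by norm_num) h2.ne) this
  have hadd : ∀ c d, N (c + d) ≤ N c + N d := by
    intro c d
    refine iSup₂_le fun a ha => ?_
    have e : auxF f (c + d) =ᵐ[auxNu g a] auxF f c + auxF f d := by
      filter_upwards [aux_nu_ae g a] with z hz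
      exact aux_F_add hb c d hz
    rw [eLpNorm_congr_ae e]
    exact (eLpNorm_add_le (hmeas c a) (hmeas d a) (by norm_num)).trans
      (add_le_add (hle c a ha) (hle d a ha))
  have hsmul : ∀ (k : ℂ) c, N (k • c) = ‖k‖ₑ * N c := by
    intro k c
    simp only [hN]
    rw [ENNReal.mul_iSup]
    congr 1; ext a
    rw [ENNReal.mul_iSup]
    congr 1; ext ha
    have e : auxF f (k • c) = k • auxF f c := by
      ext z; simp [aux_F_smul]
    rw [e, eLpNorm_const_smul]
  let P : Seminorm ℂ (lp (fun _ : ℕ => ℂ) 1) := Seminorm.of (fun c => (N c).toReal)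
    (fun c d => by
      rw [← ENNReal.toReal_add (hfin c) (hfin d)]
      exact ENNReal.toReal_mono (ENNReal.add_ne_top.mpr ⟨hfin c, hfin d⟩) (hadd c d))
    (fun k c => by
      rw [hsmul, ENNReal.toReal_mul, toReal_enorm])
  have hP : ∀ c, P c = (N c).toReal := fun c => rfl
  have hlsc : LowerSemicontinuous P := by
    rw [lowerSemicontinuous_iff_isClosed_preimage]
    intro y
    rcases lt_or_ge y 0 with hy | hy
    · have : P ⁻¹' Iic y = ∅ := by
        ext c
        simp only [mem_preimage, mem_Iic, mem_empty_iff_false, iff_false, not_le]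
        exact hy.trans_le (apply_nonneg P c)
      rw [this]; exact isClosed_empty
    · apply IsSeqClosed.isClosed
      intro c d hc hlim
      have hc' : ∀ k, N (c k) ≤ ENNReal.ofReal y := by
        intro k
        have : (N (c k)).toReal ≤ y := hc k
        exact (ENNReal.le_ofReal_iff_toReal_le (hfin _) hy).mpr this
      show (N d).toReal ≤ y
      rw [← ENNReal.le_ofReal_iff_toReal_le (hfin _) hy]
      refine iSup₂_le fun a ha => ?_
      have h := Lp.eLpNorm_lim_le_liminf_eLpNorm (p := 2) (μ := auxNu g a)
        (f := fun k => auxF f (c k)) (fun k => hmeas (c k) a) (auxF f d) (by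
          filter_upwards [aux_nu_ae g a] with z hz
          exact aux_F_tendsto hb hlim hz)
      refine h.trans ?_
      refine (liminf_le_liminf (v := fun _ : ℕ => ENNReal.ofReal y)
        (Eventually.of_forall fun k => (hle (c k) a ha).trans (hc' k))).trans ?_
      simp
  obtain ⟨K, hK, hbd⟩ := Seminorm.bound_of_continuous_normedSpace P
    (P.continuous_of_lowerSemicontinuous hlsc)
  refine ⟨K ^ 2, by positivity, fun n a ha => ?_⟩
  have h1 := hbd (lp.single 1 n (1:ℂ))
  rw [lp.norm_single (by norm_num), norm_one, mul_one, hP] at h1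
  have h2 := (ENNReal.le_ofReal_iff_toReal_le (hfin _) hK.le).mpr h1
  have h3 := (hle _ a ha).trans h2
  have e : auxF f (lp.single 1 n (1:ℂ)) = f n := by
    ext z
    unfold auxF
    rw [tsum_eq_single n]
    · simp
    · intro m hm
      simp [lp.single_apply, hm]
  rw [e, aux_nu_norm ha] at h3
  have h4 := ENNReal.rpow_le_rpow h3 (by norm_num : (0:ℝ) ≤ 2)
  rw [← ENNReal.rpow_mul, ENNReal.ofReal_rpow_of_nonneg hK.le (by norm_num)] at h4
  norm_num at h4
  simpa using h4

end Aux10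


section Aux11

theorem aux_pow_le {L s : ℝ} (hL : 0 < L) (hs0 : 0 ≤ s) (hs : s ≤ 2) : L ^ s ≤ 1 + L ^ 2 := by
  rcases le_total L 1 with h | h
  · have := Real.rpow_le_one hL.le h hs0
    nlinarith [sq_nonneg L]
  · have := Real.rpow_le_rpow_of_exponent_le h hs
    rw [Real.rpow_two] at this
    linarith

theorem aux_final {p p' : ℝ} (hpp : p.HolderConjugate p') {g : ℂ → ℂ} {a : ℂ}
    (ha : a ∈ ball (0:ℂ) 1) {M : ENNReal} {K : ℝ} (hM : ∀ b ∈ ball (0:ℂ) 1, ∫⁻ z in ball (0:ℂ) 1,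
      ENNReal.ofReal (‖deriv g z‖ ^ 2 * (1 - ‖phi b z‖ ^ 2)) ∂dA ≤ M)
    (hK : ∫⁻ z in ball (0:ℂ) 1, ENNReal.ofReal (‖deriv g z * auxTest p a z‖ ^ 2 *
      (1 - ‖phi a z‖ ^ 2)) ∂dA ≤ ENNReal.ofReal K) :
    ENNReal.ofReal ((Real.log (2 / (1 - ‖a‖))) ^ (2 * (1 / p'))) *
        ∫⁻ z in Metric.ball (0:ℂ) 1,
          ENNReal.ofReal (‖deriv g z‖ ^ 2 * (1 - ‖phi a z‖ ^ 2)) ∂dA ≤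
      64 * ENNReal.ofReal K + 34 * M := by
  have ha1 := mem_ball_zero_iff.mp ha
  have hl2 : 0 < Real.log 2 := Real.log_pos (by norm_num)
  have hlog2 := Real.log_two_lt_d9
  have hL0 := hl2.trans_le (aux_Lpos ha)
  have hp' := hpp.symm.pos
  have hs0 : 0 ≤ 2 * (1 / p') := by positivity
  have hs2 : 2 * (1 / p') ≤ 2 := by
    have : 1 / p' ≤ 1 := by
      rw [div_le_one hp']; exact hpp.symm.lt.le
    linarith
  have hpow := aux_pow_le hL0 hs0 hs2
  have hε : 0 < 1 - ‖a‖ := by linarith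
  set L := Real.log (2 / (1 - ‖a‖)) with hLd
  rcases le_or_gt ‖a‖ (1 / 2) with h | h
  · have hL : L ≤ 2 := by
      have : L ≤ Real.log 4 := by
        apply Real.log_le_log (by positivity)
        rw [div_le_iff₀ hε]; linarith
      rw [show (4:ℝ) = 2 ^ 2 by norm_num, Real.log_pow] at this
      push_cast at this
      linarith
    have h34 : ENNReal.ofReal (L ^ (2 * (1 / p'))) ≤ 34 := by
      rw [show (34:ENNReal) = ENNReal.ofReal 34 by simp]
      apply ENNReal.ofReal_le_ofReal
      nlinarith
    exact (mul_le_mul' h34 (hM a ha)).trans le_add_self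
  · set u := (1 - ‖a‖) ^ (1 / 4 : ℝ) with hu
    have hu0 : 0 < u := by positivity
    have hu4 : u ^ 4 = 1 - ‖a‖ := by
      rw [hu, ← Real.rpow_natCast, ← Real.rpow_mul hε.le]; norm_num
    have hu1 : u ≤ 1 := Real.rpow_le_one hε.le (by linarith [norm_nonneg a]) (by norm_num)
    have hLu : L ≤ 4 / u := by
      have e1 : L = Real.log 2 + 4 * Real.log u⁻¹ := by
        rw [hLd, Real.log_div (by norm_num) hε.ne', ← hu4, Real.log_pow, Real.log_inv]
        push_cast; ring
      have e2 := Real.log_le_sub_one_of_pos (inv_pos.mpr hu0)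
      rw [e1, div_eq_mul_inv]; linarith
    have hL2 : L ^ 2 * u ^ 2 ≤ 16 := by
      rw [le_div_iff₀ hu0] at hLu
      nlinarith [mul_pos hL0 hu0]
    have hm0 : ∫⁻ z in ball (0:ℂ) 1, ENNReal.ofReal (‖deriv g z‖ ^ 2 * (1 - ‖z‖ ^ 2)) ∂dA ≤ M := by
      have := hM 0 (by simp)
      simpa only [aux_phi_zero] using this
    rw [← lintegral_const_mul' _ _ ENNReal.ofReal_ne_top]
    calc _ ≤ ∫⁻ z in ball (0:ℂ) 1, (64 * ENNReal.ofReal (‖deriv g z * auxTest p a z‖ ^ 2 *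
            (1 - ‖phi a z‖ ^ 2)) + 34 * ENNReal.ofReal (‖deriv g z‖ ^ 2 * (1 - ‖z‖ ^ 2))) ∂dA := by
          apply setLIntegral_mono_ae' measurableSet_ball
          refine Eventually.of_forall fun z hz => ?_
          have hw : 0 ≤ 1 - ‖phi a z‖ ^ 2 := by
            have := mem_ball_zero_iff.mp (aux_phi_mem ha hz)
            nlinarith [norm_nonneg (phi a z)]
          have hz2 : 0 ≤ 1 - ‖z‖ ^ 2 := by
            have := mem_ball_zero_iff.mp hz
            nlinarith [norm_nonneg z]
          rw [show (64:ENNReal) = ENNReal.ofReal 64 by simp,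
            show (34:ENNReal) = ENNReal.ofReal 34 by simp,
            ← ENNReal.ofReal_mul (by positivity), ← ENNReal.ofReal_mul (by positivity),
            ← ENNReal.ofReal_mul (by positivity), ← ENNReal.ofReal_add (by positivity) (by positivity)]
          apply ENNReal.ofReal_le_ofReal
          rcases le_or_gt ‖1 - (starRingEnd ℂ) a * z‖ u with hn | hn
          · have h1 := aux_test_lower hpp ha hz h hn
            rw [← hLd] at h1
            have h2 : L ^ (2 * (1 / p')) ≤ 64 * ‖auxTest p a z‖ ^ 2 := by
              rw [mul_comm 2, Real.rpow_mul hL0.le, Real.rpow_two]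
              have : 0 ≤ L ^ (1 / p') := by positivity
              nlinarith
            have h3 : 0 ≤ 34 * (‖deriv g z‖ ^ 2 * (1 - ‖z‖ ^ 2)) := by positivity
            rw [norm_mul]
            have h4 := mul_le_mul_of_nonneg_right h2
              (by positivity : 0 ≤ ‖deriv g z‖ ^ 2 * (1 - ‖phi a z‖ ^ 2))
            calc _ ≤ _ := h4
              _ = 64 * ((‖deriv g z‖ * ‖auxTest p a z‖) ^ 2 * (1 - ‖phi a z‖ ^ 2)) := by ring
              _ ≤ _ := by linarith
          · have h3 : 0 ≤ 64 * (‖deriv g z * auxTest p a z‖ ^ 2 * (1 - ‖phi a z‖ ^ 2)) := by positivity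
            have hd : 0 < ‖1 - (starRingEnd ℂ) a * z‖ := hu0.trans hn
            have h5 : 1 - ‖phi a z‖ ^ 2 ≤ 2 * u ^ 2 * (1 - ‖z‖ ^ 2) := by
              rw [aux_one_sub ha hz, div_le_iff₀ (by positivity)]
              have h6 : 1 - ‖a‖ ^ 2 ≤ 2 * u ^ 2 * ‖1 - (starRingEnd ℂ) a * z‖ ^ 2 := by
                have h7 : u ^ 2 ≤ ‖1 - (starRingEnd ℂ) a * z‖ ^ 2 := by gcongr
                have h8 : 1 - ‖a‖ ^ 2 ≤ 2 * u ^ 4 := by rw [hu4]; nlinarith [norm_nonneg a]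
                nlinarith [mul_le_mul_of_nonneg_left h7 (sq_nonneg u)]
              nlinarith [mul_le_mul_of_nonneg_right h6 hz2]
            have h9 : L ^ (2 * (1 / p')) * (2 * u ^ 2) ≤ 34 := by
              have : L ^ (2 * (1 / p')) * (2 * u ^ 2) ≤ (1 + L ^ 2) * (2 * u ^ 2) := by gcongr
              nlinarith
            calc _ ≤ L ^ (2 * (1 / p')) * (‖deriv g z‖ ^ 2 * (2 * u ^ 2 * (1 - ‖z‖ ^ 2))) := by gcongr
              _ = L ^ (2 * (1 / p')) * (2 * u ^ 2) * (‖deriv g z‖ ^ 2 * (1 - ‖z‖ ^ 2)) := by ring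
              _ ≤ 34 * (‖deriv g z‖ ^ 2 * (1 - ‖z‖ ^ 2)) := by gcongr
              _ ≤ _ := by linarith
      _ = 64 * (∫⁻ z in ball (0:ℂ) 1, ENNReal.ofReal (‖deriv g z * auxTest p a z‖ ^ 2 *
            (1 - ‖phi a z‖ ^ 2)) ∂dA) +
          34 * ∫⁻ z in ball (0:ℂ) 1, ENNReal.ofReal (‖deriv g z‖ ^ 2 * (1 - ‖z‖ ^ 2)) ∂dA := by
          rw [lintegral_add_right, lintegral_const_mul' _ _ (by simp), lintegral_const_mul' _ _ (by simp)]
          apply Measurable.const_mul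
          apply ENNReal.measurable_ofReal.comp
          apply Measurable.mul
          · exact (measurable_deriv g).norm.pow_const 2
          · fun_prop
      _ ≤ _ := by gcongr

theorem aux_nec {p p' : ℝ} (hpp : p.HolderConjugate p') {g : ℂ → ℂ} (hg : HolOn g)
    (hT : MapsInto (Tg g) (Besov p) (Qs 1)) : g ∈ QsLog 1 (1 / p') := by
  have hp : 1 < p := hpp.lt
  refine ⟨hg, ?_⟩
  simp only [Real.rpow_one]
  have hone : (fun _ => (1:ℂ)) ∈ Besov p := by
    refine ⟨differentiableOn_const _, ?_⟩
    have hp0 : p ≠ 0 := by linarith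
    simp [Real.zero_rpow hp0]
  obtain ⟨_, hM⟩ := hT _ hone
  have hd := (aux_Tg hg hone.1).2
  simp only [Real.rpow_one] at hM
  set M := ⨆ a ∈ ball (0:ℂ) 1, ∫⁻ z in ball (0:ℂ) 1, ENNReal.ofReal
      (‖deriv (Tg g (fun _ => (1:ℂ))) z‖ ^ 2 * (1 - ‖phi a z‖ ^ 2)) ∂dA with hMd
  have hMb : ∀ b ∈ ball (0:ℂ) 1, ∫⁻ z in ball (0:ℂ) 1,
      ENNReal.ofReal (‖deriv g z‖ ^ 2 * (1 - ‖phi b z‖ ^ 2)) ∂dA ≤ M := by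
    intro b hb
    refine le_trans (le_of_eq ?_) (le_iSup₂ (f := fun (a:ℂ) (_ : a ∈ ball (0:ℂ) 1) =>
        ∫⁻ z in ball (0:ℂ) 1, ENNReal.ofReal
          (‖deriv (Tg g (fun _ => (1:ℂ))) z‖ ^ 2 * (1 - ‖phi a z‖ ^ 2)) ∂dA) b hb)
    apply setLIntegral_congr_fun measurableSet_ball
    intro z hz
    simp only
    rw [hd z hz, mul_one]
  by_contra hcon
  have hcon' := not_lt_top_iff.mp hcon
  have hseq : ∀ n : ℕ, ∃ a ∈ ball (0:ℂ) 1, (n : ENNReal) <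
      ENNReal.ofReal ((Real.log (2 / (1 - ‖a‖))) ^ (2 * (1 / p'))) *
        ∫⁻ z in Metric.ball (0:ℂ) 1,
          ENNReal.ofReal (‖deriv g z‖ ^ 2 * (1 - ‖phi a z‖ ^ 2)) ∂dA := by
    intro n
    have : (n : ENNReal) < ⨆ a ∈ Metric.ball (0:ℂ) 1,
      (ENNReal.ofReal ((Real.log (2 / (1 - ‖a‖))) ^ (2 * (1 / p'))) *
        ∫⁻ z in Metric.ball (0:ℂ) 1,
          ENNReal.ofReal (‖deriv g z‖ ^ 2 * (1 - ‖phi a z‖ ^ 2)) ∂dA) := by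
      rw [hcon']; exact ENNReal.natCast_lt_top n
    simpa only [lt_iSup_iff, exists_prop] using this
  choose a ha hlt using hseq
  obtain ⟨B, hB, hb⟩ := aux_test_bound hp
  obtain ⟨C, hC, hc⟩ := aux_test_besov hp
  obtain ⟨K, hK, hk⟩ := aux_baire hpp hg hT hB (f := fun n => auxTest p (a n))
    (fun n => aux_test_hol p (ha n)) (fun n z hz => hb (a n) (ha n) z hz) (C := C)
    (fun n => hc (a n) (ha n))
  have hR : 64 * ENNReal.ofReal K + 34 * M ≠ ⊤ := by
    have := hM.ne
    finiteness
  obtain ⟨n, hn⟩ := ENNReal.exists_nat_gt hR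
  exact absurd ((hlt n).trans_le (aux_final hpp (ha n) hMb (hk n (a n) (ha n)))) (not_lt.mpr hn.le)

end Aux11

/-- For `1 < p < ∞` with conjugate exponent `p'` and `g` holomorphic on the
unit disc, `T_g` maps `Bᵖ` into `Q₁ (= BMOA)` iff `g ∈ Q_{1,log,1/p'}`. -/
theorem stmt7 (p p' : ℝ) (hp : 1 < p) (hpp' : 1 / p + 1 / p' = 1)
    (g : ℂ → ℂ) (hg : HolOn g) :
    MapsInto (Tg g) (Besov p) (Qs 1) ↔ g ∈ QsLog 1 (1 / p') := by
  have hpp : p.HolderConjugate p' := by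
    rw [Real.holderConjugate_iff]
    exact ⟨hp, by simpa only [one_div] using hpp'⟩
  exact ⟨aux_nec hpp hg, aux_suff hpp⟩
end
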